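/- arXiv:2006.04099 — 3 statements merged into one kernel-verified Lean document; each statement's English description precedes it below -/
import Mathlib

section
/- Let q be a prime power with q > 2, let r >= 2, and let T be an algebraic hypersurface of degree q+1 in PG(r,q^2) defined over GF(q^2) whose number of GF(q^2)-rational points equals (q^(r+1) + (-1)^r)(q^r - (-1)^r)/(q^2 - 1) (the number of points of a non-singular Hermitian variety H(r,q^2)). Then T is a blocking set with respect to the lines of PG(r,q^2), i.e., every line of PG(r,q^2) contains at least one rational point of T. -/
open MvPolynomial Module

/-- The set of points of the projective subspace of `PG(n-1, F)` determined by
the linear subspace `W` of `F^n`. -/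
def projPts {F : Type} [Field F] {n : ℕ} (W : Submodule F (Fin n → F)) :
    Set (Projectivization F (Fin n → F)) :=
  {P | P.submodule ≤ W}

/-- The set of `F`-rational points of the hypersurface of `PG(n-1, F)` defined by the
homogeneous polynomial `f`. -/
def hypersurfacePts {F : Type} [Field F] {n : ℕ} (f : MvPolynomial (Fin n) F) :
    Set (Projectivization F (Fin n → F)) :=
  {P | MvPolynomial.eval P.rep f = 0}

/-!
If no point of the hypersurface `f = 0` lies on the line `L` of `PG(n-1, F)`, then for every vector
`c` the section of the affine cone of `f` by the coset `c + L` is an affine plane curve of degree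
`d = deg f` without rational points at infinity. Put `Q = |F|`. Such a curve has few points:

* If it is given by an irreducible polynomial `g`, compare it with the curve
  `∑ (xᵢ^Q - xᵢ) ∂g/∂xᵢ = 0` of Stöhr and Voloch, of degree at most `Q + d - 1`, which meets it with
  multiplicity at least two in every rational point. The two curves share no component, because the
  leading form of `g` has no nontrivial zero and `d ≠ 0` in `F`, so Bézout bounds the number of
  points by `d (Q + d - 1) / 2`.
* If it is the union of curves of degrees `a` and `b`, these have at most `a (Q + 1) - Q` and
  `b (Q + 1) - Q` points, because every line meets them in at most `a` and `b` points.

For `d = q + 1` and `Q = q ^ 2` both bounds are at most `q ^ 3 - 1`. The coset `L` itself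
contributes only the zero vector, so `f` has at most `(q ^ 3 - 1) (Q ^ (n - 2) - 1)` nonzero zeros,
fewer than the cone over a Hermitian variety.
-/

open scoped Polynomial

section TopDegree

variable {R σ : Type*} [CommRing R]

theorem totalDegree_pderiv_le (i : σ) (p : MvPolynomial σ R) :
    (pderiv i p).totalDegree ≤ p.totalDegree - 1 := by
  refine Finset.sup_le fun m hm => ?_
  rw [MvPolynomial.mem_support_iff, coeff_pderiv] at hm
  have hdeg := le_totalDegree (MvPolynomial.mem_support_iff.2 (left_ne_zero_of_mul hm))
  rw [Finsupp.sum_add_index' (fun _ => rfl) (fun _ _ _ => rfl),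
    Finsupp.sum_single_index rfl] at hdeg
  exact Nat.le_sub_of_add_le hdeg

theorem homogeneousComponent_pderiv (n : ℕ) (i : σ) (p : MvPolynomial σ R) :
    homogeneousComponent n (pderiv i p) = pderiv i (homogeneousComponent (n + 1) p) := by
  ext m
  simp [coeff_pderiv, coeff_homogeneousComponent, ite_mul]

theorem homogeneousComponent_add_mul {p q : MvPolynomial σ R} {m n : ℕ}
    (hp : p.totalDegree ≤ m) (hq : q.totalDegree ≤ n) :
    homogeneousComponent (m + n) (p * q) =
      homogeneousComponent m p * homogeneousComponent n q := by
  classical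
  ext s
  rw [coeff_homogeneousComponent]
  split_ifs with hs
  · rw [coeff_mul, coeff_mul]
    refine Finset.sum_congr rfl fun ⟨a, b⟩ hab => ?_
    have hdeg : a.degree + b.degree = m + n := by
      rw [← map_add, Finset.HasAntidiagonal.mem_antidiagonal.1 hab, hs]
    simp only [coeff_homogeneousComponent]
    rcases lt_trichotomy a.degree m with ha | ha | ha
    · rw [if_neg ha.ne, zero_mul, coeff_eq_zero_of_totalDegree_lt (f := q) (by
        rw [← Finsupp.degree_apply]; omega), mul_zero]
    · rw [if_pos ha, if_pos (by omega)]
    · rw [if_neg ha.ne', zero_mul, coeff_eq_zero_of_totalDegree_lt (f := p) (by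
        rw [← Finsupp.degree_apply]; omega), zero_mul]
  · exact (((homogeneousComponent_isHomogeneous m p).mul
      (homogeneousComponent_isHomogeneous n q)).coeff_eq_zero hs).symm

theorem homogeneousComponent_dvd_of_dvd [IsDomain R] {f g : MvPolynomial σ R} {n : ℕ} (hfg : f ∣ g)
    (hg : g.totalDegree ≤ f.totalDegree + n) :
    homogeneousComponent f.totalDegree f ∣ homogeneousComponent (f.totalDegree + n) g := by
  obtain ⟨k, rfl⟩ := hfg
  rcases eq_or_ne f 0 with rfl | hf
  · simp
  rcases eq_or_ne k 0 with rfl | hk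
  · simp
  rw [totalDegree_mul_of_isDomain hf hk] at hg
  exact ⟨_, homogeneousComponent_add_mul le_rfl (by omega)⟩

theorem eval_smul_of_isHomogeneous {p : MvPolynomial σ R} {d : ℕ} (hp : p.IsHomogeneous d)
    (a : R) (v : σ → R) : eval (a • v) p = a ^ d * eval v p := by
  rw [eval_eq, eval_eq, Finset.mul_sum]
  refine Finset.sum_congr rfl fun m hm => ?_
  rw [hp.degree_eq_sum_deg_support hm]
  simp only [Pi.smul_apply, smul_eq_mul, mul_pow, Finset.prod_mul_distrib,
    Finset.prod_pow_eq_pow_sum]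
  ring

theorem totalDegree_aeval_le {τ : Type*} {g : σ → MvPolynomial τ R}
    (hg : ∀ i, (g i).totalDegree ≤ 1) (p : MvPolynomial σ R) :
    (aeval g p).totalDegree ≤ p.totalDegree := by
  rw [aeval_def, eval₂_eq]
  refine totalDegree_finsetSum_le fun m hm => ?_
  calc (algebraMap R (MvPolynomial τ R) (coeff m p) * ∏ i ∈ m.support, g i ^ m i).totalDegree
      ≤ (C (coeff m p) : MvPolynomial τ R).totalDegree
          + (∏ i ∈ m.support, g i ^ m i).totalDegree := totalDegree_mul _ _
    _ ≤ 0 + ∑ i ∈ m.support, m i := by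
        refine add_le_add (totalDegree_C _).le ((totalDegree_finsetProd _ _).trans ?_)
        refine Finset.sum_le_sum fun i _ => (totalDegree_pow _ _).trans ?_
        exact mul_le_of_le_one_right' (hg i)
    _ ≤ p.totalDegree := by rw [zero_add]; exact le_totalDegree hm

end TopDegree

section LineRestriction

variable {F σ : Type*} [Field F]

theorem coeff_prod_sum_of_natDegree_le {R ι : Type*} [CommRing R] {s : Finset ι} {f : ι → R[X]}
    {n : ι → ℕ} (h : ∀ i ∈ s, (f i).natDegree ≤ n i) :
    (∏ i ∈ s, f i).coeff (∑ i ∈ s, n i) = ∏ i ∈ s, (f i).coeff (n i) := by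
  classical
  induction s using Finset.induction_on with
  | empty => simp
  | insert a s ha ih =>
    obtain ⟨hfa, hfs⟩ := Finset.forall_mem_insert _ _ _ |>.1 h
    rw [Finset.prod_insert ha, Finset.sum_insert ha, Finset.prod_insert ha, ← ih hfs]
    exact Polynomial.coeff_mul_add_eq_of_natDegree_le hfa
      ((Polynomial.natDegree_prod_le _ _).trans (Finset.sum_le_sum hfs))

/-- The restriction of a polynomial function to the affine line through `P` with direction `w`,
as a polynomial in the parameter `t` of the point `P + t • w`. -/
noncomputable def lineRestriction (P w : σ → F) : MvPolynomial σ F →ₐ[F] F[X] :=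
  aeval fun i => Polynomial.C (P i) + Polynomial.C (w i) * Polynomial.X

theorem lineRestriction_X (P w : σ → F) (i : σ) :
    lineRestriction P w (X i) = Polynomial.C (P i) + Polynomial.C (w i) * Polynomial.X :=
  aeval_X _ i

theorem eval_lineRestriction (P w : σ → F) (p : MvPolynomial σ F) (t : F) :
    (lineRestriction P w p).eval t = eval (P + t • w) p := by
  have hcomp : (Polynomial.aeval t).comp (lineRestriction P w) = aeval (P + t • w) := by
    ext i
    simp [lineRestriction_X, mul_comm t]
  simpa [aeval_eq_eval, Polynomial.coe_aeval_eq_eval] using DFunLike.congr_fun hcomp p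

theorem natDegree_C_add_C_mul_X_le (a b : F) :
    (Polynomial.C a + Polynomial.C b * Polynomial.X).natDegree ≤ 1 := by
  rw [add_comm]
  exact Polynomial.natDegree_linear_le

theorem natDegree_lineRestriction_le (P w : σ → F) (p : MvPolynomial σ F) :
    (lineRestriction P w p).natDegree ≤ p.totalDegree := by
  simpa [lineRestriction] using
    aeval_natDegree_le p le_rfl _ fun i => natDegree_C_add_C_mul_X_le (P i) (w i)

theorem coeff_lineRestriction {p : MvPolynomial σ F} {d : ℕ} (hp : p.totalDegree ≤ d)
    (P w : σ → F) :
    (lineRestriction P w p).coeff d = eval w (homogeneousComponent d p) := by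
  rw [homogeneousComponent_apply, map_sum, Finset.sum_filter, lineRestriction, aeval_def, eval₂_eq,
    Polynomial.finsetSum_coeff]
  refine Finset.sum_congr rfl fun m hm => ?_
  have hlin : ∀ i ∈ m.support,
      ((Polynomial.C (P i) + Polynomial.C (w i) * Polynomial.X) ^ m i).natDegree ≤ m i :=
    fun i _ => by
      simpa using Polynomial.natDegree_pow_le_of_le (m i) (natDegree_C_add_C_mul_X_le (P i) (w i))
  rw [Polynomial.algebraMap_eq, Polynomial.coeff_C_mul]
  split_ifs with hdeg
  · rw [← hdeg, Finsupp.degree_apply, coeff_prod_sum_of_natDegree_le hlin, eval_monomial,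
      Finsupp.prod]
    congr 1
    refine Finset.prod_congr rfl fun i _ => ?_
    simpa using Polynomial.coeff_pow_of_natDegree_le (m := m i)
      (natDegree_C_add_C_mul_X_le (P i) (w i))
  · have hlt : m.degree < d := lt_of_le_of_ne ((le_totalDegree hm).trans hp) hdeg
    rw [Polynomial.coeff_eq_zero_of_natDegree_lt, mul_zero]
    exact ((Polynomial.natDegree_prod_le _ _).trans (Finset.sum_le_sum hlin)).trans_lt hlt

theorem derivative_lineRestriction [Fintype σ] (P w : σ → F) (p : MvPolynomial σ F) :
    Polynomial.derivative (lineRestriction P w p) =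
      ∑ i, Polynomial.C (w i) * lineRestriction P w (pderiv i p) := by
  classical
  induction p using MvPolynomial.induction_on with
  | C a => simp [lineRestriction]
  | add p q hp hq => simp only [map_add, hp, hq, mul_add, Finset.sum_add_distrib]
  | mul_X p i hp =>
    have hX : Polynomial.derivative (lineRestriction P w (X i)) =
        ∑ j, Polynomial.C (w j) * lineRestriction P w (pderiv j (X i)) := by
      rw [Finset.sum_eq_single i (fun j _ hj => by rw [pderiv_X_of_ne hj.symm, map_zero, mul_zero])
        (by simp), pderiv_X_self, lineRestriction_X]
      simp
    rw [map_mul, Polynomial.derivative_mul, hp, hX, Finset.sum_mul, Finset.mul_sum,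
      ← Finset.sum_add_distrib]
    refine Finset.sum_congr rfl fun j _ => ?_
    rw [pderiv_mul, map_add, map_mul, map_mul]
    ring

end LineRestriction

section Bezout

theorem card_biUnion_range_antidiagonal_mul_two (m : ℕ) :
    ((Finset.range (m + 1)).biUnion Finset.HasAntidiagonal.antidiagonal).card * 2 =
      (m + 1) * (m + 2) := by
  have hdisj : (Finset.range (m + 1) : Set ℕ).PairwiseDisjoint
      Finset.HasAntidiagonal.antidiagonal := fun i _ j _ hij =>
    Finset.disjoint_left.2 fun x hi hj => hij (by
      rw [← Finset.HasAntidiagonal.mem_antidiagonal.1 hi,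
        Finset.HasAntidiagonal.mem_antidiagonal.1 hj])
  rw [Finset.card_biUnion hdisj]
  simp only [Finset.Nat.card_antidiagonal]
  rw [← add_zero (∑ k ∈ _, (k + 1)), ← Finset.sum_range_succ' (fun k => k),
    Finset.sum_range_id_mul_two, mul_comm]
  rfl

variable {F : Type*} [Field F]

theorem finrank_restrictTotalDegree_fin_two (m : ℕ) :
    finrank F (restrictTotalDegree (Fin 2) F m) * 2 = (m + 1) * (m + 2) := by
  let e : {n : Fin 2 →₀ ℕ | n.degree ≤ m} ≃
      (Finset.range (m + 1)).biUnion Finset.HasAntidiagonal.antidiagonal :=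
    (Finsupp.equivFunOnFinite.trans (finTwoArrowEquiv ℕ)).subtypeEquiv fun n => by
      simp [Finsupp.degree_eq_sum]
  have hfinrank : finrank F (restrictTotalDegree (Fin 2) F m) =
      Nat.card {n : Fin 2 →₀ ℕ | n.degree ≤ m} :=
    finrank_eq_nat_card_basis (basisRestrictSupport F {n : Fin 2 →₀ ℕ | n.degree ≤ m})
  rw [hfinrank, Nat.card_congr e, Nat.card_eq_finsetCard,
    card_biUnion_range_antidiagonal_mul_two]

theorem map_mulLeft_restrictTotalDegree_le {σ : Type*} {f : MvPolynomial σ F} {m n : ℕ}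
    (h : f.totalDegree + m ≤ n) :
    (restrictTotalDegree σ F m).map (LinearMap.mulLeft F f) ≤ restrictTotalDegree σ F n := by
  rintro _ ⟨a, ha, rfl⟩
  rw [SetLike.mem_coe, mem_restrictTotalDegree] at ha
  rw [mem_restrictTotalDegree]
  exact (totalDegree_mul f a).trans (by omega)

theorem map_mulLeft_inf_map_mulLeft_le {σ : Type*} {f g : MvPolynomial σ F} (hf : f ≠ 0)
    (hfg : IsRelPrime f g) (m n : ℕ) :
    (restrictTotalDegree σ F m).map (LinearMap.mulLeft F f) ⊓
        (restrictTotalDegree σ F (n + f.totalDegree)).map (LinearMap.mulLeft F g) ≤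
      (restrictTotalDegree σ F n).map (LinearMap.mulLeft F (g * f)) := by
  rintro _ ⟨⟨a, -, rfl⟩, b, hb, hab⟩
  rw [SetLike.mem_coe, mem_restrictTotalDegree] at hb
  simp only [LinearMap.mulLeft_apply] at hab
  obtain ⟨c, rfl⟩ : f ∣ b := hfg.dvd_of_dvd_mul_left ⟨a, hab⟩
  refine ⟨c, ?_, by simp [← hab]⟩
  rw [SetLike.mem_coe, mem_restrictTotalDegree]
  rcases eq_or_ne c 0 with rfl | hc
  · simp
  · rw [totalDegree_mul_of_isDomain hf hc] at hb
    omega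

theorem finrank_map_mulLeft {A : Type*} [CommRing A] [IsDomain A] [Algebra F A] {a : A}
    (ha : a ≠ 0) (V : Submodule F A) : finrank F (V.map (LinearMap.mulLeft F a)) = finrank F V :=
  (V.equivMapOfInjective _ (mul_right_injective₀ ha)).finrank_eq.symm

theorem exists_map_restrictTotalDegree_eq_top {σ W : Type*} [AddCommGroup W] [Module F W]
    [Module.Finite F W] {ψ : MvPolynomial σ F →ₗ[F] W} (hψ : Function.Surjective ψ) :
    ∃ m, (restrictTotalDegree σ F m).map ψ = ⊤ := by
  let b := finBasis F W
  choose p hp using fun i => hψ (b i)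
  refine ⟨Finset.univ.sup fun i => (p i).totalDegree, top_unique ?_⟩
  rw [← b.span_eq, Submodule.span_le]
  rintro _ ⟨i, rfl⟩
  refine ⟨p i, ?_, hp i⟩
  rw [SetLike.mem_coe, mem_restrictTotalDegree]
  exact Finset.le_sup (f := fun i => (p i).totalDegree) (Finset.mem_univ i)

theorem finrank_map_add_finrank_inf_ker {V W : Type*} [AddCommGroup V] [Module F V]
    [AddCommGroup W] [Module F W] (ψ : V →ₗ[F] W) (U : Submodule F V) [Module.Finite F U] :
    finrank F (U.map ψ) + finrank F ↥(U ⊓ LinearMap.ker ψ) = finrank F U := by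
  rw [← LinearMap.finrank_range_add_finrank_ker (ψ.domRestrict U), LinearMap.range_domRestrict,
    LinearMap.ker_domRestrict, ← Submodule.map_comap_subtype, Submodule.finrank_map_subtype_eq]

theorem finrank_le_totalDegree_mul_totalDegree {A : Type*} [Ring A] [Algebra F A]
    [Module.Finite F A] {ψ : MvPolynomial (Fin 2) F →ₐ[F] A} (hψ : Function.Surjective ψ)
    {f g : MvPolynomial (Fin 2) F} (hf : f ≠ 0) (hg : g ≠ 0) (hfg : IsRelPrime f g)
    (hψf : ψ f = 0) (hψg : ψ g = 0) :
    finrank F A ≤ f.totalDegree * g.totalDegree := by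
  obtain ⟨m, hm⟩ := exists_map_restrictTotalDegree_eq_top (ψ := ψ.toLinearMap) hψ
  set d := f.totalDegree
  set e := g.totalDegree
  let V := restrictTotalDegree (Fin 2) F
  let A₁ := (V (m + e)).map (LinearMap.mulLeft F f)
  let A₂ := (V (m + d)).map (LinearMap.mulLeft F g)
  have hsup : A₁ ⊔ A₂ ≤ V (m + d + e) ⊓ LinearMap.ker ψ.toLinearMap := by
    refine sup_le (le_inf (map_mulLeft_restrictTotalDegree_le (by omega)) ?_)
      (le_inf (map_mulLeft_restrictTotalDegree_le (by omega)) ?_)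
    all_goals
      rintro _ ⟨a, -, rfl⟩
      simp [hψf, hψg]
  have htop : (V (m + d + e)).map ψ.toLinearMap = ⊤ := by
    refine top_unique (hm.symm.le.trans (Submodule.map_mono fun p hp => ?_))
    rw [mem_restrictTotalDegree] at hp ⊢
    omega
  have hsup_le := Submodule.finrank_mono hsup
  have hinf_le : finrank F ↥(A₁ ⊓ A₂) ≤ finrank F (V m) :=
    (Submodule.finrank_mono (map_mulLeft_inf_map_mulLeft_le hf hfg (m + e) m)).trans_eq
      (finrank_map_mulLeft (mul_ne_zero hg hf) _)
  have hsup_inf := Submodule.finrank_sup_add_finrank_inf_eq A₁ A₂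
  have hker := finrank_map_add_finrank_inf_ker ψ.toLinearMap (V (m + d + e))
  rw [finrank_map_mulLeft hf, finrank_map_mulLeft hg] at hsup_inf
  rw [htop, finrank_top] at hker
  have hdim : finrank F A + finrank F (V (m + e)) + finrank F (V (m + d)) ≤
      finrank F (V (m + d + e)) + finrank F (V m) := by omega
  nlinarith [hdim, finrank_restrictTotalDegree_fin_two (F := F) (m + d + e),
    finrank_restrictTotalDegree_fin_two (F := F) (m + e),
    finrank_restrictTotalDegree_fin_two (F := F) (m + d),
    finrank_restrictTotalDegree_fin_two (F := F) m]

end Bezout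

section DoubleIntersection

variable {F σ : Type*} [Field F]

theorem lineRestriction_surjective (P : σ → F) {w : σ → F} (hw : w ≠ 0) :
    Function.Surjective (lineRestriction P w) := by
  obtain ⟨i, hi⟩ := Function.ne_iff.1 hw
  have hX : lineRestriction P w (C (w i)⁻¹ * (X i - C (P i))) = Polynomial.X := by
    rw [map_mul, map_sub, lineRestriction_X, algHom_C, algHom_C, Polynomial.algebraMap_eq,
      add_sub_cancel_left, ← mul_assoc, ← Polynomial.C_mul, inv_mul_cancel₀ hi, Polynomial.C_1,
      one_mul]
  intro u
  refine ⟨Polynomial.aeval (C (w i)⁻¹ * (X i - C (P i))) u, ?_⟩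
  rw [← Polynomial.aeval_algHom_apply, hX, Polynomial.aeval_X_left_apply]

theorem exists_X_sq_dvd_lineRestriction [Fintype σ] {f : MvPolynomial σ F} (hσ : 1 < Fintype.card σ)
    {P : σ → F} (hP : eval P f = 0) :
    ∃ v ≠ 0, Polynomial.X ^ 2 ∣ lineRestriction P v f := by
  let ℓ : (σ → F) →ₗ[F] F := ∑ i, eval P (pderiv i f) • LinearMap.proj i
  obtain ⟨v, hv, hv₀⟩ := Submodule.exists_mem_ne_zero_of_ne_bot
    (LinearMap.ker_ne_bot_of_finrank_lt (f := ℓ) (by simpa using hσ))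
  have coeff_zero (p : MvPolynomial σ F) : (lineRestriction P v p).coeff 0 = eval P p := by
    simp [Polynomial.coeff_zero_eq_eval_zero, eval_lineRestriction]
  refine ⟨v, hv₀, Polynomial.X_pow_dvd_iff.2 fun k hk => ?_⟩
  obtain rfl | rfl : k = 0 ∨ k = 1 := by omega
  · rw [coeff_zero, hP]
  · have hder : (Polynomial.derivative (lineRestriction P v f)).coeff 0 = ℓ v := by
      simp [derivative_lineRestriction, Polynomial.finsetSum_coeff, coeff_zero, ℓ, mul_comm]
    rw [LinearMap.mem_ker.1 hv, Polynomial.coeff_derivative] at hder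
    simpa using hder

theorem isCoprime_X_sub_C {P P' : σ → F} {i : σ} (hi : P i ≠ P' i) :
    IsCoprime (X i - C (P i) : MvPolynomial σ F) (X i - C (P' i)) := by
  refine ⟨C (P' i - P i)⁻¹, -C (P' i - P i)⁻¹, ?_⟩
  have hinv : (C (P' i - P i)⁻¹ * C (P' i - P i) : MvPolynomial σ F) = 1 := by
    rw [← C_mul, inv_mul_cancel₀ (sub_ne_zero.2 hi.symm), C_1]
  rw [← hinv, C_sub]
  ring

/-- The restriction of a polynomial function to the tangent vector `v` at `P`, that is, to the
subscheme of length two of the line `P + t • v` given by `t ^ 2 = 0`. -/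
noncomputable def tangentRestriction (P v : σ → F) :
    MvPolynomial σ F →ₐ[F] F[X] ⧸ Ideal.span {(Polynomial.X : F[X]) ^ 2} :=
  (Ideal.Quotient.mkₐ F _).comp (lineRestriction P v)

theorem tangentRestriction_eq_zero_iff {P v : σ → F} {p : MvPolynomial σ F} :
    tangentRestriction P v p = 0 ↔ Polynomial.X ^ 2 ∣ lineRestriction P v p := by
  rw [tangentRestriction, AlgHom.comp_apply, Ideal.Quotient.mkₐ_eq_mk,
    Ideal.Quotient.eq_zero_iff_dvd]

theorem isCoprime_ker_tangentRestriction {P P' : σ → F} (hP : P ≠ P') (v v' : σ → F) :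
    IsCoprime (RingHom.ker (tangentRestriction P v)) (RingHom.ker (tangentRestriction P' v')) := by
  have hmem (P v : σ → F) (i : σ) (a : MvPolynomial σ F) :
      a * (X i - C (P i)) ^ 2 ∈ RingHom.ker (tangentRestriction P v) := by
    rw [RingHom.mem_ker, tangentRestriction_eq_zero_iff, map_mul, map_pow, map_sub,
      lineRestriction_X, algHom_C, Polynomial.algebraMap_eq, add_sub_cancel_left, mul_pow]
    exact Dvd.intro_left _ (mul_assoc _ _ _)
  obtain ⟨i, hi⟩ := Function.ne_iff.1 hP
  obtain ⟨a, b, hab⟩ := (isCoprime_X_sub_C hi).pow (m := 2) (n := 2)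
  exact Ideal.isCoprime_iff_exists.2 ⟨_, hmem P v i a, _, hmem P' v' i b, hab⟩

theorem pi_tangentRestriction_surjective (Z : Finset (σ → F)) {v : Z → σ → F}
    (hv : ∀ P, v P ≠ 0) :
    Function.Surjective (AlgHom.pi fun P : Z => tangentRestriction P.1 (v P)) := by
  intro y
  have hsurj (P : Z) : Function.Surjective (tangentRestriction P.1 (v P)) :=
    Ideal.Quotient.mk_surjective.comp (lineRestriction_surjective P.1 (hv P))
  choose x hx using fun P => hsurj P (y P)
  obtain ⟨p, hp⟩ := Ideal.exists_forall_sub_mem_ideal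
    (I := fun P : Z => RingHom.ker (tangentRestriction P.1 (v P)))
    (fun P P' hne => isCoprime_ker_tangentRestriction (Subtype.coe_ne_coe.2 hne) _ _) x
  refine ⟨p, funext fun P => ?_⟩
  have hsub := hp P
  rw [RingHom.mem_ker, map_sub, sub_eq_zero] at hsub
  exact hsub.trans (hx P)

theorem two_mul_card_le_totalDegree_mul_totalDegree {f g : MvPolynomial (Fin 2) F} (hf : f ≠ 0)
    (hg : g ≠ 0) (hfg : IsRelPrime f g) (Z : Finset (Fin 2 → F))
    (hZ : ∀ P : Z, ∃ v ≠ 0, Polynomial.X ^ 2 ∣ lineRestriction P.1 v f ∧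
      Polynomial.X ^ 2 ∣ lineRestriction P.1 v g) :
    2 * Z.card ≤ f.totalDegree * g.totalDegree := by
  choose v hv hvf hvg using hZ
  have hfinite : Module.Finite F (F[X] ⧸ Ideal.span {(Polynomial.X : F[X]) ^ 2}) :=
    (Polynomial.monic_X_pow 2).finite_quotient
  have hfinrank : finrank F (Z → F[X] ⧸ Ideal.span {(Polynomial.X : F[X]) ^ 2}) = 2 * Z.card := by
    rw [finrank_pi_fintype]
    simp [finrank_quotient_span_eq_natDegree, mul_comm]
  rw [← hfinrank]
  exact finrank_le_totalDegree_mul_totalDegree (pi_tangentRestriction_surjective Z hv) hf hg hfg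
    (funext fun P => tangentRestriction_eq_zero_iff.2 (hvf P))
    (funext fun P => tangentRestriction_eq_zero_iff.2 (hvg P))

end DoubleIntersection

section NoZeroAtInfinity

variable {F σ : Type*} [Field F]

/-- The affine hypersurface `p = 0` has no rational point on the hyperplane at infinity: the
leading form of `p` has no nontrivial zero. -/
def HasNoZeroAtInfinity (p : MvPolynomial σ F) : Prop :=
  ∀ w ≠ 0, eval w (homogeneousComponent p.totalDegree p) ≠ 0

theorem HasNoZeroAtInfinity.of_mul_left {p q : MvPolynomial σ F} (h : HasNoZeroAtInfinity (p * q))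
    (hp : p ≠ 0) (hq : q ≠ 0) : HasNoZeroAtInfinity p := by
  intro w hw hpw
  apply h w hw
  rw [totalDegree_mul_of_isDomain hp hq, homogeneousComponent_add_mul le_rfl le_rfl, map_mul, hpw,
    zero_mul]

theorem HasNoZeroAtInfinity.lineRestriction_ne_zero {p : MvPolynomial σ F}
    (hp : HasNoZeroAtInfinity p) (P : σ → F) {w : σ → F} (hw : w ≠ 0) :
    lineRestriction P w p ≠ 0 := by
  intro h
  apply hp w hw
  rw [← coeff_lineRestriction le_rfl P, h, Polynomial.coeff_zero]

end NoZeroAtInfinity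

section StohrVoloch

variable {F σ : Type*} [Field F]

theorem not_dvd_derivative {u : F[X]} (hu : (u.natDegree : F) ≠ 0) :
    ¬ u ∣ Polynomial.derivative u := by
  intro hdvd
  have hu₀ : u ≠ 0 := by
    rintro rfl
    simp at hu
  obtain ⟨n, hn⟩ : ∃ n, u.natDegree = n + 1 :=
    Nat.exists_eq_succ_of_ne_zero fun h => hu (by rw [h, Nat.cast_zero])
  have hlead : (Polynomial.derivative u).coeff n ≠ 0 := by
    rw [Polynomial.coeff_derivative, ← hn]
    refine mul_ne_zero (Polynomial.leadingCoeff_ne_zero.2 hu₀) ?_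
    rwa [hn, Nat.cast_succ] at hu
  refine (Polynomial.natDegree_derivative_lt (by omega)).not_ge
    (Polynomial.natDegree_le_of_dvd hdvd fun h => hlead (by rw [h, Polynomial.coeff_zero]))

variable [Fintype F]

theorem isCoprime_X_pow_card_sub_X {u : F[X]} (hu : ∀ a, u.eval a ≠ 0) :
    IsCoprime u (Polynomial.X ^ Fintype.card F - Polynomial.X) := by
  have hmonic : (Polynomial.X ^ Fintype.card F - Polynomial.X : F[X]).Monic :=
    Polynomial.monic_X_pow_sub (by simpa using Fintype.one_lt_card (α := F))
  rw [← Polynomial.prod_multiset_X_sub_C_of_monic_of_roots_card_eq hmonic (by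
    rw [FiniteField.roots_X_pow_card_sub_X,
      FiniteField.X_pow_card_sub_X_natDegree_eq F Fintype.one_lt_card]
    rfl), FiniteField.roots_X_pow_card_sub_X]
  refine IsCoprime.prod_right (t := Finset.univ) fun a _ => ?_
  exact ((Polynomial.irreducible_X_sub_C a).coprime_iff_not_dvd.2
    (mt Polynomial.dvd_iff_isRoot.1 (hu a))).symm

theorem totalDegree_X_pow_card_sub_X_le (i : σ) :
    (X i ^ Fintype.card F - X i : MvPolynomial σ F).totalDegree ≤ Fintype.card F := by
  refine (totalDegree_sub _ _).trans (max_le ?_ ?_)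
  · rw [totalDegree_X_pow]
  · rw [totalDegree_X]
    exact Fintype.card_pos

variable [Fintype σ]

/-- The polynomial `∑ (xᵢ^Q - xᵢ) ∂f/∂xᵢ` with `Q = |F|`, introduced by Stöhr and Voloch: its
zeros on the hypersurface `f = 0` are the points whose tangent space contains their Frobenius
image. -/
noncomputable def stohrVoloch (f : MvPolynomial σ F) : MvPolynomial σ F :=
  ∑ i, (X i ^ Fintype.card F - X i) * pderiv i f

theorem totalDegree_stohrVoloch_le (f : MvPolynomial σ F) :
    (stohrVoloch f).totalDegree ≤ Fintype.card F + (f.totalDegree - 1) :=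
  totalDegree_finsetSum_le fun i _ => (totalDegree_mul _ _).trans
    (add_le_add (totalDegree_X_pow_card_sub_X_le i) (totalDegree_pderiv_le i f))

theorem lineRestriction_stohrVoloch (P w : σ → F) (f : MvPolynomial σ F) :
    lineRestriction P w (stohrVoloch f) =
      (Polynomial.X ^ Fintype.card F - Polynomial.X) *
        Polynomial.derivative (lineRestriction P w f) := by
  rw [stohrVoloch, map_sum, derivative_lineRestriction, Finset.mul_sum]
  refine Finset.sum_congr rfl fun i _ => ?_
  rw [map_mul, map_sub, map_pow, lineRestriction_X, ← FiniteField.expand_card]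
  simp only [map_add, map_mul, Polynomial.expand_C, Polynomial.expand_X]
  ring

theorem homogeneousComponent_stohrVoloch {f : MvPolynomial σ F} {n : ℕ}
    (hf : f.totalDegree ≤ n + 1) :
    homogeneousComponent (Fintype.card F + n) (stohrVoloch f) =
      ∑ i, X i ^ Fintype.card F * pderiv i (homogeneousComponent (n + 1) f) := by
  rw [stohrVoloch, map_sum]
  refine Finset.sum_congr rfl fun i _ => ?_
  rw [homogeneousComponent_add_mul (totalDegree_X_pow_card_sub_X_le i)
    ((totalDegree_pderiv_le i f).trans (by omega)), homogeneousComponent_pderiv, map_sub,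
    homogeneousComponent_of_mem (isHomogeneous_X_pow i _),
    homogeneousComponent_of_mem (isHomogeneous_X F i), if_pos rfl,
    if_neg Fintype.one_lt_card.ne', sub_zero]

theorem sum_X_pow_card_mul_pderiv {h : MvPolynomial σ F} {d : ℕ} (hh : h.IsHomogeneous d) :
    ∑ i, X i ^ Fintype.card F * pderiv i h = stohrVoloch h + d • h := by
  rw [stohrVoloch, ← hh.sum_X_mul_pderiv, ← Finset.sum_add_distrib]
  exact Finset.sum_congr rfl fun i _ => by ring

theorem homogeneousComponent_dvd_stohrVoloch {f : MvPolynomial σ F} (hd : f.totalDegree ≠ 0)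
    (hdvd : f ∣ stohrVoloch f) :
    homogeneousComponent f.totalDegree f ∣
      stohrVoloch (homogeneousComponent f.totalDegree f) := by
  obtain ⟨n, hn⟩ := Nat.exists_eq_succ_of_ne_zero hd
  have hQ : 0 < Fintype.card F := Fintype.card_pos
  have hindex : f.totalDegree + (Fintype.card F - 1) = Fintype.card F + n := by omega
  have htop := homogeneousComponent_dvd_of_dvd (n := Fintype.card F - 1) hdvd
    ((totalDegree_stohrVoloch_le f).trans (by omega))
  rw [hindex, homogeneousComponent_stohrVoloch hn.le, ← Nat.succ_eq_add_one, ← hn,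
    sum_X_pow_card_mul_pderiv (homogeneousComponent_isHomogeneous _ f)] at htop
  exact (dvd_add_left (dvd_smul_of_dvd _ dvd_rfl)).1 htop

theorem not_dvd_stohrVoloch_of_isHomogeneous [Nontrivial σ] {h : MvPolynomial σ F} {d : ℕ}
    (hh : h.IsHomogeneous d) (hzero : ∀ w ≠ 0, eval w h ≠ 0) (hd : (d : F) ≠ 0) :
    ¬ h ∣ stohrVoloch h := by
  classical
  intro hdvd
  obtain ⟨i, j, hij⟩ := exists_pair_ne σ
  set P : σ → F := Pi.single i 1
  set w : σ → F := Pi.single j 1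
  have hw : w ≠ 0 := Pi.single_ne_zero_iff.2 one_ne_zero
  have hPw (t : F) : P + t • w ≠ 0 := fun h0 => by simpa [P, w, hij] using congrFun h0 i
  set u := lineRestriction P w h with hu
  have hdeg : u.natDegree = d := by
    refine le_antisymm ((natDegree_lineRestriction_le P w h).trans hh.totalDegree_le)
      (Polynomial.le_natDegree_of_ne_zero ?_)
    rw [hu, coeff_lineRestriction hh.totalDegree_le, homogeneousComponent_eq_self hh]
    exact hzero w hw
  have hroot (t : F) : u.eval t ≠ 0 := by
    rw [hu, eval_lineRestriction]
    exact hzero _ (hPw t)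
  have hmul := map_dvd (lineRestriction P w) hdvd
  rw [lineRestriction_stohrVoloch] at hmul
  exact not_dvd_derivative (by rwa [hdeg])
    ((isCoprime_X_pow_card_sub_X hroot).dvd_of_dvd_mul_left hmul)

theorem not_dvd_stohrVoloch [Nontrivial σ] {f : MvPolynomial σ F} (hf : HasNoZeroAtInfinity f)
    (hd : (f.totalDegree : F) ≠ 0) : ¬ f ∣ stohrVoloch f := fun hdvd =>
  not_dvd_stohrVoloch_of_isHomogeneous (homogeneousComponent_isHomogeneous _ f) hf hd
    (homogeneousComponent_dvd_stohrVoloch (fun h => hd (by rw [h, Nat.cast_zero])) hdvd)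

theorem X_sq_dvd_lineRestriction_stohrVoloch {f : MvPolynomial σ F} {P v : σ → F}
    (h : Polynomial.X ^ 2 ∣ lineRestriction P v f) :
    Polynomial.X ^ 2 ∣ lineRestriction P v (stohrVoloch f) := by
  rw [lineRestriction_stohrVoloch, pow_two]
  refine mul_dvd_mul (dvd_sub (dvd_pow_self _ Fintype.card_ne_zero) dvd_rfl) ?_
  simpa using Polynomial.pow_sub_one_dvd_derivative_of_pow_dvd h

theorem two_mul_ncard_zeros_le_of_irreducible {f : MvPolynomial (Fin 2) F} (hf : Irreducible f)
    (hinf : HasNoZeroAtInfinity f) (hd : (f.totalDegree : F) ≠ 0) :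
    2 * {P | eval P f = 0}.ncard ≤
      f.totalDegree * (Fintype.card F + (f.totalDegree - 1)) := by
  have hndvd := not_dvd_stohrVoloch hinf hd
  have hSV : stohrVoloch f ≠ 0 := fun h => hndvd (h ▸ dvd_zero f)
  have hfin : {P | eval P f = 0}.Finite := Set.toFinite _
  rw [Set.ncard_eq_toFinset_card _ hfin]
  refine (two_mul_card_le_totalDegree_mul_totalDegree hf.ne_zero hSV
    (hf.isRelPrime_iff_not_dvd.2 hndvd) _ fun P => ?_).trans
    (Nat.mul_le_mul_left _ (totalDegree_stohrVoloch_le f))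
  obtain ⟨v, hv, hPv⟩ := exists_X_sq_dvd_lineRestriction (by simp) (hfin.mem_toFinset.1 P.2)
  exact ⟨v, hv, hPv, X_sq_dvd_lineRestriction_stohrVoloch hPv⟩

end StohrVoloch

section PlaneCurves

variable {F σ : Type*} [Field F]

theorem ncard_nonzero_roots_le {p : MvPolynomial σ F} {P w : σ → F}
    (hP : eval P p = 0) (hw : lineRestriction P w p ≠ 0) :
    {t : F | t ≠ 0 ∧ eval (P + t • w) p = 0}.ncard ≤ p.totalDegree - 1 := by
  classical
  set u := lineRestriction P w p with hu
  have hmem (t : F) : t ∈ u.roots.toFinset ↔ eval (P + t • w) p = 0 := by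
    rw [Multiset.mem_toFinset, Polynomial.mem_roots hw, Polynomial.IsRoot, hu, eval_lineRestriction]
  have hset : {t : F | t ≠ 0 ∧ eval (P + t • w) p = 0} = u.roots.toFinset.erase 0 := by
    ext t
    simp [hmem, and_comm]
  have hzero : (0 : F) ∈ u.roots.toFinset := (hmem 0).2 (by simpa using hP)
  rw [hset, Set.ncard_coe_finset, Finset.card_erase_of_mem hzero]
  exact Nat.sub_le_sub_right ((Multiset.toFinset_card_le _).trans
    ((Polynomial.card_roots' u).trans (natDegree_lineRestriction_le P w p))) 1

theorem totalDegree_ne_zero_of_not_isUnit {p : MvPolynomial σ F} (hp : p ≠ 0)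
    (hunit : ¬ IsUnit p) : p.totalDegree ≠ 0 := by
  intro h
  rw [totalDegree_eq_zero_iff_eq_C.1 h] at hp hunit
  exact hunit ((isUnit_iff_ne_zero.2 fun h0 => hp (by rw [h0, C_0])).map C)

variable [Fintype F]

theorem ncard_zeros_sub_one_mul_le [Fintype σ] {p : MvPolynomial σ F}
    (hp : ∀ P, ∀ w ≠ 0, lineRestriction P w p ≠ 0) :
    ({P | eval P p = 0}.ncard - 1) * (Fintype.card F - 1) ≤
      (p.totalDegree - 1) * (Fintype.card F ^ Fintype.card σ - 1) := by
  classical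
  rcases {P | eval P p = 0}.eq_empty_or_nonempty with hempty | ⟨P, hP⟩
  · simp [hempty]
  -- Count the pairs `(t, w)` with `t ≠ 0` and `w ≠ 0` for which `P + t • w` is a zero.
  have hdouble := Finset.card_mul_le_card_mul (fun (t : F) w => eval (P + t • w) p = 0)
    (s := Finset.univ.erase 0) (t := Finset.univ.erase 0) (m := {P | eval P p = 0}.ncard - 1)
    (n := p.totalDegree - 1) (fun t ht => ?_) fun w hw => ?_
  · simpa [mul_comm] using hdouble
  · have ht₀ : t ≠ 0 := Finset.ne_of_mem_erase ht
    rw [← Set.ncard_sdiff_singleton_of_mem hP, ← Set.ncard_coe_finset]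
    refine Set.ncard_le_ncard_of_injOn (fun x => t⁻¹ • (x - P)) (fun x hx => ?_)
      (fun x _ y _ hxy => ?_)
    · have hxP : x - P ≠ 0 := sub_ne_zero.2 hx.2
      simpa [Finset.mem_bipartiteAbove, ht₀, hxP] using hx.1
    · simpa [ht₀] using hxy
  · refine le_of_eq_of_le ?_ (ncard_nonzero_roots_le hP (hp P w (Finset.ne_of_mem_erase hw)))
    rw [← Set.ncard_coe_finset]
    congr 1
    ext t
    simp

theorem ncard_zeros_add_card_le {p : MvPolynomial (Fin 2) F}
    (hp : ∀ P, ∀ w ≠ 0, lineRestriction P w p ≠ 0) (hd : p.totalDegree ≠ 0) :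
    {P | eval P p = 0}.ncard + Fintype.card F ≤ p.totalDegree * (Fintype.card F + 1) := by
  have harc := ncard_zeros_sub_one_mul_le hp
  have hQ : 1 < Fintype.card F := Fintype.one_lt_card
  have hfactor : Fintype.card F ^ Fintype.card (Fin 2) - 1 =
      (Fintype.card F + 1) * (Fintype.card F - 1) := by
    simpa using Nat.sq_sub_sq (Fintype.card F) 1
  rw [hfactor, ← mul_assoc] at harc
  have hcancel := Nat.le_of_mul_le_mul_right harc (by omega)
  obtain ⟨n, hn⟩ := Nat.exists_eq_succ_of_ne_zero hd
  rw [hn, Nat.succ_sub_one] at hcancel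
  rw [hn, Nat.succ_mul]
  omega

theorem ncard_zeros_add_two_mul_card_le {a b : MvPolynomial (Fin 2) F} (ha : ¬ IsUnit a)
    (hb : ¬ IsUnit b) (hab : a * b ≠ 0) (hinf : HasNoZeroAtInfinity (a * b)) :
    {P | eval P (a * b) = 0}.ncard + 2 * Fintype.card F ≤
      (a * b).totalDegree * (Fintype.card F + 1) := by
  obtain ⟨ha₀, hb₀⟩ := mul_ne_zero_iff.1 hab
  have hzeros : {P | eval P (a * b) = 0} = {P | eval P a = 0} ∪ {P | eval P b = 0} := by
    ext P
    simp
  have ha_le := ncard_zeros_add_card_le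
    (fun P _ => (hinf.of_mul_left ha₀ hb₀).lineRestriction_ne_zero P)
    (totalDegree_ne_zero_of_not_isUnit ha₀ ha)
  have hb_le := ncard_zeros_add_card_le
    (fun P _ => ((mul_comm a b ▸ hinf).of_mul_left hb₀ ha₀).lineRestriction_ne_zero P)
    (totalDegree_ne_zero_of_not_isUnit hb₀ hb)
  have hunion := Set.ncard_union_le {P | eval P a = 0} {P | eval P b = 0}
  rw [hzeros, totalDegree_mul_of_isDomain ha₀ hb₀, add_mul]
  omega

theorem HasNoZeroAtInfinity.ncard_zeros_le {f : MvPolynomial (Fin 2) F}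
    (hf : HasNoZeroAtInfinity f) (hd : (f.totalDegree : F) ≠ 0) {N : ℕ}
    (hirr : f.totalDegree * (Fintype.card F + (f.totalDegree - 1)) ≤ 2 * N)
    (hred : f.totalDegree * (Fintype.card F + 1) ≤ N + 2 * Fintype.card F) :
    {P | eval P f = 0}.ncard ≤ N := by
  by_cases hf_irr : Irreducible f
  · have := two_mul_ncard_zeros_le_of_irreducible hf_irr hf hd
    omega
  have hf₀ : f ≠ 0 := by
    rintro rfl
    simp at hd
  have hunit : ¬ IsUnit f := fun h => hd (by
    rw [(isUnit_iff_totalDegree_of_isReduced.1 h).2, Nat.cast_zero])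
  obtain ⟨a, b, ha, hb, rfl⟩ : ∃ a b, ¬ IsUnit a ∧ ¬ IsUnit b ∧ f = a * b := by
    simpa [irreducible_iff, hunit, and_comm, and_assoc, not_or] using hf_irr
  have := ncard_zeros_add_two_mul_card_le ha hb hf₀ hf
  omega

end PlaneCurves

section AffinePullback

variable {F σ τ : Type*} [Field F] [Fintype τ]

/-- The pullback of a polynomial function along the affine map `P ↦ c + ∑ j, P j • e j`. For `e` a
basis of a linear subspace `L`, it describes the section of a hypersurface by the coset `c + L`. -/
noncomputable def affinePullback (c : σ → F) (e : τ → σ → F) :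
    MvPolynomial σ F →ₐ[F] MvPolynomial τ F :=
  aeval fun i => C (c i) + ∑ j, C (e j i) * X j

theorem lineRestriction_affinePullback (c : σ → F) (e : τ → σ → F) (P w : τ → F)
    (f : MvPolynomial σ F) :
    lineRestriction P w (affinePullback c e f) =
      lineRestriction (c + ∑ j, P j • e j) (∑ j, w j • e j) f := by
  refine DFunLike.congr_fun (f := (lineRestriction P w).comp (affinePullback c e)) ?_ f
  ext1 i
  simp only [AlgHom.comp_apply, affinePullback, aeval_X, map_add, map_sum, map_mul,
    lineRestriction_X, algHom_C, Polynomial.algebraMap_eq, Pi.add_apply, Finset.sum_apply,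
    Pi.smul_apply, smul_eq_mul, Finset.sum_mul, mul_add, Finset.sum_add_distrib, add_assoc]
  simp only [mul_comm, mul_left_comm]

theorem eval_affinePullback (c : σ → F) (e : τ → σ → F) (P : τ → F) (f : MvPolynomial σ F) :
    eval P (affinePullback c e f) = eval (c + ∑ j, P j • e j) f := by
  have h := congr_arg (Polynomial.eval 0) (lineRestriction_affinePullback c e P 0 f)
  simpa only [eval_lineRestriction, zero_smul, add_zero] using h

theorem totalDegree_affinePullback_le (c : σ → F) (e : τ → σ → F) (f : MvPolynomial σ F) :
    (affinePullback c e f).totalDegree ≤ f.totalDegree := by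
  refine totalDegree_aeval_le (fun i => (totalDegree_add _ _).trans (max_le ?_ ?_)) f
  · simp
  · refine totalDegree_finsetSum_le fun j _ => (totalDegree_mul _ _).trans ?_
    rw [totalDegree_C, totalDegree_X]

theorem eval_homogeneousComponent_affinePullback {f : MvPolynomial σ F} {d : ℕ}
    (hf : f.IsHomogeneous d) (c : σ → F) (e : τ → σ → F) (w : τ → F) :
    eval w (homogeneousComponent d (affinePullback c e f)) = eval (∑ j, w j • e j) f := by
  rw [← coeff_lineRestriction ((totalDegree_affinePullback_le c e f).trans hf.totalDegree_le) 0 w,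
    lineRestriction_affinePullback, coeff_lineRestriction hf.totalDegree_le,
    homogeneousComponent_eq_self hf]

theorem totalDegree_affinePullback [Nonempty τ] {f : MvPolynomial σ F} {d : ℕ}
    (hf : f.IsHomogeneous d) (c : σ → F) {e : τ → σ → F}
    (he : ∀ w : τ → F, w ≠ 0 → eval (∑ j, w j • e j) f ≠ 0) :
    (affinePullback c e f).totalDegree = d := by
  refine le_antisymm ((totalDegree_affinePullback_le c e f).trans hf.totalDegree_le)
    (le_of_not_gt fun hlt => he 1 one_ne_zero ?_)
  rw [← eval_homogeneousComponent_affinePullback hf c, homogeneousComponent_eq_zero _ _ hlt,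
    map_zero]

theorem hasNoZeroAtInfinity_affinePullback [Nonempty τ] {f : MvPolynomial σ F} {d : ℕ}
    (hf : f.IsHomogeneous d) (c : σ → F) {e : τ → σ → F}
    (he : ∀ w : τ → F, w ≠ 0 → eval (∑ j, w j • e j) f ≠ 0) :
    HasNoZeroAtInfinity (affinePullback c e f) := by
  intro w hw
  rw [totalDegree_affinePullback hf c he, eval_homogeneousComponent_affinePullback hf]
  exact he w hw

end AffinePullback

section Counting

variable {F : Type*} [Field F] [Fintype F]

theorem ncard_zeros_coset_le {σ : Type*} [Finite σ] {f : MvPolynomial σ F} {d N : ℕ}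
    (hf : f.IsHomogeneous d) (hd : (d : F) ≠ 0)
    (hirr : d * (Fintype.card F + (d - 1)) ≤ 2 * N)
    (hred : d * (Fintype.card F + 1) ≤ N + 2 * Fintype.card F)
    {L : Submodule F (σ → F)} (hL : finrank F L = 2) (hzero : ∀ v ∈ L, v ≠ 0 → eval v f ≠ 0)
    (c : σ → F) : {v | v - c ∈ L ∧ eval v f = 0}.ncard ≤ N := by
  let b := finBasisOfFinrankEq F L hL
  let e : Fin 2 → σ → F := fun j => b j
  have hsum (w : Fin 2 → F) : ∑ j, w j • e j = (b.equivFun.symm w : σ → F) := by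
    simp [b.equivFun_symm_apply, e]
  have he (w : Fin 2 → F) (hw : w ≠ 0) : eval (∑ j, w j • e j) f ≠ 0 := by
    rw [hsum]
    exact hzero _ (SetLike.coe_mem _)
      (Subtype.coe_ne_coe.2 ((LinearEquiv.map_ne_zero_iff _).2 hw))
  have hdeg := totalDegree_affinePullback hf c he
  refine le_trans ?_ ((hasNoZeroAtInfinity_affinePullback hf c he).ncard_zeros_le
    (by rwa [hdeg]) (by rwa [hdeg]) (by rwa [hdeg]))
  refine (Set.ncard_le_ncard fun v hv => ?_).trans
    (Set.ncard_image_le (f := fun P => c + ∑ j, P j • e j))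
  have hcoset : c + ∑ j, b.equivFun ⟨v - c, hv.1⟩ j • e j = v := by
    rw [hsum, LinearEquiv.symm_apply_apply, add_sub_cancel]
  refine ⟨b.equivFun ⟨v - c, hv.1⟩, ?_, hcoset⟩
  rw [Set.mem_ofPred_eq, eval_affinePullback, hcoset]
  exact hv.2

theorem ncard_nonzero_zeros_le {σ : Type*} [Fintype σ] {f : MvPolynomial σ F} {N : ℕ}
    {L : Submodule F (σ → F)} (hL : ∀ v ∈ L, v ≠ 0 → eval v f ≠ 0)
    (hcoset : ∀ c, {v | v - c ∈ L ∧ eval v f = 0}.ncard ≤ N) :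
    {v | v ≠ 0 ∧ eval v f = 0}.ncard ≤
      N * (Fintype.card F ^ (Fintype.card σ - finrank F L) - 1) := by
  classical
  have : Fintype ((σ → F) ⧸ L) := Fintype.ofFinite _
  have hcard : (Finset.univ.erase (0 : (σ → F) ⧸ L)).card =
      Fintype.card F ^ (Fintype.card σ - finrank F L) - 1 := by
    rw [Finset.card_erase_of_mem (Finset.mem_univ _), Finset.card_univ,
      Module.card_eq_pow_finrank (K := F), Submodule.finrank_quotient,
      finrank_fintype_fun_eq_card]
  rw [← hcard, Set.ncard_eq_toFinset_card']
  refine Finset.card_le_mul_card_image_of_maps_to (f := L.mkQ) (fun v hv => ?_) N fun y _ => ?_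
  · rw [Set.mem_toFinset] at hv
    rw [Finset.mem_erase, Submodule.mkQ_apply, Ne, Submodule.Quotient.mk_eq_zero]
    exact ⟨fun hvL => hL v hvL hv.1 hv.2, Finset.mem_univ _⟩
  · obtain ⟨c, rfl⟩ := L.mkQ_surjective y
    refine le_trans ?_ (hcoset c)
    rw [← Set.ncard_coe_finset]
    refine Set.ncard_le_ncard fun v hv => ?_
    simp only [Submodule.mkQ_apply, Submodule.Quotient.eq, Finset.coe_filter,
      Set.mem_toFinset, Set.mem_ofPred_eq] at hv
    exact ⟨hv.2, hv.1.2⟩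

end Counting

section Projective

theorem smul_rep_injective (K V : Type*) [Field K] [AddCommGroup V] [Module K V] :
    Function.Injective fun x : Projectivization K V × Kˣ => x.2 • x.1.rep := by
  rintro ⟨P, a⟩ ⟨P', a'⟩ h
  obtain rfl : P = P' := by
    rw [← P.mk_rep, ← P'.mk_rep, Projectivization.mk_eq_mk_iff]
    exact ⟨a⁻¹ * a', by simpa [mul_smul, inv_smul_eq_iff] using h.symm⟩
  exact Prod.ext rfl (Units.ext (smul_left_injective K P.rep_nonzero h))

variable {F : Type} [Field F] {n : ℕ} {f : MvPolynomial (Fin n) F} {d : ℕ}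

theorem eval_rep_mk_eq_zero_iff (hf : f.IsHomogeneous d) {v : Fin n → F} (hv : v ≠ 0) :
    eval (Projectivization.mk F v hv).rep f = 0 ↔ eval v f = 0 := by
  obtain ⟨a, ha⟩ := Projectivization.exists_smul_eq_mk_rep F v hv
  rw [← ha, Units.smul_def, eval_smul_of_isHomogeneous hf, mul_eq_zero,
    or_iff_right (pow_ne_zero _ a.ne_zero)]

theorem eval_ne_zero_of_disjoint_projPts (hf : f.IsHomogeneous d) {L : Submodule F (Fin n → F)}
    (hL : Disjoint (hypersurfacePts f) (projPts L)) {v : Fin n → F} (hvL : v ∈ L) (hv : v ≠ 0) :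
    eval v f ≠ 0 := by
  intro hzero
  refine Set.disjoint_left.1 hL ((eval_rep_mk_eq_zero_iff hf hv).2 hzero) ?_
  rw [projPts, Set.mem_ofPred_eq, Projectivization.submodule_mk]
  exact (Submodule.span_singleton_le_iff_mem v L).2 hvL

theorem nonzero_zeros_eq_image (hf : f.IsHomogeneous d) :
    {v | v ≠ 0 ∧ eval v f = 0} =
      (fun x : Projectivization F (Fin n → F) × Fˣ => x.2 • x.1.rep) ''
        (hypersurfacePts f ×ˢ Set.univ) := by
  ext v
  constructor
  · rintro ⟨hv, hzero⟩
    obtain ⟨a, ha⟩ := Projectivization.exists_smul_eq_mk_rep F v hv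
    refine ⟨(Projectivization.mk F v hv, a⁻¹),
      ⟨(eval_rep_mk_eq_zero_iff hf hv).2 hzero, Set.mem_univ _⟩, ?_⟩
    exact inv_smul_eq_iff.2 ha.symm
  · rintro ⟨⟨P, a⟩, ⟨hP, -⟩, rfl⟩
    refine ⟨(smul_ne_zero_iff_ne a).2 P.rep_nonzero, ?_⟩
    exact (eval_smul_of_isHomogeneous hf a.1 P.rep).trans (mul_eq_zero_of_right _ hP)

theorem ncard_nonzero_zeros_eq [Fintype F] (hf : f.IsHomogeneous d) :
    {v | v ≠ 0 ∧ eval v f = 0}.ncard = (hypersurfacePts f).ncard * (Fintype.card F - 1) := by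
  classical
  rw [nonzero_zeros_eq_image hf,
    Set.ncard_image_of_injective _ (smul_rep_injective F _), Set.ncard_prod, Set.ncard_univ,
    Nat.card_eq_fintype_card, Fintype.card_units]

theorem exists_mem_hypersurfacePts_mem_projPts [Fintype F] {N : ℕ} (hf : f.IsHomogeneous d)
    (hd : (d : F) ≠ 0)
    (hirr : d * (Fintype.card F + (d - 1)) ≤ 2 * N)
    (hred : d * (Fintype.card F + 1) ≤ N + 2 * Fintype.card F)
    (hcard : N * (Fintype.card F ^ (n - 2) - 1) <
      (hypersurfacePts f).ncard * (Fintype.card F - 1))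
    {L : Submodule F (Fin n → F)} (hL : finrank F L = 2) :
    ∃ P ∈ hypersurfacePts f, P ∈ projPts L := by
  rw [← Set.not_disjoint_iff]
  intro hdisj
  have hzero : ∀ v ∈ L, v ≠ 0 → eval v f ≠ 0 := fun v =>
    eval_ne_zero_of_disjoint_projPts hf hdisj
  have hle := ncard_nonzero_zeros_le hzero (ncard_zeros_coset_le hf hd hirr hred hL hzero)
  rw [ncard_nonzero_zeros_eq hf, hL, Fintype.card_fin] at hle
  exact hcard.not_ge hle

end Projective

section HermitianCount

theorem pow_sub_one_mul_pow_sub_self_nonneg {q : ℤ} (hq : 1 ≤ q) (n : ℕ) :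
    0 ≤ (q ^ n - 1) * (q ^ n - q) := by
  rcases eq_or_ne n 0 with rfl | hn
  · simp
  · have hself := le_self_pow₀ hq hn
    exact mul_nonneg (by linarith) (by linarith)

theorem cube_sub_one_mul_sq_pow_sub_one_lt {q : ℤ} (hq : 2 < q) (s : ℕ) :
    (q ^ 3 - 1) * ((q ^ 2) ^ s - 1) <
      (q ^ (s + 2) + (-1) ^ (s + 1)) * (q ^ (s + 1) - (-1) ^ (s + 1)) := by
  have hq_sq : 4 < q ^ 2 := by nlinarith
  rcases s.even_or_odd with hs | ⟨k, rfl⟩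
  · rw [hs.add_one.neg_one_pow, ← sub_pos]
    calc (0 : ℤ) < (q ^ s) ^ 2 + q ^ s * q * (q - 1) + (q ^ 3 - 2) := by
          have hcube : 0 < q ^ 3 - 2 := by nlinarith
          have hlin : 0 ≤ q ^ s * q * (q - 1) :=
            mul_nonneg (by positivity) (by linarith)
          positivity
      _ = _ := by ring
  · rw [(odd_two_mul_add_one k).add_one.neg_one_pow, ← sub_pos]
    have hpow : 1 ≤ q ^ (2 * k) := one_le_pow₀ (by linarith)
    have hprod := pow_sub_one_mul_pow_sub_self_nonneg (by linarith : 1 ≤ q) (2 * k)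
    calc (0 : ℤ) < q ^ 2 * ((q ^ (2 * k) - 1) * (q ^ (2 * k) - q)) +
            2 * (q ^ 2 * q ^ (2 * k) - 1) :=
          add_pos_of_nonneg_of_pos (mul_nonneg (sq_nonneg q) hprod) (by nlinarith)
      _ = _ := by ring

theorem natCast_add_one_ne_zero {F : Type*} [Field F] [Fintype F] {q : ℕ}
    (hq : Fintype.card F = q ^ 2) : ((q + 1 : ℕ) : F) ≠ 0 := by
  have hq₀ : (q : F) = 0 := by
    rw [← sq_eq_zero_iff, ← Nat.cast_pow, ← hq, FiniteField.cast_card_eq_zero]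
  rw [Nat.cast_succ, hq₀, zero_add]
  exact one_ne_zero

theorem stmt_2_general {q r : ℕ} (hq : 2 < q) {F : Type} [Field F] [Fintype F]
    (hcardF : Fintype.card F = q ^ 2) {f : MvPolynomial (Fin (r + 1)) F}
    (hf : f.IsHomogeneous (q + 1))
    (hcard : ((q : ℤ) ^ (r + 1) + (-1) ^ r) * ((q : ℤ) ^ r - (-1) ^ r) ≤
      ((hypersurfacePts f).ncard : ℤ) * ((q : ℤ) ^ 2 - 1))
    {L : Submodule F (Fin (r + 1) → F)} (hL : finrank F L = 2) :
    ∃ P ∈ hypersurfacePts f, P ∈ projPts L := by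
  obtain ⟨s, rfl⟩ : ∃ s, r = s + 1 := by
    have hr := L.finrank_le
    rw [hL, finrank_fin_fun] at hr
    exact ⟨r - 1, by omega⟩
  have hsq : 1 ≤ q ^ 2 := Nat.one_le_pow _ _ (by omega)
  obtain ⟨N, hN⟩ : ∃ N, q ^ 3 = N + 1 := Nat.exists_eq_succ_of_ne_zero (by positivity)
  refine exists_mem_hypersurfacePts_mem_projPts (N := N) hf (natCast_add_one_ne_zero hcardF)
    ?_ ?_ ?_ hL
  · rw [hcardF, Nat.add_sub_cancel]
    nlinarith
  · rw [hcardF]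
    nlinarith
  · have hqz : (2 : ℤ) < q := by exact_mod_cast hq
    have hlt := (cube_sub_one_mul_sq_pow_sub_one_lt hqz s).trans_le hcard
    have hNz : (q : ℤ) ^ 3 = N + 1 := by exact_mod_cast hN
    rw [hcardF, Nat.add_sub_cancel_right (n := s) (m := 2)]
    zify [hsq, Nat.one_le_pow s _ hsq]
    rwa [hNz, add_sub_cancel_right] at hlt

end HermitianCount

/-- If `q > 2` is a prime power, `r ≥ 2`, and `T` is a hypersurface of `PG(r,q²)` of
degree `q+1` defined over `GF(q²)` with as many rational points as the non-singular
Hermitian variety `H(r,q²)`, namely `(q^(r+1) + (-1)^r)(q^r - (-1)^r)/(q² - 1)`, then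
`T` is a blocking set with respect to the lines of `PG(r,q²)`. -/
theorem stmt_2 (q : ℕ) (hq : ∃ p k : ℕ, p.Prime ∧ 0 < k ∧ q = p ^ k) (hq2 : 2 < q)
    (r : ℕ) (hr : 2 ≤ r)
    (F : Type) [Field F] [Fintype F] (hcardF : Fintype.card F = q ^ 2)
    (f : MvPolynomial (Fin (r + 1)) F) (hf0 : f ≠ 0) (hfdeg : f.IsHomogeneous (q + 1))
    (T : Set (Projectivization F (Fin (r + 1) → F))) (hT : T = hypersurfacePts f)
    (hcardT : (T.ncard : ℤ) * ((q : ℤ) ^ 2 - 1) =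
      ((q : ℤ) ^ (r + 1) + (-1) ^ r) * ((q : ℤ) ^ r - (-1) ^ r)) :
    ∀ L : Submodule F (Fin (r + 1) → F), Module.finrank F L = 2 →
      ∃ P ∈ T, P ∈ projPts L := by
  subst hT
  exact fun L hL => stmt_2_general hq2 hcardF hfdeg hcardT.ge hL
end

section
/- Let q be a prime power with q > 3 and let C be a plane projective curve of degree q+1 defined over GF(q^2) having no GF(q^2)-linear components. If the number N of GF(q^2)-rational points of C satisfies N < q^3 + 1, then N <= q^3 - (q^2 - 2) = q^3 - q^2 + 2. -/
open MvPolynomial Module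

/-!
Write `Q = #F = q ^ 2` and call an irreducible curve `f` of degree `d` Frobenius nonclassical if
`f` divides `D f = ∑ xᵢ ^ Q ∂ᵢ f`, that is, if the Frobenius image of each point lies on the tangent
line at the point.

* If `f` is Frobenius classical, then at each rational point the curves `f = 0` and `D f = 0` (of
  degree `Q + d - 1`) have contact along the tangent line, so that Bézout's theorem gives the
  Stöhr–Voloch bound `2 N ≤ d (Q + d - 1)`.
* If `f` is Frobenius nonclassical, project from a rational point `a` off the curve. On a line
  through `a` the curve cuts out a polynomial `h` dividing `(X ^ Q - X) h'`, hence
  `h / gcd (h, h')` splits into distinct linear factors. The gcds measure the intersection with the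
  polar curve of `a`, so their degrees add up to at most `d (d - 1)`, and
  `d (Q + 1) ≤ N + d (d - 1)`.

For `d = q + 1` the first bound is at most `q ^ 3 - q ^ 2 + 2` as soon as `4 ≤ q`, and the second
one reads `q ^ 3 + 1 ≤ N`. A reducible curve is a union of curves of smaller degrees `d`, each
without linear components. Such a curve with `d (d - 1) < Q` has at most `(d - 1) Q + 1` points, by
induction on `d`: an irreducible one is classical, because the nonclassical bound would exceed the
bound `(d - 1) (Q + 1) + 1` that comes from the lines through a point of the curve.

Bézout's theorem is used only for subschemes of lines: if `f` and `g` vanish modulo `pᵢ` on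
parametrised lines `ℓᵢ`, then forms of large degree surject onto `∏ F[X] / pᵢ`, while `f` and `g`
generate an ideal of codimension at most `deg f * deg g` in each large degree.
-/

section Factors

variable {σ R : Type*} [CommSemiring R] {f g : MvPolynomial σ R} {d m n : ℕ}

lemma le_order_of_isHomogeneous (hf : f.IsHomogeneous d) :
    (d : ℕ∞) ≤ (f : MvPowerSeries σ R).order := by
  refine MvPowerSeries.le_order fun e he => ?_
  rw [MvPolynomial.coeff_coe]
  exact hf.coeff_eq_zero (by exact_mod_cast he.ne)

lemma degree_le_totalDegree_of_coeff_ne_zero {e : σ →₀ ℕ} (he : coeff e f ≠ 0) :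
    e.degree ≤ f.totalDegree :=
  le_totalDegree (mem_support_iff.mpr he)

lemma order_le_totalDegree (hf : f ≠ 0) : (f : MvPowerSeries σ R).order ≤ f.totalDegree := by
  obtain ⟨e, he⟩ := MvPolynomial.ne_zero_iff.mp hf
  have horder : (f : MvPowerSeries σ R).order ≤ e.degree :=
    MvPowerSeries.order_le (by rwa [MvPolynomial.coeff_coe])
  exact horder.trans (by exact_mod_cast degree_le_totalDegree_of_coeff_ne_zero he)

lemma isHomogeneous_of_totalDegree_le_order
    (h : (f.totalDegree : ℕ∞) ≤ (f : MvPowerSeries σ R).order) :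
    f.IsHomogeneous f.totalDegree := by
  intro e he
  have horder := h.trans (MvPowerSeries.order_le (f := (f : MvPowerSeries σ R))
    (by rwa [MvPolynomial.coeff_coe]))
  change Finsupp.weight (fun _ => 1) e = _
  rw [← Finsupp.degree_eq_weight_one]
  exact le_antisymm (degree_le_totalDegree_of_coeff_ne_zero he) (by exact_mod_cast horder)

variable [NoZeroDivisors R]

lemma isHomogeneous_totalDegree_of_mul_left (hfg : (f * g).IsHomogeneous d) (h0 : f * g ≠ 0) :
    f.IsHomogeneous f.totalDegree := by
  have hf0 := left_ne_zero_of_mul h0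
  have hg0 := right_ne_zero_of_mul h0
  apply isHomogeneous_of_totalDegree_le_order
  have hsum : (f.totalDegree + g.totalDegree : ℕ∞) ≤
      (f : MvPowerSeries σ R).order + g.totalDegree := calc
    (f.totalDegree + g.totalDegree : ℕ∞) = d := by
      rw [← Nat.cast_add, ← totalDegree_mul_of_isDomain hf0 hg0, hfg.totalDegree h0]
    _ ≤ ((f * g : MvPolynomial σ R) : MvPowerSeries σ R).order := le_order_of_isHomogeneous hfg
    _ = (f : MvPowerSeries σ R).order + (g : MvPowerSeries σ R).order := by
      rw [MvPolynomial.coe_mul, MvPowerSeries.order_mul]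
    _ ≤ (f : MvPowerSeries σ R).order + g.totalDegree := by
      gcongr
      exact order_le_totalDegree hg0
  exact (ENat.add_le_add_iff_right (ENat.natCast_ne_top _)).mp hsum

lemma isHomogeneous_totalDegree_of_mul_right (hfg : (f * g).IsHomogeneous d) (h0 : f * g ≠ 0) :
    g.IsHomogeneous g.totalDegree := by
  rw [mul_comm] at hfg h0
  exact isHomogeneous_totalDegree_of_mul_left hfg h0

lemma isHomogeneous_right_of_mul (hf : f.IsHomogeneous m) (hf0 : f ≠ 0)
    (hfg : (f * g).IsHomogeneous (m + n)) : g.IsHomogeneous n := by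
  rcases eq_or_ne g 0 with rfl | hg0
  · exact isHomogeneous_zero σ R n
  have hdeg := hfg.totalDegree (mul_ne_zero hf0 hg0)
  rw [totalDegree_mul_of_isDomain hf0 hg0, hf.totalDegree hf0, Nat.add_left_cancel_iff] at hdeg
  exact hdeg ▸ isHomogeneous_totalDegree_of_mul_right hfg (mul_ne_zero hf0 hg0)

lemma le_degree_of_dvd (hfg : f ∣ g) (hg0 : g ≠ 0) (hf : f.IsHomogeneous m)
    (hg : g.IsHomogeneous n) : m ≤ n := by
  rw [← hf.totalDegree (ne_zero_of_dvd_ne_zero hg0 hfg), ← hg.totalDegree hg0]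
  exact totalDegree_le_of_dvd_of_isDomain hfg hg0

end Factors

lemma totalDegree_pos_of_not_isUnit {σ F : Type*} [Field F] {f : MvPolynomial σ F} (hf0 : f ≠ 0)
    (hu : ¬ IsUnit f) : 0 < f.totalDegree := by
  refine Nat.pos_of_ne_zero fun hdeg => hu ?_
  rw [totalDegree_eq_zero_iff_eq_C] at hdeg
  rw [hdeg] at hf0 ⊢
  exact (isUnit_iff_ne_zero.mpr fun h => hf0 (by rw [h, C_0])).map C

lemma exists_isHomogeneous_mul_of_not_irreducible {σ F : Type*} [Field F] {f : MvPolynomial σ F}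
    {d : ℕ} (hf : f.IsHomogeneous d) (hf0 : f ≠ 0) (hd : 0 < d) (hirr : ¬ Irreducible f) :
    ∃ (m n : ℕ) (g h : MvPolynomial σ F), 0 < m ∧ 0 < n ∧ m + n = d ∧
      g.IsHomogeneous m ∧ h.IsHomogeneous n ∧ f = g * h := by
  have hu : ¬ IsUnit f := fun hu => by
    rw [isUnit_iff_totalDegree_of_isReduced, hf.totalDegree hf0] at hu
    exact hd.ne' hu.2
  obtain ⟨g, h, hg, hh, rfl⟩ := (irreducible_or_factor hu).resolve_left hirr
  have hg0 := left_ne_zero_of_mul hf0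
  have hh0 := right_ne_zero_of_mul hf0
  refine ⟨_, _, g, h, totalDegree_pos_of_not_isUnit hg0 hg, totalDegree_pos_of_not_isUnit hh0 hh,
    ?_, isHomogeneous_totalDegree_of_mul_left hf hf0,
    isHomogeneous_totalDegree_of_mul_right hf hf0, rfl⟩
  rw [← totalDegree_mul_of_isDomain hg0 hh0, hf.totalDegree hf0]

section Forms

variable (σ F : Type*) [Field F]

instance finiteDimensional_homogeneousSubmodule [Finite σ] (k : ℕ) :
    FiniteDimensional F (homogeneousSubmodule σ F k) :=
  Module.Finite.iff_fg.mpr (homogeneousSubmodule_fg σ F k)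

lemma finrank_homogeneousSubmodule [Fintype σ] (k : ℕ) :
    finrank F (homogeneousSubmodule σ F k) = (Fintype.card σ).multichoose k := by
  classical
  have hexp : {e : σ →₀ ℕ | e.degree = k} =
      ((Finset.univ : Finset σ).finsuppAntidiag k : Set (σ →₀ ℕ)) := by
    ext e
    simp [Finsupp.degree_eq_sum]
  rw [homogeneousSubmodule_eq_finsupp_supported, hexp,
    (AddMonoidAlgebra.supportedEquivFinsupp (R := F) (S := F)
      ((Finset.univ : Finset σ).finsuppAntidiag k : Set (σ →₀ ℕ))).finrank_eq,
    finrank_finsupp_self]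
  exact (Fintype.card_coe _).trans (Finset.card_finsuppAntidiag_nat_eq_multichoose _)

lemma two_mul_finrank_homogeneousSubmodule_fin_three (k : ℕ) :
    2 * finrank F (homogeneousSubmodule (Fin 3) F k) = (k + 1) * (k + 2) := by
  rw [finrank_homogeneousSubmodule, Fintype.card_fin, Nat.multichoose_eq,
    show 3 + k - 1 = k + 2 by lia, Nat.choose_symm_add, Nat.choose_two_right,
    Nat.mul_div_cancel' (Nat.even_mul_pred_self _).two_dvd]
  exact mul_comm _ _

end Forms

lemma finrank_add_finrank_le_of_map_eq_top {F M V : Type*} [Field F] [AddCommGroup M] [Module F M]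
    [AddCommGroup V] [Module F V] {T : M →ₗ[F] V} {S U : Submodule F M} [FiniteDimensional F S]
    (hS : S.map T = ⊤) (hUS : U ≤ S) (hUT : U ≤ LinearMap.ker T) :
    finrank F V + finrank F U ≤ finrank F S := by
  have hrank := (T.domRestrict S).finrank_range_add_finrank_ker
  rw [LinearMap.range_domRestrict, hS, finrank_top, LinearMap.ker_domRestrict] at hrank
  rw [← hrank, ← (Submodule.comapSubtypeEquivOfLe hUS).finrank_eq]
  gcongr
  exact Submodule.finrank_mono (Submodule.comap_mono hUT)

section Bezout

variable {σ F : Type*} [Field F] {f g : MvPolynomial σ F} {m n k : ℕ}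

/-- The products `f * u` with `u` a form of degree `k`: for a form `f`, this is a graded piece of
the ideal generated by `f`. -/
noncomputable def formMultiples (f : MvPolynomial σ F) (k : ℕ) :
    Submodule F (MvPolynomial σ F) :=
  (homogeneousSubmodule σ F k).map (LinearMap.mulLeft F f)

instance finiteDimensional_formMultiples [Finite σ] :
    FiniteDimensional F (formMultiples f k) :=
  inferInstanceAs <|
    FiniteDimensional F ((homogeneousSubmodule σ F k).map (LinearMap.mulLeft F f))

lemma finrank_formMultiples (hf0 : f ≠ 0) (k : ℕ) :
    finrank F (formMultiples f k) = finrank F (homogeneousSubmodule σ F k) :=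
  (Submodule.equivMapOfInjective _ (mul_right_injective₀ hf0) _).finrank_eq.symm

lemma formMultiples_le_homogeneousSubmodule (hf : f.IsHomogeneous m) (k : ℕ) :
    formMultiples f k ≤ homogeneousSubmodule σ F (m + k) := by
  rintro _ ⟨u, hu, rfl⟩
  exact hf.mul hu

lemma formMultiples_inf_formMultiples_le (hf : f.IsHomogeneous m) (hf0 : f ≠ 0)
    (hfg : IsRelPrime f g) :
    formMultiples f n ⊓ formMultiples g (m + k) ≤ formMultiples (f * g) k := by
  rintro _ ⟨⟨u, -, rfl⟩, v, hv, huv⟩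
  simp only [LinearMap.mulLeft_apply] at huv ⊢
  obtain ⟨w, rfl⟩ : f ∣ v := hfg.dvd_of_dvd_mul_left ⟨u, huv⟩
  refine ⟨w, isHomogeneous_right_of_mul hf hf0 hv, ?_⟩
  simp only [LinearMap.mulLeft_apply, ← huv]
  ring

lemma finrank_homogeneousSubmodule_le_finrank_formMultiples_sup {f g : MvPolynomial (Fin 3) F}
    (hf : f.IsHomogeneous m) (hf0 : f ≠ 0) (hg0 : g ≠ 0) (hfg : IsRelPrime f g) (n k : ℕ) :
    finrank F (homogeneousSubmodule (Fin 3) F (m + n + k)) ≤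
      finrank F ↥(formMultiples f (n + k) ⊔ formMultiples g (m + k)) + m * n := by
  have hinf := Submodule.finrank_mono
    (formMultiples_inf_formMultiples_le (n := n + k) (k := k) hf hf0 hfg)
  have hsup := Submodule.finrank_sup_add_finrank_inf_eq
    (formMultiples f (n + k)) (formMultiples g (m + k))
  rw [finrank_formMultiples (mul_ne_zero hf0 hg0)] at hinf
  rw [finrank_formMultiples hf0, finrank_formMultiples hg0] at hsup
  have hdim := two_mul_finrank_homogeneousSubmodule_fin_three F
  have := hdim k
  have := hdim (m + k)
  have := hdim (n + k)
  have := hdim (m + n + k)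
  linarith

/-- The forms of each sufficiently large degree are mapped onto the target. -/
def SurjectiveOnForms {R V : Type*} [CommSemiring R] [AddCommMonoid V] [Module R V]
    (T : MvPolynomial σ R →ₗ[R] V) : Prop :=
  ∃ K, ∀ k ≥ K, (homogeneousSubmodule σ R k).map T = ⊤

variable {V : Type*} [AddCommGroup V] [Module F V] {T : MvPolynomial σ F →ₗ[F] V}

lemma SurjectiveOnForms.finiteDimensional [Finite σ] (hT : SurjectiveOnForms T) :
    FiniteDimensional F V := by
  obtain ⟨K, hK⟩ := hT
  rw [FiniteDimensional, Module.finite_def, ← hK K le_rfl]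
  exact (homogeneousSubmodule_fg σ F K).map T

lemma finrank_le_mul_of_surjectiveOnForms {f g : MvPolynomial (Fin 3) F}
    {T : MvPolynomial (Fin 3) F →ₗ[F] V} (hf : f.IsHomogeneous m) (hg : g.IsHomogeneous n)
    (hf0 : f ≠ 0) (hg0 : g ≠ 0) (hfg : IsRelPrime f g) (hT : SurjectiveOnForms T)
    (hTf : ∀ u, T (f * u) = 0) (hTg : ∀ u, T (g * u) = 0) : finrank F V ≤ m * n := by
  obtain ⟨k, hk⟩ := hT
  have hker : formMultiples f (n + k) ⊔ formMultiples g (m + k) ≤ LinearMap.ker T := by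
    refine sup_le ?_ ?_
    · rintro _ ⟨u, -, rfl⟩
      exact hTf u
    · rintro _ ⟨u, -, rfl⟩
      exact hTg u
  have hle : formMultiples f (n + k) ⊔ formMultiples g (m + k) ≤
      homogeneousSubmodule (Fin 3) F (m + n + k) := by
    refine sup_le ?_ ?_
    · simpa only [add_assoc] using formMultiples_le_homogeneousSubmodule hf (n + k)
    · simpa only [add_assoc, add_left_comm m n k] using
        formMultiples_le_homogeneousSubmodule hg (m + k)
  have hupper := finrank_add_finrank_le_of_map_eq_top (hk (m + n + k) (by lia)) hle hker
  have hlower :=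
    finrank_homogeneousSubmodule_le_finrank_formMultiples_sup hf hf0 hg0 hfg n k
  lia

section Family

variable {R ι : Type*} [CommRing R] [Finite ι] {A : ι → Type*} [∀ i, CommRing (A i)]
  [∀ i, Algebra R (A i)] {ρ : ∀ i, MvPolynomial σ R →ₐ[R] A i}

lemma exists_isHomogeneous_isUnit_and_forall_eq_zero
    (hsep : ∀ i j, i ≠ j → ∃ (e : ℕ) (w : MvPolynomial σ R),
      w.IsHomogeneous e ∧ IsUnit (ρ i w) ∧ ρ j w = 0) (i : ι) :
    ∃ (e : ℕ) (w : MvPolynomial σ R),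
      w.IsHomogeneous e ∧ IsUnit (ρ i w) ∧ ∀ j, j ≠ i → ρ j w = 0 := by
  classical
  cases nonempty_fintype ι
  choose! e w hw hunit hzero using hsep i
  have hne : ∀ j ∈ Finset.univ.erase i, i ≠ j := fun j hj => (Finset.ne_of_mem_erase hj).symm
  refine ⟨_, ∏ j ∈ Finset.univ.erase i, w j, IsHomogeneous.prod _ _ e fun j hj => hw j (hne j hj),
    ?_, fun j hj => ?_⟩
  · rw [map_prod]
    exact IsUnit.prod_iff.mpr fun j hj => hunit j (hne j hj)
  · rw [map_prod]
    exact Finset.prod_eq_zero (Finset.mem_erase.mpr ⟨hj, Finset.mem_univ j⟩) (hzero j hj.symm)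

lemma surjectiveOnForms_pi (hsurj : ∀ i, SurjectiveOnForms (ρ i).toLinearMap)
    (hsep : ∀ i j, i ≠ j → ∃ (e : ℕ) (w : MvPolynomial σ R),
      w.IsHomogeneous e ∧ IsUnit (ρ i w) ∧ ρ j w = 0) :
    SurjectiveOnForms (LinearMap.pi fun i => (ρ i).toLinearMap) := by
  classical
  cases nonempty_fintype ι
  choose K hK using hsurj
  choose e w hw hunit hzero using exists_isHomogeneous_isUnit_and_forall_eq_zero hsep
  refine ⟨∑ i, (e i + K i), fun k hk => Submodule.eq_top_iff'.mpr fun v => ?_⟩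
  have hle : ∀ i, e i + K i ≤ k := fun i =>
    (Finset.single_le_sum (fun i _ => Nat.zero_le (e i + K i)) (Finset.mem_univ i)).trans hk
  have hlift : ∀ i, ∃ z ∈ homogeneousSubmodule σ R (k - e i), ρ i z = (hunit i).unit⁻¹ * v i :=
    fun i => Submodule.mem_map.mp (hK i (k - e i) (by have := hle i; lia) ▸ Submodule.mem_top)
  choose z hz hρz using hlift
  refine ⟨∑ i, w i * z i, IsHomogeneous.sum _ _ _ fun i _ => ?_, funext fun j => ?_⟩
  · have := (hw i).mul (hz i)
    rwa [Nat.add_sub_cancel' ((Nat.le_add_right _ _).trans (hle i))] at this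
  · simp only [LinearMap.pi_apply, AlgHom.toLinearMap_apply, map_sum, map_mul]
    rw [Finset.sum_eq_single j (fun i _ hij => by rw [hzero i j hij.symm, zero_mul]) (by simp),
      hρz, ← mul_assoc, IsUnit.mul_val_inv, one_mul]

end Family

lemma sum_finrank_le_mul {ι : Type*} [Fintype ι] {A : ι → Type*} [∀ i, CommRing (A i)]
    [∀ i, Algebra F (A i)] {ρ : ∀ i, MvPolynomial (Fin 3) F →ₐ[F] A i}
    {f g : MvPolynomial (Fin 3) F} (hf : f.IsHomogeneous m) (hg : g.IsHomogeneous n)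
    (hf0 : f ≠ 0) (hg0 : g ≠ 0) (hfg : IsRelPrime f g)
    (hsurj : ∀ i, SurjectiveOnForms (ρ i).toLinearMap)
    (hsep : ∀ i j, i ≠ j → ∃ (e : ℕ) (w : MvPolynomial (Fin 3) F),
      w.IsHomogeneous e ∧ IsUnit (ρ i w) ∧ ρ j w = 0)
    (hρf : ∀ i, ρ i f = 0) (hρg : ∀ i, ρ i g = 0) : ∑ i, finrank F (A i) ≤ m * n := by
  have := fun i => (hsurj i).finiteDimensional
  rw [← finrank_pi_fintype]
  refine finrank_le_mul_of_surjectiveOnForms hf hg hf0 hg0 hfg (surjectiveOnForms_pi hsurj hsep)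
    (fun u => funext fun i => ?_) (fun u => funext fun i => ?_)
  · simp [hρf]
  · simp [hρg]

end Bezout

lemma eval_smul_of_isHomogeneous_s3 {σ R : Type*} [CommSemiring R] {f : MvPolynomial σ R} {d : ℕ}
    (hf : f.IsHomogeneous d) (c : R) (x : σ → R) : eval (c • x) f = c ^ d * eval x f := by
  rw [eval_eq, eval_eq, Finset.mul_sum]
  refine Finset.sum_congr rfl fun e he => ?_
  simp only [Pi.smul_apply, smul_eq_mul, mul_pow, Finset.prod_mul_distrib,
    Finset.prod_pow_eq_pow_sum, ← hf.degree_eq_sum_deg_support he]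
  ring

section Derivations

variable {σ R : Type*} [CommSemiring R] {f : MvPolynomial σ R} {d e : ℕ}

lemma mkDerivation_eq_sum_mul_pderiv [Fintype σ] (v : σ → MvPolynomial σ R) (f : MvPolynomial σ R) :
    mkDerivation R v f = ∑ i, v i * pderiv i f := by
  classical
  have hsum : ∀ g, (∑ i, v i • pderiv (R := R) i) g = ∑ i, v i * pderiv i g := fun g => by
    rw [← Derivation.coeFnAddMonoidHom_apply, map_sum, Finset.sum_apply]
    rfl
  have heq : mkDerivation R v = ∑ i, v i • pderiv i := derivation_ext fun j => by
    rw [hsum, mkDerivation_X]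
    simp [pderiv_X, Pi.single_apply]
  rw [heq, hsum]

lemma isHomogeneous_mkDerivation [Finite σ] {v : σ → MvPolynomial σ R}
    (hv : ∀ i, (v i).IsHomogeneous e) (hf : f.IsHomogeneous d) :
    (mkDerivation R v f).IsHomogeneous (e + (d - 1)) := by
  cases nonempty_fintype σ
  rw [mkDerivation_eq_sum_mul_pderiv]
  exact IsHomogeneous.sum _ _ _ fun i _ => (hv i).mul hf.pderiv

/-- The directional derivative `∑ aᵢ ∂ᵢ`. -/
noncomputable def dirDeriv (a : σ → R) : Derivation R (MvPolynomial σ R) (MvPolynomial σ R) :=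
  mkDerivation R fun i => C (a i)

lemma isHomogeneous_dirDeriv [Finite σ] (a : σ → R) (hf : f.IsHomogeneous d) :
    (dirDeriv a f).IsHomogeneous (d - 1) := by
  have := isHomogeneous_mkDerivation (fun i => isHomogeneous_C σ (a i)) hf
  rwa [zero_add] at this

lemma dirDeriv_apply [Fintype σ] (a : σ → R) (f : MvPolynomial σ R) :
    dirDeriv a f = ∑ i, C (a i) * pderiv i f :=
  mkDerivation_eq_sum_mul_pderiv _ f

end Derivations

section LineRestrict

variable {σ R : Type*} [CommSemiring R] {f : MvPolynomial σ R} {d : ℕ} (b a : σ → R)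

/-- The restriction `f ↦ f (b + X • a)` of polynomials to a parametrised line. The point at
infinity `a` of the line is recorded by the coefficient of degree `deg f`. -/
noncomputable def lineRestrict : MvPolynomial σ R →ₐ[R] Polynomial R :=
  aeval fun i => Polynomial.C (b i) + Polynomial.C (a i) * Polynomial.X

@[simp]
lemma lineRestrict_X (i : σ) :
    lineRestrict b a (X i) = Polynomial.C (b i) + Polynomial.C (a i) * Polynomial.X :=
  aeval_X _ i

lemma lineRestrict_C (c : R) : lineRestrict b a (C c) = Polynomial.C c :=
  aeval_C _ c

lemma eval_lineRestrict (f : MvPolynomial σ R) (t : R) :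
    (lineRestrict b a f).eval t = eval (b + t • a) f := by
  have heq : (Polynomial.aeval t).comp (lineRestrict b a) = aeval (b + t • a) :=
    algHom_ext fun i => by simp [mul_comm t]
  simpa [aeval_eq_eval] using DFunLike.congr_fun heq f

lemma natDegree_lineRestrict_le (hf : f.totalDegree ≤ d) :
    (lineRestrict b a f).natDegree ≤ d := by
  have := aeval_natDegree_le f hf
    (fun i => Polynomial.C (b i) + Polynomial.C (a i) * Polynomial.X)
    (n := 1) fun i => by compute_degree
  rwa [mul_one] at this

lemma coeff_lineRestrict_monomial_one (e : σ →₀ ℕ) :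
    (lineRestrict b a (monomial e 1)).coeff e.degree = eval a (monomial e 1) := by
  have hdeg : ∀ e : σ →₀ ℕ, (lineRestrict b a (monomial e 1)).natDegree ≤ e.degree := fun e =>
    natDegree_lineRestrict_le b a (totalDegree_monomial_le e 1)
  induction e using Finsupp.induction_linear with
  | zero => simp [← C_apply]
  | add e e' he he' =>
    rw [← mul_one (1 : R), ← monomial_mul, map_mul, map_mul, map_add,
      Polynomial.coeff_mul_add_eq_of_natDegree_le (hdeg e) (hdeg e'), he, he']
  | single i k =>
    have := Polynomial.coeff_pow_of_natDegree_le (m := k) (n := 1)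
      (p := Polynomial.C (b i) + Polynomial.C (a i) * Polynomial.X) (by compute_degree)
    simpa [← X_pow_eq_monomial] using this

lemma coeff_lineRestrict (hf : f.IsHomogeneous d) : (lineRestrict b a f).coeff d = eval a f := by
  rw [f.as_sum, map_sum, map_sum, Polynomial.finsetSum_coeff]
  refine Finset.sum_congr rfl fun e he => ?_
  have hdeg : e.degree = d := (hf.degree_eq_sum_deg_support he).symm
  rw [← mul_one (coeff e f), ← C_mul_monomial, map_mul, map_mul, lineRestrict_C,
    Polynomial.coeff_C_mul, ← hdeg, coeff_lineRestrict_monomial_one, eval_C]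

lemma derivative_lineRestrict (f : MvPolynomial σ R) :
    Polynomial.derivative (lineRestrict b a f) = lineRestrict b a (dirDeriv a f) := by
  induction f using MvPolynomial.induction_on with
  | C c => simp [dirDeriv]
  | add f g hf hg => simp only [map_add, hf, hg]
  | mul_X f i hf =>
    simp only [map_mul, Polynomial.derivative_mul, hf, Derivation.leibniz, dirDeriv,
      mkDerivation_X, smul_eq_mul, map_add, lineRestrict_X, lineRestrict_C]
    simp
    ring

end LineRestrict

section Frobenius

variable {σ F : Type*} [Field F] [Fintype F] {f : MvPolynomial σ F} {d : ℕ}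

/-- The derivation `∑ xᵢ^q ∂ᵢ` with `q = #F`. Evaluated at a smooth geometric point of the
hypersurface `f = 0`, `frobeniusDerivation f` vanishes if and only if the Frobenius image of the
point lies in the tangent hyperplane. -/
noncomputable def frobeniusDerivation : Derivation F (MvPolynomial σ F) (MvPolynomial σ F) :=
  mkDerivation F fun i => X i ^ Fintype.card F

lemma isHomogeneous_frobeniusDerivation [Finite σ] (hf : f.IsHomogeneous d) :
    (frobeniusDerivation f).IsHomogeneous (Fintype.card F + (d - 1)) :=
  isHomogeneous_mkDerivation (fun i => isHomogeneous_X_pow i _) hf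

lemma lineRestrict_frobeniusDerivation [Finite σ] (b a : σ → F) (hf : f.IsHomogeneous d) :
    lineRestrict b a (frobeniusDerivation f) = (d : Polynomial F) * lineRestrict b a f +
      (Polynomial.X ^ Fintype.card F - Polynomial.X) *
        Polynomial.derivative (lineRestrict b a f) := by
  cases nonempty_fintype σ
  have hfrob : ∀ i, lineRestrict b a (X i) ^ Fintype.card F =
      lineRestrict b a (X i) +
        (Polynomial.X ^ Fintype.card F - Polynomial.X) * Polynomial.C (a i) := fun i => by
    rw [← FiniteField.expand_card]
    simp only [lineRestrict_X, map_add, map_mul, Polynomial.expand_C, Polynomial.expand_X]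
    ring
  have heuler := congrArg (lineRestrict b a) hf.sum_X_mul_pderiv
  rw [map_nsmul, nsmul_eq_mul] at heuler
  rw [← heuler, derivative_lineRestrict, dirDeriv_apply, frobeniusDerivation,
    mkDerivation_eq_sum_mul_pderiv]
  simp only [map_sum, map_mul, map_pow, hfrob, lineRestrict_C, Finset.mul_sum,
    ← Finset.sum_add_distrib]
  exact Finset.sum_congr rfl fun i _ => by ring

end Frobenius

section LinearForms

variable {σ F : Type*} [Fintype σ] [Field F]

/-- The linear form with coefficients in `F` given by a functional on `σ → F`. -/
noncomputable def linearForm [DecidableEq σ] (φ : Dual F (σ → F)) : MvPolynomial σ F :=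
  ∑ i, C (φ (Pi.single i 1)) * X i

variable [DecidableEq σ] (φ : Dual F (σ → F))

lemma isHomogeneous_linearForm : (linearForm φ).IsHomogeneous 1 :=
  IsHomogeneous.sum _ _ _ fun i _ => isHomogeneous_C_mul_X _ i

lemma eval_linearForm (x : σ → F) : eval x (linearForm φ) = φ x := by
  have hx : x = ∑ i, x i • Pi.single i (1 : F) := pi_eq_sum_univ' x
  conv_rhs => rw [hx]
  simp [linearForm, mul_comm]

lemma lineRestrict_linearForm (b a : σ → F) :
    lineRestrict b a (linearForm φ) = Polynomial.C (φ b) + Polynomial.C (φ a) * Polynomial.X := by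
  simp only [linearForm, map_sum, map_mul, lineRestrict_C, lineRestrict_X, mul_add,
    Finset.sum_add_distrib]
  rw [← eval_linearForm φ b, ← eval_linearForm φ a]
  simp [linearForm, Finset.sum_mul, mul_assoc]

variable {φ}

lemma linearForm_ne_zero (hφ : φ ≠ 0) : linearForm φ ≠ 0 := fun h =>
  hφ <| LinearMap.ext fun x => by rw [← eval_linearForm, h, map_zero, LinearMap.zero_apply]

lemma irreducible_linearForm (hφ : φ ≠ 0) : Irreducible (linearForm φ) := by
  refine irreducible_of_totalDegree_eq_one
    ((isHomogeneous_linearForm φ).totalDegree (linearForm_ne_zero hφ)) fun c hc => ?_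
  obtain ⟨e, he⟩ := ne_zero_iff.mp (linearForm_ne_zero hφ)
  exact isUnit_of_dvd_unit (hc e) (isUnit_iff_ne_zero.mpr he)

end LinearForms

lemma exists_dual_apply_eq {ι F V : Type*} [Field F] [AddCommGroup V] [Module F V] {v : ι → V}
    (hv : LinearIndependent F v) (c : ι → F) : ∃ φ : Dual F V, ∀ i, φ (v i) = c i := by
  obtain ⟨s, hs⟩ := LinearMap.exists_leftInverse_of_injective _
    (LinearMap.ker_eq_bot.mpr hv)
  refine ⟨Finsupp.linearCombination F c ∘ₗ s, fun i => ?_⟩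
  have := DFunLike.congr_fun hs (Finsupp.single i 1)
  simp only [LinearMap.comp_apply, Finsupp.linearCombination_single, one_smul,
    LinearMap.id_apply] at this
  simp [this]

section LineResidue

variable {σ F : Type*} [Field F] {b a : σ → F} {p : Polynomial F}

lemma exists_isHomogeneous_lineRestrict_eq [Finite σ] (hba : LinearIndependent F ![b, a])
    {r : Polynomial F} {k : ℕ} (hr : r.natDegree ≤ k) :
    ∃ z : MvPolynomial σ F, z.IsHomogeneous k ∧ lineRestrict b a z = r := by
  classical
  have := Fintype.ofFinite σ
  obtain ⟨φ, hφ⟩ := exists_dual_apply_eq hba ![1, 0]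
  obtain ⟨ψ, hψ⟩ := exists_dual_apply_eq hba ![0, 1]
  have hφ_one : lineRestrict b a (linearForm φ) = 1 := by
    have hφb : φ b = 1 := hφ 0
    have hφa : φ a = 0 := hφ 1
    simp [lineRestrict_linearForm, hφb, hφa]
  have hψ_X : lineRestrict b a (linearForm ψ) = Polynomial.X := by
    have hψb : ψ b = 0 := hψ 0
    have hψa : ψ a = 1 := hψ 1
    simp [lineRestrict_linearForm, hψb, hψa]
  refine ⟨∑ j ∈ Finset.range (k + 1),
    C (r.coeff j) * (linearForm ψ ^ j * linearForm φ ^ (k - j)), IsHomogeneous.sum _ _ _ ?_, ?_⟩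
  · intro j hj
    have := ((isHomogeneous_linearForm ψ).pow j).mul ((isHomogeneous_linearForm φ).pow (k - j))
    rw [one_mul, one_mul, Nat.add_sub_cancel' (Finset.mem_range_succ_iff.mp hj)] at this
    exact this.C_mul _
  · simp only [map_sum, map_mul, map_pow, lineRestrict_C, hφ_one, hψ_X, one_pow, mul_one]
    exact (r.as_sum_range_C_mul_X_pow' (Nat.lt_succ_of_le hr)).symm

variable (b a p) in
/-- The restriction to a parametrised line followed by reduction modulo `p`: evaluation on the
subscheme of the line cut out by `p`. -/
noncomputable def lineResidue : MvPolynomial σ F →ₐ[F] Polynomial F ⧸ Ideal.span {p} :=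
  (Ideal.Quotient.mkₐ F _).comp (lineRestrict b a)

lemma lineResidue_eq_zero_iff {f : MvPolynomial σ F} :
    lineResidue b a p f = 0 ↔ p ∣ lineRestrict b a f :=
  Ideal.Quotient.eq_zero_iff_dvd _ _

lemma isUnit_lineResidue {f : MvPolynomial σ F} (hf : IsCoprime p (lineRestrict b a f)) :
    IsUnit (lineResidue b a p f) := by
  obtain ⟨u, v, huv⟩ := hf
  refine IsUnit.of_mul_eq_one_right (Ideal.Quotient.mk _ v) ?_
  change Ideal.Quotient.mk _ v * Ideal.Quotient.mk _ (lineRestrict b a f) = 1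
  rw [← map_mul, ← map_one (Ideal.Quotient.mk _), Ideal.Quotient.mk_eq_mk_iff_sub_mem,
    Ideal.mem_span_singleton]
  exact ⟨-u, by linear_combination huv⟩

lemma surjectiveOnForms_lineResidue [Finite σ] (hba : LinearIndependent F ![b, a]) (hp : p ≠ 0) :
    SurjectiveOnForms (lineResidue b a p).toLinearMap := by
  refine ⟨p.natDegree, fun k hk => Submodule.eq_top_iff'.mpr fun v => ?_⟩
  obtain ⟨r, rfl⟩ := Ideal.Quotient.mk_surjective v
  obtain ⟨z, hz, hzr⟩ := exists_isHomogeneous_lineRestrict_eq hba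
    ((Polynomial.natDegree_le_natDegree (Polynomial.degree_mod_lt r hp).le).trans hk)
  refine ⟨z, hz, ?_⟩
  change Ideal.Quotient.mk _ (lineRestrict b a z) = _
  rw [hzr, Ideal.Quotient.mk_eq_mk_iff_sub_mem, Ideal.mem_span_singleton]
  exact ⟨-(r / p), by linear_combination EuclideanDomain.div_add_mod r p⟩

end LineResidue

section Lines

variable {F : Type*} [Field F] {f g : MvPolynomial (Fin 3) F} {m n : ℕ}

lemma sum_natDegree_le_mul {ι : Type*} [Fintype ι] {b a : ι → Fin 3 → F} {p : ι → Polynomial F}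
    (hf : f.IsHomogeneous m) (hg : g.IsHomogeneous n) (hf0 : f ≠ 0) (hg0 : g ≠ 0)
    (hfg : IsRelPrime f g) (hba : ∀ i, LinearIndependent F ![b i, a i]) (hp : ∀ i, p i ≠ 0)
    (hsep : ∀ i j, i ≠ j → ∃ (e : ℕ) (w : MvPolynomial (Fin 3) F), w.IsHomogeneous e ∧
      IsCoprime (p i) (lineRestrict (b i) (a i) w) ∧ p j ∣ lineRestrict (b j) (a j) w)
    (hpf : ∀ i, p i ∣ lineRestrict (b i) (a i) f)
    (hpg : ∀ i, p i ∣ lineRestrict (b i) (a i) g) : ∑ i, (p i).natDegree ≤ m * n := by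
  have hbezout := sum_finrank_le_mul (ρ := fun i => lineResidue (b i) (a i) (p i)) hf hg hf0 hg0 hfg
    (fun i => surjectiveOnForms_lineResidue (hba i) (hp i))
    (fun i j hij => by
      obtain ⟨e, w, hw, hcop, hdvd⟩ := hsep i j hij
      exact ⟨e, w, hw, isUnit_lineResidue hcop, lineResidue_eq_zero_iff.mpr hdvd⟩)
    (fun i => lineResidue_eq_zero_iff.mpr (hpf i)) (fun i => lineResidue_eq_zero_iff.mpr (hpg i))
  simpa only [finrank_quotient_span_eq_natDegree] using hbezout

lemma exists_linearForm_dvd_of_lineRestrict_eq_zero {b a : Fin 3 → F} (hf : f.IsHomogeneous m)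
    (hf0 : f ≠ 0) (hba : LinearIndependent F ![b, a]) (hline : lineRestrict b a f = 0) :
    ∃ φ : Dual F (Fin 3 → F), φ ≠ 0 ∧ linearForm φ ∣ f := by
  have hspan : Submodule.span F (Set.range ![b, a]) < ⊤ := by
    refine Submodule.lt_top_of_finrank_lt_finrank ?_
    rw [finrank_span_eq_card hba, Fintype.card_fin, finrank_fin_fun]
    norm_num
  obtain ⟨φ, hφ0, hφ⟩ := Submodule.exists_le_ker_of_lt_top _ hspan
  have hφb : φ b = 0 := hφ (Submodule.subset_span ⟨0, rfl⟩)
  have hφa : φ a = 0 := hφ (Submodule.subset_span ⟨1, rfl⟩)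
  refine ⟨φ, hφ0, by_contra fun hndvd => ?_⟩
  -- `X ^ (m + 1)` divides both restrictions, against the Bézout bound `1 * m`.
  have hbezout := sum_natDegree_le_mul (ι := Unit) (b := fun _ => b) (a := fun _ => a)
    (p := fun _ => Polynomial.X ^ (m + 1)) (isHomogeneous_linearForm φ) hf (linearForm_ne_zero hφ0)
    hf0 ((irreducible_linearForm hφ0).isRelPrime_iff_not_dvd.mpr hndvd) (fun _ => hba)
    (fun _ => pow_ne_zero _ Polynomial.X_ne_zero) (fun i j hij => (hij rfl).elim)
    (fun _ => by simp [lineRestrict_linearForm, hφb, hφa]) (fun _ => by simp [hline])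
  simp at hbezout

/-- The hypersurface `f = 0` has no component which is a hyperplane defined over the
coefficient field. -/
def NoLinearFactor {σ R : Type*} [CommSemiring R] (f : MvPolynomial σ R) : Prop :=
  ∀ l : MvPolynomial σ R, l ≠ 0 → l.IsHomogeneous 1 → ¬ l ∣ f

lemma NoLinearFactor.of_dvd {σ R : Type*} [CommSemiring R] {f g : MvPolynomial σ R}
    (hg : NoLinearFactor g) (hfg : f ∣ g) : NoLinearFactor f :=
  fun l hl0 hl hlf => hg l hl0 hl (hlf.trans hfg)

lemma NoLinearFactor.ne_zero {σ R : Type*} [Nonempty σ] [CommSemiring R] [Nontrivial R]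
    {f : MvPolynomial σ R} (hf : NoLinearFactor f) : f ≠ 0 := by
  rintro rfl
  obtain ⟨i⟩ := ‹Nonempty σ›
  exact hf (X i) (X_ne_zero i) (isHomogeneous_X R i) (dvd_zero _)

lemma NoLinearFactor.lineRestrict_ne_zero {b a : Fin 3 → F} (hlin : NoLinearFactor f)
    (hf : f.IsHomogeneous m) (hba : LinearIndependent F ![b, a]) : lineRestrict b a f ≠ 0 :=
  fun hline =>
    have ⟨φ, hφ0, hdvd⟩ := exists_linearForm_dvd_of_lineRestrict_eq_zero hf hlin.ne_zero hba hline
    hlin _ (linearForm_ne_zero hφ0) (isHomogeneous_linearForm φ) hdvd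

end Lines

section Pencil

open Projectivization
open scoped LinearAlgebra.Projectivization

variable {F V : Type*} [Field F] [AddCommGroup V] [Module F V] {φ : Dual F V} {a : V}

lemma linearIndependent_pair_of_apply_eq {x : V} (hφ : φ a = 1) (hx0 : x ≠ 0) (hx : φ x = 0) :
    LinearIndependent F ![x, a] := by
  refine LinearIndependent.pair_iff.mpr fun s t hst => ?_
  have ht : t = 0 := by simpa [hx, hφ] using congrArg φ hst
  exact ⟨by simpa [ht, hx0] using hst, ht⟩

lemma linearIndependent_rep_pair (hφ : φ a = 1) (L : ℙ F (LinearMap.ker φ)) :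
    LinearIndependent F ![(L.rep : V), a] :=
  linearIndependent_pair_of_apply_eq hφ (by simpa using L.rep_nonzero) L.rep.2

lemma exists_dual_apply_eq_zero_of_ne (hφ : φ a = 1) {L M : ℙ F (LinearMap.ker φ)} (hLM : L ≠ M) :
    ∃ ψ : Dual F V, ψ a = 0 ∧ ψ M.rep = 0 ∧ ψ L.rep = 1 := by
  obtain ⟨χ, hχ⟩ := exists_dual_apply_eq (linearIndependent_pair_iff_ne.mpr hLM) ![1, 0]
  obtain ⟨ψ, hψ⟩ := LinearMap.exists_extend χ
  have hrestrict : ∀ x : LinearMap.ker φ, (ψ - ψ a • φ) x = χ x := fun x => by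
    simp [← hψ, LinearMap.mem_ker.mp x.2]
  exact ⟨ψ - ψ a • φ, by simp [hφ], (hrestrict _).trans (hχ 1), (hrestrict _).trans (hχ 0)⟩

/-- The affine part of the pencil of lines through the point `a`: the lines are indexed by the
points `L` of the hyperplane `φ = 0`, which does not contain `a`, and the points other than `a` of
the line through `L` are parametrised by `t ↦ L + t • a`. -/
noncomputable def pencilPoint (hφ : φ a = 1) (x : Σ _ : ℙ F (LinearMap.ker φ), F) : ℙ F V :=
  mk F (x.1.rep + x.2 • a) fun h => by
    simpa using (LinearIndependent.pair_iff.mp (linearIndependent_rep_pair hφ x.1) 1 x.2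
      (by simpa using h)).1

lemma pencilPoint_injective (hφ : φ a = 1) : Function.Injective (pencilPoint hφ) := by
  rintro ⟨L, s⟩ ⟨M, t⟩ hLM
  obtain ⟨c, hc⟩ := (mk_eq_mk_iff' F _ _ _ _).mp hLM
  have hφrep : ∀ L : ℙ F (LinearMap.ker φ), φ L.rep = 0 := fun L => L.rep.2
  have hst : c * t = s := by simpa [hφrep, hφ] using congrArg φ hc
  have hrep : c • M.rep = L.rep := Subtype.ext <| by
    simpa [← hst, mul_smul, smul_add] using hc
  obtain rfl : L = M := by
    rw [← L.mk_rep, ← M.mk_rep]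
    exact (mk_eq_mk_iff' F _ _ _ _).mpr ⟨c, hrep⟩
  obtain rfl : c = 1 := smul_left_injective F L.rep_nonzero (by simpa using hrep)
  rw [← hst, one_mul]

lemma range_pencilPoint (hφ : φ a = 1) (ha0 : a ≠ 0) :
    Set.range (pencilPoint hφ) = {mk F a ha0}ᶜ := by
  refine Set.Subset.antisymm ?_ fun P hP => ?_
  · rintro _ ⟨⟨L, t⟩, rfl⟩ hmem
    obtain ⟨c, hc⟩ := (mk_eq_mk_iff' F _ _ _ _).mp hmem
    have := LinearIndependent.pair_iff.mp (linearIndependent_rep_pair hφ L) 1 (t - c)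
      (by rw [sub_smul, hc]; simp)
    exact one_ne_zero this.1
  · let w : LinearMap.ker φ := ⟨P.rep - φ P.rep • a, by simp [hφ]⟩
    have hw0 : w ≠ 0 := fun hw0 => hP <| by
      rw [Set.mem_singleton_iff, ← P.mk_rep]
      exact (mk_eq_mk_iff' F _ _ _ _).mpr
        ⟨φ P.rep, (sub_eq_zero.mp (congrArg Subtype.val hw0)).symm⟩
    obtain ⟨c, hc⟩ := exists_smul_eq_mk_rep F w hw0
    refine ⟨⟨mk F w hw0, c * φ P.rep⟩, ?_⟩
    conv_rhs => rw [← P.mk_rep]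
    refine (mk_eq_mk_iff' F _ _ _ _).mpr ⟨c, ?_⟩
    have hcoe := congrArg Subtype.val hc
    simp only [w, Submodule.coe_smul, Units.smul_def] at hcoe
    rw [← hcoe, mul_smul, smul_sub, sub_add_cancel]

end Pencil

section PointCount

open Projectivization
open scoped LinearAlgebra.Projectivization

variable {F : Type} [Field F] {n d : ℕ} {f g : MvPolynomial (Fin n) F}

lemma mk_mem_hypersurfacePts_iff (hf : f.IsHomogeneous d) {x : Fin n → F} (hx : x ≠ 0) :
    mk F x hx ∈ hypersurfacePts f ↔ eval x f = 0 := by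
  obtain ⟨c, hc⟩ := exists_smul_eq_mk_rep F x hx
  rw [hypersurfacePts, Set.mem_ofPred_eq, ← hc, Units.smul_def, eval_smul_of_isHomogeneous_s3 hf]
  simp

lemma ncard_hypersurfacePts_mul_le (f g : MvPolynomial (Fin n) F) :
    (hypersurfacePts (f * g)).ncard ≤ (hypersurfacePts f).ncard + (hypersurfacePts g).ncard := by
  have hunion : hypersurfacePts (f * g) = hypersurfacePts f ∪ hypersurfacePts g :=
    Set.ext fun P => by simp [hypersurfacePts]
  rw [hunion]
  exact Set.ncard_union_le _ _

variable [DecidableEq F] {φ : Dual F (Fin n → F)} {a : Fin n → F}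
  [Fintype (ℙ F (LinearMap.ker φ))]

lemma ncard_hypersurfacePts_sdiff_singleton (hφ : φ a = 1) (ha0 : a ≠ 0) (hf : f.IsHomogeneous d)
    (hline : ∀ L : ℙ F (LinearMap.ker φ), lineRestrict L.rep a f ≠ 0) :
    (hypersurfacePts f \ {mk F a ha0}).ncard =
      ∑ L : ℙ F (LinearMap.ker φ), (lineRestrict (L.rep : Fin n → F) a f).roots.toFinset.card := by
  have hset : hypersurfacePts f \ {mk F a ha0} = pencilPoint hφ ''
      (Finset.univ.sigma fun L : ℙ F (LinearMap.ker φ) =>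
        (lineRestrict (L.rep : Fin n → F) a f).roots.toFinset) := by
    rw [Set.sdiff_eq, ← range_pencilPoint hφ ha0, ← Set.image_preimage_eq_inter_range]
    congr 1
    ext ⟨L, t⟩
    simp [pencilPoint, mk_mem_hypersurfacePts_iff hf, hline L, eval_lineRestrict]
  rw [hset, Set.ncard_image_of_injective _ (pencilPoint_injective hφ), Set.ncard_coe_finset,
    Finset.card_sigma]

end PointCount

section SplitPart

open Polynomial (derivative)

variable {F : Type*} [Field F] [Fintype F] [DecidableEq F] {h : Polynomial F}

lemma card_roots_toFinset_of_dvd_X_pow_card_sub_X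
    (hdvd : h ∣ Polynomial.X ^ Fintype.card F - Polynomial.X) :
    h.roots.toFinset.card = h.natDegree := by
  have hX0 : (Polynomial.X ^ Fintype.card F - Polynomial.X : Polynomial F) ≠ 0 :=
    FiniteField.X_pow_card_sub_X_ne_zero F Fintype.one_lt_card
  have hroots := FiniteField.roots_X_pow_card_sub_X F
  have hsplits : (Polynomial.X ^ Fintype.card F - Polynomial.X : Polynomial F).Splits := by
    rw [Polynomial.splits_iff_card_roots, hroots,
      FiniteField.X_pow_card_sub_X_natDegree_eq F Fintype.one_lt_card]
    rfl
  have hnodup : h.roots.Nodup := Multiset.nodup_of_le (Polynomial.roots.le_of_dvd hX0 hdvd)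
    (hroots ▸ Finset.univ.nodup)
  rw [Multiset.toFinset_card_of_nodup hnodup, (hsplits.of_dvd hX0 hdvd).natDegree_eq_card_roots]

lemma natDegree_le_natDegree_gcd_derivative_add_card_roots (h0 : h ≠ 0)
    (hdvd : h ∣ (Polynomial.X ^ Fintype.card F - Polynomial.X) * derivative h) :
    h.natDegree ≤
      (EuclideanDomain.gcd h (derivative h)).natDegree + h.roots.toFinset.card := by
  have hbezout := EuclideanDomain.gcd_eq_gcd_ab h (derivative h)
  have hg0 : EuclideanDomain.gcd h (derivative h) ≠ 0 := fun hg =>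
    h0 (EuclideanDomain.gcd_eq_zero_iff.mp hg).1
  obtain ⟨u, hu⟩ := EuclideanDomain.gcd_dvd_left h (derivative h)
  obtain ⟨v, hv⟩ := EuclideanDomain.gcd_dvd_right h (derivative h)
  set g := EuclideanDomain.gcd h (derivative h)
  have hcop : IsCoprime u v := ⟨EuclideanDomain.gcdA h (derivative h),
    EuclideanDomain.gcdB h (derivative h), mul_left_cancel₀ hg0 <| by
    linear_combination -EuclideanDomain.gcdA h (derivative h) * hu -
      EuclideanDomain.gcdB h (derivative h) * hv - hbezout⟩
  have hu_dvd : u ∣ Polynomial.X ^ Fintype.card F - Polynomial.X := by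
    refine hcop.dvd_of_dvd_mul_right ((mul_dvd_mul_iff_left hg0).mp ?_)
    rwa [← hu, mul_left_comm, ← hv]
  have hroots : u.roots.toFinset ⊆ h.roots.toFinset := Multiset.toFinset_subset.mpr <|
    Multiset.subset_of_le <| Polynomial.roots.le_of_dvd h0 ⟨g, by rw [hu, mul_comm]⟩
  calc h.natDegree = g.natDegree + u.natDegree := by
        rw [hu, Polynomial.natDegree_mul hg0 (by rintro rfl; simp [h0] at hu)]
    _ = g.natDegree + u.roots.toFinset.card := by
        rw [card_roots_toFinset_of_dvd_X_pow_card_sub_X hu_dvd]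
    _ ≤ _ := by gcongr

end SplitPart

section Separability

variable {σ R : Type*} [CommRing R] {f : MvPolynomial σ R} {p : ℕ} [CharP R p]

lemma dvd_of_pderiv_eq_zero [NoZeroDivisors R] {i : σ} (hf : pderiv i f = 0) {e : σ →₀ ℕ}
    (he : e ∈ f.support) : p ∣ e i := by
  rcases Nat.eq_zero_or_pos (e i) with hei | hei
  · simp [hei]
  · have hsplit : e - Finsupp.single i 1 + Finsupp.single i 1 = e :=
      tsub_add_cancel_of_le (Finsupp.single_le_iff.mpr hei)
    have hcoeff := coeff_pderiv (i := i) f (e - Finsupp.single i 1)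
    rw [hf, hsplit, coeff_zero] at hcoeff
    have hcast := (mul_eq_zero.mp hcoeff.symm).resolve_left (mem_support_iff.mp he)
    rw [← CharP.cast_eq_zero_iff R p, ← hcast, ← Nat.cast_succ]
    congr 1
    simp only [Finsupp.coe_tsub, Pi.sub_apply, Finsupp.single_eq_same]
    lia

variable [Fact p.Prime] [PerfectRing R p]

lemma exists_pow_eq_of_forall_dvd (hf : ∀ e ∈ f.support, ∀ i, p ∣ e i) :
    ∃ g : MvPolynomial σ R, g ^ p = f := by
  refine ⟨∑ e ∈ f.support, monomial (e.mapRange (· / p) (Nat.zero_div p))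
    ((frobeniusEquiv R p).symm (coeff e f)), ?_⟩
  conv_rhs => rw [f.as_sum]
  rw [sum_pow_char]
  refine Finset.sum_congr rfl fun e he => ?_
  rw [monomial_pow, frobeniusEquiv_symm_pow_p]
  congr 2
  ext i
  simp [Nat.mul_div_cancel' (hf e he i)]

lemma exists_pderiv_ne_zero_of_irreducible {R : Type*} [CommRing R] [NoZeroDivisors R] (p : ℕ)
    [CharP R p] [Fact p.Prime] [PerfectRing R p] {f : MvPolynomial σ R} (hf : Irreducible f) :
    ∃ i, pderiv i f ≠ 0 := by
  by_contra! hzero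
  obtain ⟨g, rfl⟩ := exists_pow_eq_of_forall_dvd (p := p) fun e he i =>
    dvd_of_pderiv_eq_zero (hzero i) he
  exact not_irreducible_pow (Fact.out : p.Prime).ne_one hf

end Separability

section Bounds

open Projectivization
open scoped LinearAlgebra.Projectivization

lemma natCard_projectivization_ker {F : Type*} [Field F] [Finite F] {φ : Dual F (Fin 3 → F)}
    (hφ : φ ≠ 0) : Nat.card (ℙ F (LinearMap.ker φ)) = Nat.card F + 1 := by
  refine card_of_finrank_two F _ ?_
  have := Module.Dual.finrank_ker_add_one_of_ne_zero hφ
  rw [finrank_fin_fun] at this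
  lia

variable {F : Type} [Field F] [Fintype F] {f : MvPolynomial (Fin 3) F} {d : ℕ}

lemma NoLinearFactor.ncard_hypersurfacePts_le (hlin : NoLinearFactor f) (hf : f.IsHomogeneous d) :
    (hypersurfacePts f).ncard ≤ (d - 1) * (Fintype.card F + 1) + 1 := by
  classical
  rcases (hypersurfacePts f).eq_empty_or_nonempty with hempty | ⟨P, hP⟩
  · simp [hempty]
  obtain ⟨φ, hφ⟩ := Module.Projective.exists_dual_eq_one F P.rep_nonzero
  have hφ0 : φ ≠ 0 := by rintro rfl; simp at hφ
  have := Fintype.ofFinite (ℙ F (LinearMap.ker φ))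
  have hline : ∀ L : ℙ F (LinearMap.ker φ), lineRestrict L.rep P.rep f ≠ 0 := fun L =>
    hlin.lineRestrict_ne_zero hf (linearIndependent_rep_pair hφ L)
  have hroots : ∀ L : ℙ F (LinearMap.ker φ),
      (lineRestrict (L.rep : Fin 3 → F) P.rep f).roots.toFinset.card ≤ d - 1 := fun L =>
    (Multiset.toFinset_card_le _).trans <| (Polynomial.card_roots' _).trans <|
      Polynomial.natDegree_le_pred (natDegree_lineRestrict_le _ _ hf.totalDegree_le)
        ((coeff_lineRestrict _ _ hf).trans hP)
  have hsum := Finset.sum_le_sum fun L (_ : L ∈ Finset.univ) => hroots L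
  rw [← ncard_hypersurfacePts_sdiff_singleton hφ P.rep_nonzero hf hline, P.mk_rep,
    Set.ncard_sdiff_singleton_of_mem hP, Finset.sum_const, Finset.card_univ,
    ← Nat.card_eq_fintype_card, natCard_projectivization_ker hφ0, Nat.card_eq_fintype_card,
    smul_eq_mul, mul_comm] at hsum
  exact Nat.le_add_of_sub_le hsum

end Bounds

section StohrVoloch

lemma exists_linearIndependent_pair_of_two_lt_finrank {F V : Type*} [Field F] [AddCommGroup V]
    [Module F V] (hV : 2 < finrank F V) {x : V} (hx : x ≠ 0) (ψ : Dual F V) :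
    ∃ y, LinearIndependent F ![x, y] ∧ ψ y = 0 := by
  have := Module.finite_of_finrank_pos (zero_lt_two.trans hV)
  have hrank := ψ.finrank_range_add_finrank_ker
  have hrange := Submodule.finrank_le ψ.range
  rw [finrank_self] at hrange
  have hker : ¬ LinearMap.ker ψ ≤ Submodule.span F {x} := fun hle => by
    have := (Submodule.finrank_mono hle).trans_eq (finrank_span_singleton hx)
    lia
  obtain ⟨y, hy, hyx⟩ := SetLike.not_le_iff_exists.mp hker
  refine ⟨y, (LinearIndependent.pair_iff' hx).mpr fun c hc => hyx ?_, hy⟩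
  exact Submodule.mem_span_singleton.mpr ⟨c, hc⟩

lemma X_sq_dvd_lineRestrict {σ R : Type*} [CommSemiring R] {f : MvPolynomial σ R} {b a : σ → R}
    (hf : eval b f = 0) (hf' : eval b (dirDeriv a f) = 0) :
    Polynomial.X ^ 2 ∣ lineRestrict b a f := by
  have hcoeff : ∀ g, (lineRestrict b a g).coeff 0 = eval b g := fun g => by
    rw [Polynomial.coeff_zero_eq_eval_zero, eval_lineRestrict, zero_smul, add_zero]
  have hcoeff_one : (lineRestrict b a f).coeff 1 = eval b (dirDeriv a f) := by
    rw [← hcoeff, ← derivative_lineRestrict, Polynomial.coeff_derivative]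
    simp
  refine Polynomial.X_pow_dvd_iff.mpr fun k hk => ?_
  interval_cases k
  · rw [hcoeff, hf]
  · rw [hcoeff_one, hf']

variable {σ F : Type*} [Field F] {f : MvPolynomial σ F} {d : ℕ} {b a : σ → F}

lemma exists_linearIndependent_pair_eval_dirDeriv_eq_zero [Fintype σ]
    (hσ : 2 < Fintype.card σ) (f : MvPolynomial σ F) (hb : b ≠ 0) :
    ∃ a, LinearIndependent F ![b, a] ∧ eval b (dirDeriv a f) = 0 := by
  obtain ⟨a, hba, ha⟩ := exists_linearIndependent_pair_of_two_lt_finrank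
    (hσ.trans_eq (finrank_fintype_fun_eq_card F).symm) hb
    (∑ i, eval b (pderiv i f) • LinearMap.proj i)
  exact ⟨a, hba, by simpa [dirDeriv_apply, mul_comm] using ha⟩

lemma X_sq_dvd_lineRestrict_frobeniusDerivation [Finite σ] [Fintype F]
    (hf : f.IsHomogeneous d) (hdvd : Polynomial.X ^ 2 ∣ lineRestrict b a f) :
    Polynomial.X ^ 2 ∣ lineRestrict b a (frobeniusDerivation f) := by
  have hderiv : Polynomial.X ∣ Polynomial.derivative (lineRestrict b a f) := by
    simpa using Polynomial.pow_sub_one_dvd_derivative_of_pow_dvd hdvd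
  have hX : (Polynomial.X : Polynomial F) ∣ Polynomial.X ^ Fintype.card F - Polynomial.X :=
    dvd_sub (dvd_pow_self _ Fintype.card_ne_zero) dvd_rfl
  rw [lineRestrict_frobeniusDerivation b a hf]
  refine dvd_add (hdvd.mul_left _) ?_
  rw [pow_two]
  exact mul_dvd_mul hX hderiv

lemma two_mul_ncard_hypersurfacePts_le {F : Type} [Field F] [Fintype F]
    {f : MvPolynomial (Fin 3) F} (hirr : Irreducible f) (hf : f.IsHomogeneous d)
    (hclassical : ¬ f ∣ frobeniusDerivation f) :
    2 * (hypersurfacePts f).ncard ≤ d * (Fintype.card F + (d - 1)) := by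
  classical
  have := Fintype.ofFinite (hypersurfacePts f)
  choose a hba ha using fun P : hypersurfacePts f =>
    exists_linearIndependent_pair_eval_dirDeriv_eq_zero (by simp) f P.1.rep_nonzero
  have htangent : ∀ P : hypersurfacePts f,
      Polynomial.X ^ 2 ∣ lineRestrict P.1.rep (a P) f :=
    fun P => X_sq_dvd_lineRestrict P.2 (ha P)
  have hsep : ∀ P R : hypersurfacePts f, P ≠ R → ∃ (e : ℕ) (w : MvPolynomial (Fin 3) F),
      w.IsHomogeneous e ∧ IsCoprime (Polynomial.X ^ 2) (lineRestrict P.1.rep (a P) w) ∧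
        Polynomial.X ^ 2 ∣ lineRestrict R.1.rep (a R) w := fun P R hPR => by
    obtain ⟨φ, hφ⟩ := exists_dual_apply_eq
      (Projectivization.linearIndependent_pair_iff_ne.mpr (Subtype.coe_injective.ne hPR)) ![1, 0]
    have hφP : φ P.1.rep = 1 := hφ 0
    have hφR : φ R.1.rep = 0 := hφ 1
    refine ⟨1 * 2, linearForm φ ^ 2, (isHomogeneous_linearForm φ).pow 2, ?_, ?_⟩
    · rw [map_pow, lineRestrict_linearForm, hφP, map_one]
      exact IsCoprime.pow ⟨-Polynomial.C (φ (a P)), 1, by ring⟩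
    · rw [map_pow, lineRestrict_linearForm, hφR, map_zero, zero_add]
      exact pow_dvd_pow_of_dvd (dvd_mul_left _ _) 2
  have hbezout := sum_natDegree_le_mul hf (isHomogeneous_frobeniusDerivation hf) hirr.ne_zero
    (fun h => hclassical (h ▸ dvd_zero f)) (hirr.isRelPrime_iff_not_dvd.mpr hclassical) hba
    (fun _ => pow_ne_zero 2 Polynomial.X_ne_zero) hsep htangent
    fun P => X_sq_dvd_lineRestrict_frobeniusDerivation hf (htangent P)
  simpa [← Nat.card_eq_fintype_card, mul_comm] using hbezout

end StohrVoloch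

section FrobeniusNonclassical

open scoped LinearAlgebra.Projectivization

lemma exists_eval_ne_zero_and_eval_dirDeriv_ne_zero {σ F : Type*} [Finite σ] [Field F]
    [Fintype F] {f : MvPolynomial σ F} {d : ℕ} (hirr : Irreducible f) (hf : f.IsHomogeneous d)
    (hd : d + 1 ≤ Fintype.card F) : ∃ a, eval a f ≠ 0 ∧ dirDeriv a f ≠ 0 := by
  classical
  cases nonempty_fintype σ
  obtain ⟨p, hp⟩ := CharP.exists F
  have : Fact p.Prime := ⟨CharP.char_is_prime F p⟩
  obtain ⟨i, hi⟩ := exists_pderiv_ne_zero_of_irreducible p hirr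
  obtain ⟨e, he⟩ := ne_zero_iff.mp hi
  let φ : Dual F (σ → F) := ∑ j, coeff e (pderiv j f) • LinearMap.proj j
  have hφ : ∀ a, φ a = coeff e (dirDeriv a f) := fun a => by
    simp [φ, dirDeriv_apply, coeff_sum, mul_comm]
  have hφ0 : φ ≠ 0 := fun h => he <| by
    simpa [φ, Pi.single_apply] using DFunLike.congr_fun h (Pi.single i 1)
  have hmul : f * linearForm φ ≠ 0 := mul_ne_zero hirr.ne_zero (linearForm_ne_zero hφ0)
  obtain ⟨a, ha⟩ := not_forall.mp fun h => hmul <|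
    (hf.mul (isHomogeneous_linearForm φ)).eq_zero_of_forall_eval_eq_zero_of_le_card h (by simpa)
  rw [map_mul, eval_linearForm] at ha
  refine ⟨a, left_ne_zero_of_mul ha, fun h => right_ne_zero_of_mul ha ?_⟩
  rw [hφ, h, coeff_zero]

variable {F : Type} [Field F] {f : MvPolynomial (Fin 3) F} {d : ℕ}

lemma sum_natDegree_gcd_derivative_lineRestrict_le [DecidableEq F] {φ : Dual F (Fin 3 → F)}
    {a : Fin 3 → F} [Fintype (ℙ F (LinearMap.ker φ))] (hirr : Irreducible f)
    (hf : f.IsHomogeneous d) (hφ : φ a = 1) (hfa : eval a f ≠ 0) (hDf : dirDeriv a f ≠ 0) :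
    ∑ L : ℙ F (LinearMap.ker φ), (EuclideanDomain.gcd (lineRestrict (L.rep : Fin 3 → F) a f)
      (Polynomial.derivative (lineRestrict (L.rep : Fin 3 → F) a f))).natDegree ≤
        d * (d - 1) := by
  have hrel : IsRelPrime f (dirDeriv a f) := hirr.isRelPrime_iff_not_dvd.mpr fun hdvd => by
    have hle := le_degree_of_dvd hdvd hDf hf (isHomogeneous_dirDeriv a hf)
    obtain rfl : d = 0 := by lia
    rw [totalDegree_eq_zero_iff_eq_C.mp (Nat.le_zero.mp hf.totalDegree_le)] at hDf
    exact hDf ((dirDeriv a).map_algebraMap _)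
  have hline : ∀ L : ℙ F (LinearMap.ker φ), lineRestrict (L.rep : Fin 3 → F) a f ≠ 0 :=
    fun L h => hfa <| by rw [← coeff_lineRestrict L.rep a hf, h, Polynomial.coeff_zero]
  refine sum_natDegree_le_mul hf (isHomogeneous_dirDeriv a hf) hirr.ne_zero hDf hrel
    (linearIndependent_rep_pair hφ) (fun L h => hline L (EuclideanDomain.gcd_eq_zero_iff.mp h).1)
    (fun L M hLM => ?_) (fun L => EuclideanDomain.gcd_dvd_left _ _) fun L => ?_
  · obtain ⟨ψ, hψa, hψM, hψL⟩ := exists_dual_apply_eq_zero_of_ne hφ hLM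
    refine ⟨1, linearForm ψ, isHomogeneous_linearForm ψ, ?_, ?_⟩
    · simp [lineRestrict_linearForm, hψa, hψL, isCoprime_one_right]
    · simp [lineRestrict_linearForm, hψa, hψM]
  · rw [← derivative_lineRestrict]
    exact EuclideanDomain.gcd_dvd_right _ _

lemma mul_card_add_one_le_ncard_hypersurfacePts_add [Fintype F] (hirr : Irreducible f)
    (hf : f.IsHomogeneous d) (hd : d + 1 ≤ Fintype.card F)
    (hnonclassical : f ∣ frobeniusDerivation f) :
    d * (Fintype.card F + 1) ≤ (hypersurfacePts f).ncard + d * (d - 1) := by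
  classical
  obtain ⟨a, hfa, hDf⟩ := exists_eval_ne_zero_and_eval_dirDeriv_ne_zero hirr hf hd
  have ha0 : a ≠ 0 := by
    rintro rfl
    simp [dirDeriv_apply] at hDf
  obtain ⟨φ, hφ⟩ := Module.Projective.exists_dual_eq_one F ha0
  have hφ0 : φ ≠ 0 := by rintro rfl; simp at hφ
  have := Fintype.ofFinite (ℙ F (LinearMap.ker φ))
  have hcoeff : ∀ L : ℙ F (LinearMap.ker φ),
      (lineRestrict (L.rep : Fin 3 → F) a f).coeff d ≠ 0 := fun L => by
    rwa [coeff_lineRestrict _ _ hf]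
  have hline : ∀ L : ℙ F (LinearMap.ker φ), lineRestrict (L.rep : Fin 3 → F) a f ≠ 0 :=
    fun L h => hcoeff L (by rw [h, Polynomial.coeff_zero])
  have hdegree : ∀ L : ℙ F (LinearMap.ker φ), d ≤
      (EuclideanDomain.gcd (lineRestrict (L.rep : Fin 3 → F) a f)
        (Polynomial.derivative (lineRestrict (L.rep : Fin 3 → F) a f))).natDegree +
      (lineRestrict (L.rep : Fin 3 → F) a f).roots.toFinset.card := fun L => by
    refine (Polynomial.le_natDegree_of_ne_zero (hcoeff L)).trans
      (natDegree_le_natDegree_gcd_derivative_add_card_roots (hline L) ?_)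
    have hdvd := map_dvd (lineRestrict (L.rep : Fin 3 → F) a) hnonclassical
    rw [lineRestrict_frobeniusDerivation _ _ hf] at hdvd
    exact (dvd_add_right (dvd_mul_left _ _)).mp hdvd
  have hsum := Finset.sum_le_sum fun L (_ : L ∈ Finset.univ) => hdegree L
  have ha : Projectivization.mk F a ha0 ∉ hypersurfacePts f := by
    rwa [mk_mem_hypersurfacePts_iff hf]
  rw [Finset.sum_add_distrib, ← ncard_hypersurfacePts_sdiff_singleton hφ ha0 hf hline,
    Set.sdiff_singleton_eq_self ha, Finset.sum_const, Finset.card_univ,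
    ← Nat.card_eq_fintype_card, natCard_projectivization_ker hφ0, Nat.card_eq_fintype_card,
    smul_eq_mul] at hsum
  have := sum_natDegree_gcd_derivative_lineRestrict_le hirr hf hφ hfa hDf
  lia

end FrobeniusNonclassical

section Induction

variable {F : Type} [Field F] [Fintype F] {f g : MvPolynomial (Fin 3) F} {d m n : ℕ}

lemma ncard_hypersurfacePts_mul_le_of_le (hm : 0 < m) (hn : 0 < n)
    (hf : (hypersurfacePts f).ncard ≤ (m - 1) * Fintype.card F + 1)
    (hg : (hypersurfacePts g).ncard ≤ (n - 1) * Fintype.card F + 1) :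
    (hypersurfacePts (f * g)).ncard ≤ (m + n - 2) * Fintype.card F + 2 := by
  have hmn : m + n - 2 = (m - 1) + (n - 1) := by lia
  rw [hmn, add_mul]
  linarith [ncard_hypersurfacePts_mul_le f g]

lemma NoLinearFactor.ncard_hypersurfacePts_le_of_irreducible (hlin : NoLinearFactor f)
    (hirr : Irreducible f) (hf : f.IsHomogeneous d) (hd : 1 < d)
    (hdF : d * (d - 1) < Fintype.card F) :
    (hypersurfacePts f).ncard ≤ (d - 1) * Fintype.card F + 1 := by
  obtain ⟨k, rfl⟩ : ∃ k, d = k + 2 := ⟨d - 2, by lia⟩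
  by_cases hdvd : f ∣ frobeniusDerivation f
  · have hlower := mul_card_add_one_le_ncard_hypersurfacePts_add hirr hf
      (by simp only [Nat.add_succ_sub_one] at hdF; nlinarith) hdvd
    have hupper := hlin.ncard_hypersurfacePts_le hf
    simp only [Nat.add_succ_sub_one] at *
    nlinarith
  · have hupper := two_mul_ncard_hypersurfacePts_le hirr hf hdvd
    simp only [Nat.add_succ_sub_one] at *
    have hcard : (k + 2) * (k + 1) ≤ k * Fintype.card F + 2 := by
      rcases k.eq_zero_or_pos with rfl | hk
      · simp
      · nlinarith
    linarith

lemma NoLinearFactor.ncard_hypersurfacePts_le_mul_card_add_one (hlin : NoLinearFactor f)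
    (hf : f.IsHomogeneous d) (hd : 0 < d) (hdF : d * (d - 1) < Fintype.card F) :
    (hypersurfacePts f).ncard ≤ (d - 1) * Fintype.card F + 1 := by
  induction d using Nat.strong_induction_on generalizing f with
  | _ d ih =>
  by_cases hirr : Irreducible f
  · have hd1 : d ≠ 1 := by
      rintro rfl
      exact hlin f hlin.ne_zero hf dvd_rfl
    exact hlin.ncard_hypersurfacePts_le_of_irreducible hirr hf (by lia) hdF
  · obtain ⟨m, n, g, h, hm, hn, rfl, hg, hh, rfl⟩ :=
      exists_isHomogeneous_mul_of_not_irreducible hf hlin.ne_zero hd hirr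
    have hg' := ih m (by lia) (hlin.of_dvd (dvd_mul_right g h)) hg hm
      ((Nat.mul_le_mul (by lia) (by lia)).trans_lt hdF)
    have hh' := ih n (by lia) (hlin.of_dvd (dvd_mul_left h g)) hh hn
      ((Nat.mul_le_mul (by lia) (by lia)).trans_lt hdF)
    have hmn : m + n - 1 = (m + n - 2) + 1 := by lia
    rw [hmn, add_one_mul]
    linarith [ncard_hypersurfacePts_mul_le_of_le hm hn hg' hh', Fintype.card_pos (α := F)]

lemma NoLinearFactor.ncard_hypersurfacePts_le_of_not_irreducible (hlin : NoLinearFactor f)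
    (hirr : ¬ Irreducible f) (hf : f.IsHomogeneous d) (hd : 0 < d)
    (hdF : (d - 1) * (d - 2) < Fintype.card F) :
    (hypersurfacePts f).ncard ≤ (d - 2) * Fintype.card F + 2 := by
  obtain ⟨m, n, g, h, hm, hn, rfl, hg, hh, rfl⟩ :=
    exists_isHomogeneous_mul_of_not_irreducible hf hlin.ne_zero hd hirr
  refine ncard_hypersurfacePts_mul_le_of_le hm hn ?_ ?_
  · exact (hlin.of_dvd (dvd_mul_right g h)).ncard_hypersurfacePts_le_mul_card_add_one hg hm
      ((Nat.mul_le_mul (by lia) (by lia)).trans_lt hdF)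
  · exact (hlin.of_dvd (dvd_mul_left h g)).ncard_hypersurfacePts_le_mul_card_add_one hh hn
      ((Nat.mul_le_mul (by lia) (by lia)).trans_lt hdF)

end Induction

/-- If `q > 3` is a prime power and `C` is a plane curve of degree `q+1` over `GF(q²)`
with no `GF(q²)`-linear components, whose number `N` of rational points satisfies
`N < q³ + 1`, then `N ≤ q³ - q² + 2`. -/
theorem stmt_3 (q : ℕ) (hq : ∃ p k : ℕ, p.Prime ∧ 0 < k ∧ q = p ^ k) (hq3 : 3 < q)
    (F : Type) [Field F] [Fintype F] (hcardF : Fintype.card F = q ^ 2)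
    (f : MvPolynomial (Fin 3) F) (hf0 : f ≠ 0) (hfdeg : f.IsHomogeneous (q + 1))
    (hnolin : ∀ l : MvPolynomial (Fin 3) F, l ≠ 0 → l.IsHomogeneous 1 → ¬ l ∣ f)
    (N : ℕ) (hN : N = (hypersurfacePts f).ncard) (hlt : N < q ^ 3 + 1) :
    N ≤ q ^ 3 - q ^ 2 + 2 := by
  obtain ⟨r, rfl⟩ : ∃ r, q = r + 4 := ⟨q - 4, by lia⟩
  have hlin : NoLinearFactor f := hnolin
  suffices N + (r + 4) ^ 2 ≤ (r + 4) ^ 3 + 2 by lia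
  by_cases hirr : Irreducible f
  · by_cases hdvd : f ∣ frobeniusDerivation f
    · have hlower := mul_card_add_one_le_ncard_hypersurfacePts_add hirr hfdeg (by nlinarith) hdvd
      rw [hcardF, ← hN, Nat.add_sub_cancel] at hlower
      linarith
    · have hupper := two_mul_ncard_hypersurfacePts_le hirr hfdeg hdvd
      rw [hcardF, ← hN, Nat.add_sub_cancel] at hupper
      -- The two bounds differ by `(q - 4) * (q ^ 2 - 1) / 2`.
      nlinarith
  · have hdegree : (r + 4) * (r + 3) < Fintype.card F := by
      rw [hcardF]
      nlinarith
    have hupper := hlin.ncard_hypersurfacePts_le_of_not_irreducible hirr hfdeg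
      (Nat.succ_pos _) hdegree
    rw [hcardF, ← hN, show r + 4 + 1 - 2 = r + 3 from rfl] at hupper
    linarith
end

section
/- Let C be a plane projective curve of degree 4 defined over GF(9) having no GF(9)-linear components. If the number N of GF(9)-rational points of C satisfies N < 28 (i.e., N < q^3 + 1 with q = 3), then N <= 24. -/
open MvPolynomial Module

/-! Let `q` be odd and let `f` be a quartic form over the field with `q` elements, without linear
components. If `f` is reducible, it is a product of two conics, with at most `2 q + 4` points in
all. If the curve has a singular rational point, the lines through it carry at most two further
points each, which makes at most `2 q + 3`. Otherwise, following Stöhr and Voloch, one intersects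
the curve with its Frobenius polar `∑ i, X i ^ q * ∂f/∂X i`, of degree `q + 3`: the two curves have
a common tangent vector at every rational point, so Bézout's theorem gives `2 N ≤ 4 (q + 3)`.

Bézout's theorem does not apply when `f` divides its Frobenius polar. On a line through a rational
point, the restriction `g` of `f` then divides `(X ^ q - X) g'`, which makes `g` split with roots in
the field, and a comparison of leading coefficients shows that its degree modulo the characteristic
is the same on all lines. Hence a tangent line meets the curve only at its point of contact and a
secant line meets it in four rational points, so that `N = 0` or `N = 3 q + 1`. -/

open scoped Polynomial LinearAlgebra.Projectivization

namespace PlaneCurve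

section Calculus

variable {R σ : Type*} [CommRing R] {f : MvPolynomial σ R} {n : ℕ}

theorem eval_smul_of_isHomogeneous (hf : f.IsHomogeneous n) (a : R) (v : σ → R) :
    eval (a • v) f = a ^ n * eval v f := by
  rw [eval_eq, eval_eq, Finset.mul_sum]
  refine Finset.sum_congr rfl fun s hs => ?_
  rw [hf.degree_eq_sum_deg_support hs, ← Finset.prod_pow_eq_pow_sum]
  simp only [Pi.smul_apply, smul_eq_mul, mul_pow, Finset.prod_mul_distrib]
  ring

/-- Restriction of a polynomial to the affine line `t ↦ t • p + d`. For a form, the projective line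
through `p` and `d` is thus parametrised so that `p` is the point at infinity. -/
noncomputable def restrictLine (p d : σ → R) : MvPolynomial σ R →ₐ[R] R[X] :=
  aeval fun i => Polynomial.C (p i) * Polynomial.X + Polynomial.C (d i)

@[simp]
theorem restrictLine_X (p d : σ → R) (i : σ) :
    restrictLine p d (X i) = Polynomial.C (p i) * Polynomial.X + Polynomial.C (d i) :=
  aeval_X _ i

theorem eval_restrictLine (p d : σ → R) (f : MvPolynomial σ R) (a : R) :
    (restrictLine p d f).eval a = eval (a • p + d) f := by
  induction f using MvPolynomial.induction_on with
  | C r => simp [restrictLine]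
  | add f g hf hg => simp [hf, hg]
  | mul_X f i hf => simp [hf, mul_comm a]

theorem natDegree_restrictLine_le (hf : f.IsHomogeneous n) (p d : σ → R) :
    (restrictLine p d f).natDegree ≤ n :=
  (aeval_natDegree_le f hf.totalDegree_le _ fun _ => Polynomial.natDegree_linear_le).trans
    (mul_one n).le

theorem coeff_restrictLine_monomial (p d : σ → R) (s : σ →₀ ℕ) :
    (restrictLine p d (monomial s 1)).coeff s.degree = eval p (monomial s 1) := by
  induction s using Finsupp.induction_linear with
  | zero => simp
  | add s t hs ht =>
    have hle (u : σ →₀ ℕ) : (restrictLine p d (monomial u 1)).natDegree ≤ u.degree :=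
      natDegree_restrictLine_le (isHomogeneous_monomial 1 rfl) p d
    rw [← mul_one (1 : R), ← monomial_mul, map_mul, map_mul, map_add,
      Polynomial.coeff_mul_add_eq_of_natDegree_le (hle s) (hle t), hs, ht]
  | single i k =>
    rw [← X_pow_eq_monomial, map_pow, map_pow, restrictLine_X, eval_X, Finsupp.degree_single]
    simpa using Polynomial.coeff_pow_of_natDegree_le (m := k)
      (Polynomial.natDegree_linear_le (a := p i) (b := d i))

theorem coeff_restrictLine (hf : f.IsHomogeneous n) (p d : σ → R) :
    (restrictLine p d f).coeff n = eval p f := by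
  rw [f.as_sum, map_sum, map_sum, Polynomial.finsetSum_coeff]
  refine Finset.sum_congr rfl fun s hs => ?_
  have hdeg : s.degree = n := (hf.degree_eq_sum_deg_support hs).symm
  rw [← mul_one (coeff s f), ← smul_eq_mul, ← smul_monomial, map_smul, Polynomial.coeff_smul,
    smul_eval, ← hdeg, coeff_restrictLine_monomial, smul_eq_mul]

theorem natDegree_restrictLine_le_of_eval_eq_zero (hf : f.IsHomogeneous (n + 1)) {p : σ → R}
    (hfp : eval p f = 0) (d : σ → R) : (restrictLine p d f).natDegree ≤ n :=
  Polynomial.natDegree_le_pred (natDegree_restrictLine_le hf p d)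
    ((coeff_restrictLine hf p d).trans hfp)

variable [Fintype σ]

theorem derivative_restrictLine (p d : σ → R) (f : MvPolynomial σ R) :
    Polynomial.derivative (restrictLine p d f) =
      ∑ i, Polynomial.C (p i) * restrictLine p d (pderiv i f) := by
  classical
  induction f using MvPolynomial.induction_on with
  | C r => simp [restrictLine]
  | add f g hf hg => simp [hf, hg, mul_add, Finset.sum_add_distrib]
  | mul_X f j hf =>
    have hX : Polynomial.derivative (restrictLine p d (X j)) =
        ∑ i, Polynomial.C (p i) * restrictLine p d (pderiv i (X j)) := by
      simp [pderiv_X, Pi.single_apply, apply_ite (restrictLine p d)]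
    rw [map_mul, Polynomial.derivative_mul, hf, hX, Finset.sum_mul, Finset.mul_sum,
      ← Finset.sum_add_distrib]
    refine Finset.sum_congr rfl fun i _ => ?_
    rw [pderiv_mul, map_add, map_mul, map_mul]
    ring

/-- The differential at the point `p`, as a linear map in the polynomial. -/
noncomputable def differential (p : σ → R) : MvPolynomial σ R →ₗ[R] Dual R (σ → R) :=
  ∑ i, ((aeval p).toLinearMap ∘ₗ (pderiv i).toLinearMap).smulRight (LinearMap.proj i)

theorem differential_apply (p : σ → R) (f : MvPolynomial σ R) (v : σ → R) :
    differential p f v = ∑ i, v i * eval p (pderiv i f) := by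
  simp [differential, mul_comm, aeval_eq_eval]

theorem differential_mul (p : σ → R) (f g : MvPolynomial σ R) :
    differential p (f * g) = eval p g • differential p f + eval p f • differential p g := by
  refine LinearMap.ext fun v => ?_
  simp only [LinearMap.add_apply, LinearMap.smul_apply, smul_eq_mul, differential_apply,
    Finset.mul_sum, ← Finset.sum_add_distrib, pderiv_mul, map_add, map_mul]
  exact Finset.sum_congr rfl fun i _ => by ring

theorem differential_X (p : σ → R) (i : σ) : differential p (X i) = LinearMap.proj i := by
  classical
  ext v
  simp [differential_apply, pderiv_X, Pi.single_apply, apply_ite (eval p)]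

theorem differential_self (hf : f.IsHomogeneous n) (p : σ → R) :
    differential p f p = n * eval p f := by
  simpa [differential_apply] using congrArg (eval p) hf.sum_X_mul_pderiv

theorem eval_derivative_restrictLine (p d : σ → R) (f : MvPolynomial σ R) (a : R) :
    (Polynomial.derivative (restrictLine p d f)).eval a = differential (a • p + d) f p := by
  simp [derivative_restrictLine, differential_apply, eval_restrictLine, Polynomial.eval_finsetSum]

theorem euler_restrictLine (hf : f.IsHomogeneous n) (p d : σ → R) :
    (n : R[X]) * restrictLine p d f =
      Polynomial.X * Polynomial.derivative (restrictLine p d f) +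
        ∑ i, Polynomial.C (d i) * restrictLine p d (pderiv i f) := by
  have h := congrArg (restrictLine p d) hf.sum_X_mul_pderiv
  rw [map_nsmul, nsmul_eq_mul, map_sum] at h
  rw [← h, derivative_restrictLine, Finset.mul_sum, ← Finset.sum_add_distrib]
  refine Finset.sum_congr rfl fun i _ => ?_
  rw [map_mul, restrictLine_X]
  ring

theorem coeff_X_mul_derivative (g : R[X]) (n : ℕ) :
    (Polynomial.X * Polynomial.derivative g).coeff n = n * g.coeff n := by
  cases n with
  | zero => simp
  | succ m =>
    rw [Polynomial.coeff_X_mul, Polynomial.coeff_derivative, mul_comm, Nat.cast_succ]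

theorem coeff_restrictLine_pred (hf : f.IsHomogeneous (n + 1)) (p d : σ → R) :
    (restrictLine p d f).coeff n = differential p f d := by
  have hpartial (i : σ) : (restrictLine p d (pderiv i f)).coeff n = eval p (pderiv i f) :=
    coeff_restrictLine (hf.pderiv (i := i)) p d
  have h := congrArg (Polynomial.coeff · n) (euler_restrictLine hf p d)
  simp only [Polynomial.coeff_add, coeff_X_mul_derivative, Polynomial.finsetSum_coeff,
    Polynomial.coeff_C_mul, Polynomial.coeff_natCast_mul, hpartial] at h
  rw [differential_apply]
  push_cast at h
  linear_combination h

theorem natDegree_restrictLine_eq (hf : f.IsHomogeneous (n + 1)) {p d : σ → R}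
    (hfp : eval p f = 0) (hd : differential p f d ≠ 0) : (restrictLine p d f).natDegree = n :=
  (natDegree_restrictLine_le_of_eval_eq_zero hf hfp d).antisymm
    (Polynomial.le_natDegree_of_ne_zero (by rwa [coeff_restrictLine_pred hf]))

theorem natDegree_restrictLine_le_of_differential_eq_zero (hf : f.IsHomogeneous (n + 2))
    {p d : σ → R} (hfp : eval p f = 0) (h : differential p f d = 0) :
    (restrictLine p d f).natDegree ≤ n :=
  Polynomial.natDegree_le_pred (natDegree_restrictLine_le_of_eval_eq_zero hf hfp d)
    ((coeff_restrictLine_pred hf p d).trans h)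

/-- The 1-jet of a polynomial at `p` in the direction `v`: its value at `p + ε v`. -/
noncomputable def jet (p v : σ → R) : MvPolynomial σ R →ₐ[R] DualNumber R :=
  aeval fun i => TrivSqZeroExt.inl (p i) + TrivSqZeroExt.inr (v i)

theorem jet_eq (p v : σ → R) (f : MvPolynomial σ R) :
    jet p v f = TrivSqZeroExt.inl (eval p f) + TrivSqZeroExt.inr (differential p f v) := by
  induction f using MvPolynomial.induction_on with
  | C r => simp [jet, differential_apply]; rfl
  | add f g hf hg => rw [map_add, hf, hg]; ext <;> simp
  | mul_X f j hf =>
    rw [map_mul, hf, differential_mul, differential_X]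
    ext <;> simp [jet, mul_comm, add_comm]

end Calculus

section LinearForm

variable {R σ : Type*} [CommRing R] [Fintype σ]

/-- A linear functional, as a polynomial in the coordinates. -/
noncomputable def linearForm (l : Dual R (σ → R)) : MvPolynomial σ R :=
  ∑ i, C (l (Pi.basisFun R σ i)) * X i

theorem eval_linearForm (l : Dual R (σ → R)) (v : σ → R) : eval v (linearForm l) = l v := by
  conv_rhs => rw [← (Pi.basisFun R σ).sum_repr v]
  simp [linearForm, mul_comm, -Pi.basisFun_apply]

theorem isHomogeneous_linearForm (l : Dual R (σ → R)) : (linearForm l).IsHomogeneous 1 :=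
  IsHomogeneous.sum _ _ _ fun _ _ => isHomogeneous_C_mul_X _ _

theorem linearForm_ne_zero {l : Dual R (σ → R)} (hl : l ≠ 0) : linearForm l ≠ 0 := by
  contrapose! hl
  exact LinearMap.ext fun v => by simp [← eval_linearForm, hl]

theorem differential_linearForm (p : σ → R) (l : Dual R (σ → R)) :
    differential p (linearForm l) = l := by
  classical
  refine LinearMap.ext fun v => ?_
  rw [← eval_linearForm l v]
  simp [linearForm, differential_apply, pderiv_X, Pi.single_apply, apply_ite (eval p), mul_comm,
    -Pi.basisFun_apply]

theorem jet_linearForm (p v : σ → R) (l : Dual R (σ → R)) :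
    jet p v (linearForm l) = TrivSqZeroExt.inl (l p) + TrivSqZeroExt.inr (l v) := by
  rw [jet_eq, eval_linearForm, differential_linearForm]

-- The substitution `v ↦ v - l v • e`, where `l e = 1`, projects onto the hyperplane and is the
-- identity modulo `l`.
theorem linearForm_dvd_of_eval_eq_zero {K : Type*} [Field K] {f : MvPolynomial σ K} {n : ℕ}
    (hf : f.IsHomogeneous n) (hn : n ≤ Cardinal.mk K) {l : Dual K (σ → K)} (hl : l ≠ 0)
    (h : ∀ v, l v = 0 → eval v f = 0) : linearForm l ∣ f := by
  obtain ⟨e, he⟩ := LinearMap.surjective hl 1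
  set s : σ → MvPolynomial σ K := fun i => X i - C (e i) * linearForm l with hs
  have hproj : aeval s f = 0 := by
    refine IsHomogeneous.eq_zero_of_forall_eval_eq_zero_of_le_card (n := n) ?_ (fun v => ?_) hn
    · simpa using hf.aeval (S := K) s fun i =>
        (isHomogeneous_X _ _).sub ((isHomogeneous_linearForm l).C_mul _)
    · have hcomp : eval v (aeval s f) = eval (v - l v • e) f := by
        have hpt : (v - l v • e) = fun i => aeval v (s i) := by
          ext i
          simp [hs, aeval_eq_eval, eval_linearForm, mul_comm]
        rw [hpt, ← coe_aeval_eq_eval, ← coe_aeval_eq_eval, RingHom.coe_coe, RingHom.coe_coe,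
          ← comp_aeval_apply]
      exact hcomp.trans (h _ (by simp [he]))
  rw [← Ideal.mem_span_singleton, ← Ideal.Quotient.eq_zero_iff_mem]
  have hid : (Ideal.Quotient.mkₐ K (Ideal.span {linearForm l})).comp (aeval s) =
      Ideal.Quotient.mkₐ K (Ideal.span {linearForm l}) := by
    have hl0 : Ideal.Quotient.mkₐ K (Ideal.span {linearForm l}) (linearForm l) = 0 :=
      Ideal.Quotient.eq_zero_iff_mem.2 (Ideal.mem_span_singleton_self _)
    refine MvPolynomial.algHom_ext fun i => ?_
    rw [AlgHom.comp_apply, aeval_X, map_sub, map_mul, hl0, mul_zero, sub_zero]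
  rw [← Ideal.Quotient.mkₐ_eq_mk K, ← hid, AlgHom.comp_apply, hproj, map_zero]

end LinearForm

section NoLinearComponent

variable {K σ : Type*} [Field K] {f : MvPolynomial σ K} {n : ℕ}

/-- `f` has no linear component over its field of coefficients. -/
def NoLinearComponent (f : MvPolynomial σ K) : Prop :=
  ∀ l : MvPolynomial σ K, l ≠ 0 → l.IsHomogeneous 1 → ¬ l ∣ f

theorem NoLinearComponent.of_dvd {g : MvPolynomial σ K} (hf : NoLinearComponent f) (h : g ∣ f) :
    NoLinearComponent g :=
  fun l hl hl1 hlg => hf l hl hl1 (hlg.trans h)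

theorem NoLinearComponent.ne_zero [Nonempty σ] (hf : NoLinearComponent f) : f ≠ 0 := by
  rintro rfl
  exact hf (X (Classical.arbitrary σ)) (X_ne_zero _) (isHomogeneous_X _ _) (dvd_zero _)

theorem eval_eq_zero_of_restrictLine_eq_zero (hf : f.IsHomogeneous n) {p d : σ → K}
    (h : restrictLine p d f = 0) {v : σ → K} (hv : v ∈ Submodule.span K {p, d}) :
    eval v f = 0 := by
  obtain ⟨a, b, rfl⟩ := Submodule.mem_span_pair.1 hv
  by_cases hb : b = 0
  · simp [hb, eval_smul_of_isHomogeneous hf, ← coeff_restrictLine hf p d, h]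
  · have hab : a • p + b • d = b • ((a / b) • p + d) := by
      rw [smul_add, smul_smul, mul_div_cancel₀ _ hb]
    rw [hab, eval_smul_of_isHomogeneous hf, ← eval_restrictLine, h, Polynomial.eval_zero, mul_zero]

theorem exists_dual_ker_eq_span_pair {p d : Fin 3 → K}
    (hpd : LinearIndependent K ![p, d]) :
    ∃ l : Dual K (Fin 3 → K), l ≠ 0 ∧ LinearMap.ker l = Submodule.span K {p, d} := by
  have hspan : finrank K (Submodule.span K {p, d}) = 2 := by
    rw [← Matrix.range_cons_cons_empty p d ![], finrank_span_eq_card hpd, Fintype.card_fin]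
  have hlt : Submodule.span K {p, d} < ⊤ :=
    Submodule.lt_top_of_finrank_lt_finrank (by simp [hspan])
  obtain ⟨l, hl, hle⟩ := Submodule.exists_le_ker_of_lt_top _ hlt
  have hker := Module.Dual.finrank_ker_add_one_of_ne_zero hl
  rw [finrank_fin_fun] at hker
  exact ⟨l, hl, (Submodule.eq_of_le_of_finrank_eq hle (by omega)).symm⟩

theorem restrictLine_ne_zero {f : MvPolynomial (Fin 3) K}
    (hf : f.IsHomogeneous n) (hn : n ≤ Cardinal.mk K) (hlin : NoLinearComponent f)
    {p d : Fin 3 → K} (hpd : LinearIndependent K ![p, d]) : restrictLine p d f ≠ 0 := by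
  intro h
  obtain ⟨l, hl, hker⟩ := exists_dual_ker_eq_span_pair hpd
  exact hlin _ (linearForm_ne_zero hl) (isHomogeneous_linearForm l)
    (linearForm_dvd_of_eval_eq_zero hf hn hl fun v hv =>
      eval_eq_zero_of_restrictLine_eq_zero hf h (hker ▸ hv))

end NoLinearComponent

section HomogeneousFactor

variable {K σ : Type*} {n k : ℕ}

theorem homogeneousComponent_mul_of_isHomogeneous [CommSemiring K] {f : MvPolynomial σ K}
    (hf : f.IsHomogeneous n) (k : ℕ) (g : MvPolynomial σ K) :
    homogeneousComponent (n + k) (f * g) = f * homogeneousComponent k g := by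
  classical
  let := gradedAlgebra (σ := σ) (R := K)
  have h (i : ℕ) (g : MvPolynomial σ K) :
      (DirectSum.decompose (homogeneousSubmodule σ K) g i : MvPolynomial σ K) =
        homogeneousComponent i g :=
    decomposition.decompose'_apply g i
  rw [← h, ← h]
  exact DirectSum.coe_decompose_mul_add_of_left_mem _ hf

theorem homogeneousComponent_totalDegree_mul [CommSemiring K] (f g : MvPolynomial σ K) :
    homogeneousComponent (f.totalDegree + g.totalDegree) (f * g) =
      homogeneousComponent f.totalDegree f * homogeneousComponent g.totalDegree g := by
  conv_lhs => enter [2, 1]; rw [← sum_homogeneousComponent f]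
  rw [Finset.sum_mul, map_sum, Finset.sum_range_succ,
    homogeneousComponent_mul_of_isHomogeneous (homogeneousComponent_isHomogeneous _ _),
    Finset.sum_eq_zero, zero_add]
  intro i hi
  obtain ⟨j, hj⟩ := Nat.exists_eq_add_of_lt (Finset.mem_range.1 hi)
  rw [show f.totalDegree + g.totalDegree = i + (j + 1 + g.totalDegree) by omega,
    homogeneousComponent_mul_of_isHomogeneous (homogeneousComponent_isHomogeneous _ _),
    homogeneousComponent_eq_zero _ g (by omega), mul_zero]

theorem exists_isHomogeneous_eq_mul_of_dvd [CommSemiring K] {f g : MvPolynomial σ K}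
    (hf : f.IsHomogeneous n) (hg : g.IsHomogeneous (n + k)) (h : f ∣ g) :
    ∃ c, c.IsHomogeneous k ∧ g = f * c := by
  obtain ⟨c, rfl⟩ := h
  exact ⟨homogeneousComponent k c, homogeneousComponent_isHomogeneous _ _, by
    rw [← homogeneousComponent_mul_of_isHomogeneous hf, homogeneousComponent_eq_self hg]⟩

theorem totalDegree_pos_of_not_isUnit [Field K] {f : MvPolynomial σ K} (hf0 : f ≠ 0)
    (hf : ¬ IsUnit f) : 0 < f.totalDegree := by
  refine Nat.pos_of_ne_zero fun h => hf ?_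
  rw [totalDegree_eq_zero_iff_eq_C] at h
  rw [h] at hf0 ⊢
  exact (isUnit_iff_ne_zero.2 fun h0 => hf0 (by rw [h0, C_0])).map C

theorem exists_isHomogeneous_factors_of_not_irreducible [Field K] {f : MvPolynomial σ K}
    (hf : f.IsHomogeneous n) (hn : 0 < n) (hf0 : f ≠ 0) (hirr : ¬ Irreducible f) :
    ∃ i j, 0 < i ∧ 0 < j ∧ i + j = n ∧ ∃ g h : MvPolynomial σ K,
      g.IsHomogeneous i ∧ h.IsHomogeneous j ∧ f = g * h := by
  have hunit : ¬ IsUnit f := by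
    intro h
    have := hf.totalDegree hf0
    rw [(isUnit_iff_totalDegree_of_isReduced.1 h).2] at this
    omega
  obtain ⟨g, h, hg, hh, rfl⟩ : ∃ g h, ¬ IsUnit g ∧ ¬ IsUnit h ∧ f = g * h := by
    by_contra! hno
    exact hirr ⟨hunit, fun g h hgh => or_iff_not_imp_left.2 fun hg => by_contra fun hh =>
      hno g h hg hh hgh⟩
  obtain ⟨hg0, hh0⟩ := mul_ne_zero_iff.1 hf0
  have hdeg : g.totalDegree + h.totalDegree = n := by
    rw [← totalDegree_mul_of_isDomain hg0 hh0, hf.totalDegree hf0]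
  refine ⟨_, _, totalDegree_pos_of_not_isUnit hg0 hg, totalDegree_pos_of_not_isUnit hh0 hh, hdeg,
    _, _, homogeneousComponent_isHomogeneous _ g, homogeneousComponent_isHomogeneous _ h, ?_⟩
  rw [← homogeneousComponent_totalDegree_mul, hdeg, homogeneousComponent_eq_self hf]

end HomogeneousFactor

section Pencil

variable {K V : Type*} [Field K] [AddCommGroup V] [Module K V] {φ : Dual K V} {p : V}

theorem smul_add_ker_inj (hp : φ p = 1) {a b : K} {v w : LinearMap.ker φ} :
    a • p + (v : V) = b • p + w ↔ a = b ∧ v = w := by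
  refine ⟨fun h => ?_, fun ⟨ha, hv⟩ => by rw [ha, hv]⟩
  have hab : a = b := by simpa [hp] using congrArg φ h
  exact ⟨hab, Subtype.ext (add_left_cancel (hab ▸ h))⟩

/-- Representatives of the points of `ℙ K V`, sorted by the pencil of lines through `p`, where
`φ p = 1`: a line is given by its direction in `ker φ`, and a point of it other than `p` by the
coefficient of `p`. -/
noncomputable def pencilVector (φ : Dual K V) (p : V) :
    Option (ℙ K (LinearMap.ker φ) × K) → V
  | none => p
  | some (ℓ, a) => a • p + ℓ.rep

theorem pencilVector_ne_zero (hp : φ p = 1) :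
    ∀ x : Option (ℙ K (LinearMap.ker φ) × K), pencilVector φ p x ≠ 0
  | none, h => by simp [show p = 0 from h] at hp
  | some (ℓ, a), h => ℓ.rep_nonzero
    ((smul_add_ker_inj (b := 0) (w := 0) hp).1 (by simpa [pencilVector] using h)).2

theorem eq_of_smul_pencilVector_eq (hp : φ p = 1) {c : K} :
    ∀ {x y : Option (ℙ K (LinearMap.ker φ) × K)},
      c • pencilVector φ p y = pencilVector φ p x → x = y
  | none, none, _ => rfl
  | none, some (ℓ, a), h => by
    obtain ⟨hca, hr⟩ := (smul_add_ker_inj (a := c * a) (b := 1) (v := c • ℓ.rep) (w := 0) hp).1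
      (by simpa [pencilVector, mul_smul] using h)
    have hc : c = 0 := (smul_eq_zero.1 hr).resolve_right ℓ.rep_nonzero
    simp [hc] at hca
  | some (ℓ, a), none, h => absurd
    ((smul_add_ker_inj (a := c) (v := 0) hp).1 (by simpa [pencilVector] using h)).2.symm
    ℓ.rep_nonzero
  | some (ℓ, a), some (m, b), h => by
    obtain ⟨hba, hr⟩ := (smul_add_ker_inj (a := c * b) (b := a) (v := c • m.rep) (w := ℓ.rep) hp).1
      (by simpa [pencilVector, mul_smul] using h)
    obtain rfl : ℓ = m := by
      rw [← ℓ.mk_rep, ← m.mk_rep, Projectivization.mk_eq_mk_iff']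
      exact ⟨c, hr⟩
    have hc : c = 1 := smul_left_injective K ℓ.rep_nonzero (by simpa using hr)
    rw [← hba, hc, one_mul]

theorem exists_smul_eq_pencilVector (hp : φ p = 1) {v : V} (hv : v ≠ 0) :
    ∃ (x : Option (ℙ K (LinearMap.ker φ) × K)) (c : K), c • v = pencilVector φ p x := by
  let w : LinearMap.ker φ := ⟨v - φ v • p, by simp [hp]⟩
  have hvw : v = φ v • p + w := by simp [w]
  by_cases hw : w = 0
  · have hφv : φ v ≠ 0 := fun h0 => hv (by rw [hvw, h0, hw]; simp)
    refine ⟨none, (φ v)⁻¹, ?_⟩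
    rw [inv_smul_eq_iff₀ hφv, pencilVector]
    simpa [hw] using hvw
  · obtain ⟨u, hu⟩ := Projectivization.exists_smul_eq_mk_rep K w hw
    refine ⟨some (.mk K w hw, u * φ v), u, ?_⟩
    rw [pencilVector, ← hu]
    nth_rw 1 [hvw]
    simp [mul_smul, Units.smul_def]

/-- The enumeration of the points of `ℙ K V` by the lines through `p`: `none` stands for `p` itself,
`some (ℓ, a)` for a point of the line with direction `ℓ`. -/
noncomputable def pencilEquiv (hp : φ p = 1) : Option (ℙ K (LinearMap.ker φ) × K) ≃ ℙ K V :=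
  .ofBijective (fun x => .mk K (pencilVector φ p x) (pencilVector_ne_zero hp x))
    ⟨fun _ _ h => have ⟨_, hc⟩ := (Projectivization.mk_eq_mk_iff' ..).1 h
        eq_of_smul_pencilVector_eq hp hc,
      Projectivization.ind fun _ hv =>
        (exists_smul_eq_pencilVector hp hv).imp fun _ h =>
          (Projectivization.mk_eq_mk_iff' ..).2 h⟩

theorem finrank_ker_dual {φ : Dual K (Fin 3 → K)} (hφ : φ ≠ 0) :
    finrank K (LinearMap.ker φ) = 2 := by
  simpa using Module.Dual.finrank_ker_add_one_of_ne_zero hφ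

theorem existsUnique_dual_rep_eq_zero {W : Type*} [AddCommGroup W] [Module K W]
    (hW : finrank K W = 2) {D : Dual K W} (hD : D ≠ 0) : ∃! ℓ : ℙ K W, D ℓ.rep = 0 := by
  have : FiniteDimensional K W := .of_finrank_pos (by omega)
  have hker : finrank K (LinearMap.ker D) = 1 := by
    have := Module.Dual.finrank_ker_add_one_of_ne_zero hD
    omega
  have hmem (ℓ : ℙ K W) : D ℓ.rep = 0 ↔ ℓ = .mk'' (LinearMap.ker D) hker := by
    rw [← LinearMap.mem_ker, ← Submodule.span_singleton_le_iff_mem, ← ℓ.submodule_eq,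
      ← Projectivization.submodule_injective.eq_iff, Projectivization.submodule_mk'']
    exact ⟨fun h => Submodule.eq_of_le_of_finrank_eq h (by rw [ℓ.finrank_submodule, hker]), Eq.le⟩
  exact ⟨_, (hmem _).2 rfl, fun ℓ hℓ => (hmem ℓ).1 hℓ⟩

end Pencil

section PointCount

variable {K : Type} [Field K] {m n k : ℕ}

theorem eval_rep_mk_eq_zero_iff {f : MvPolynomial (Fin m) K} (hf : f.IsHomogeneous n)
    {v : Fin m → K} (hv : v ≠ 0) :
    eval (Projectivization.mk K v hv).rep f = 0 ↔ eval v f = 0 := by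
  obtain ⟨a, ha⟩ := Projectivization.exists_smul_eq_mk_rep K v hv
  rw [← ha, Units.smul_def, eval_smul_of_isHomogeneous hf]
  simp

theorem linearIndependent_pair_rep_ker {φ : Dual K (Fin m → K)} {p : Fin m → K} (hp : φ p = 1)
    (ℓ : ℙ K (LinearMap.ker φ)) : LinearIndependent K ![p, (ℓ.rep : Fin m → K)] := by
  rw [LinearIndependent.pair_iff]
  intro a b h
  obtain ⟨ha, hb⟩ := (smul_add_ker_inj (v := b • ℓ.rep) (b := 0) (w := 0) hp).1 (by simpa using h)
  exact ⟨ha, (smul_eq_zero.1 hb).resolve_right ℓ.rep_nonzero⟩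

theorem ncard_hypersurfacePts_mul_le (g h : MvPolynomial (Fin m) K) :
    (hypersurfacePts (g * h)).ncard ≤ (hypersurfacePts g).ncard + (hypersurfacePts h).ncard := by
  have hunion :
      hypersurfacePts (g * h) = hypersurfacePts g ∪ hypersurfacePts h := by
    ext P
    simp [hypersurfacePts]
  exact hunion ▸ Set.ncard_union_le _ _

theorem ncard_isRoot_le {g : K[X]} (hg : g ≠ 0) : {a | g.IsRoot a}.ncard ≤ g.natDegree := by
  have : {a | g.IsRoot a} = g.rootSet K := by ext; simp [Polynomial.mem_rootSet, hg]
  exact this ▸ g.ncard_rootSet_le K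

theorem ncard_hypersurfacePts_eq_sum [Finite K] {f : MvPolynomial (Fin m) K}
    (hf : f.IsHomogeneous n) {φ : Dual K (Fin m → K)} {p : Fin m → K} (hp : φ p = 1)
    (hfp : eval p f = 0) [Fintype (ℙ K (LinearMap.ker φ))] :
    (hypersurfacePts f).ncard =
      1 + ∑ ℓ : ℙ K (LinearMap.ker φ), {a | (restrictLine p ℓ.rep f).IsRoot a}.ncard := by
  classical
  have := Fintype.ofFinite K
  have := Fintype.ofFinite (ℙ K (Fin m → K))
  simp only [hypersurfacePts, Set.ncard_eq_toFinset_card', Set.toFinset_ofPred,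
    Finset.card_filter]
  rw [← (pencilEquiv hp).sum_comp, Fintype.sum_option, Fintype.sum_prod_type]
  simp [pencilEquiv, eval_rep_mk_eq_zero_iff hf, pencilVector, hfp, eval_restrictLine]

variable [Fintype K] {f : MvPolynomial (Fin 3) K} {p : Fin 3 → K}

theorem card_projectivization_ker {φ : Dual K (Fin 3 → K)} (hφ : φ ≠ 0)
    [Fintype (ℙ K (LinearMap.ker φ))] :
    Fintype.card (ℙ K (LinearMap.ker φ)) = Fintype.card K + 1 := by
  rw [← Nat.card_eq_fintype_card, ← Nat.card_eq_fintype_card]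
  exact Projectivization.card_of_finrank_two _ _ (finrank_ker_dual hφ)

theorem ncard_hypersurfacePts_le_of_natDegree_le (hf : f.IsHomogeneous n) (hp : p ≠ 0)
    (hfp : eval p f = 0) (h0 : ∀ d, LinearIndependent K ![p, d] → restrictLine p d f ≠ 0)
    (hk : ∀ d, (restrictLine p d f).natDegree ≤ k) :
    (hypersurfacePts f).ncard ≤ 1 + (Fintype.card K + 1) * k := by
  obtain ⟨φ, hφ⟩ := Projective.exists_dual_eq_one K hp
  have : Fintype (ℙ K (LinearMap.ker φ)) := .ofFinite _
  have hφ0 : φ ≠ 0 := by rintro rfl; simp at hφ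
  rw [ncard_hypersurfacePts_eq_sum hf hφ hfp, ← card_projectivization_ker hφ0]
  gcongr
  refine Finset.sum_le_card_nsmul _ _ _ fun ℓ _ => ?_
  exact (ncard_isRoot_le (h0 _ (linearIndependent_pair_rep_ker hφ ℓ))).trans (hk _)

theorem ncard_hypersurfacePts_eq_of_tangent (hf : f.IsHomogeneous n) (hp : p ≠ 0)
    (hfp : eval p f = 0) {D : Dual K (Fin 3 → K)} (hD : D ≠ 0) (hDp : D p = 0)
    (htangent : ∀ d, LinearIndependent K ![p, d] → D d = 0 →
      {a | (restrictLine p d f).IsRoot a}.ncard = 0)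
    (hsecant : ∀ d, D d ≠ 0 → {a | (restrictLine p d f).IsRoot a}.ncard = k) :
    (hypersurfacePts f).ncard = 1 + Fintype.card K * k := by
  classical
  obtain ⟨φ, hφ⟩ := Projective.exists_dual_eq_one K hp
  have : Fintype (ℙ K (LinearMap.ker φ)) := .ofFinite _
  have hφ0 : φ ≠ 0 := by rintro rfl; simp at hφ
  have hD0 : D ∘ₗ (LinearMap.ker φ).subtype ≠ 0 := by
    refine fun h => hD (LinearMap.ext fun v => ?_)
    have hv := LinearMap.congr_fun h ⟨v - φ v • p, by simp [hφ]⟩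
    simpa [hDp] using hv
  obtain ⟨ℓ₀, hℓ₀, huniq⟩ := existsUnique_dual_rep_eq_zero (finrank_ker_dual hφ0) hD0
  rw [ncard_hypersurfacePts_eq_sum hf hφ hfp, ← Finset.add_sum_erase _ _ (Finset.mem_univ ℓ₀),
    htangent _ (linearIndependent_pair_rep_ker hφ ℓ₀) hℓ₀, zero_add,
    Finset.sum_congr rfl fun ℓ hℓ =>
      hsecant ℓ.rep fun h => Finset.ne_of_mem_erase hℓ (huniq ℓ h),
    Finset.sum_const, Finset.card_erase_of_mem (Finset.mem_univ _), Finset.card_univ,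
    card_projectivization_ker hφ0, Nat.add_sub_cancel, smul_eq_mul]

theorem ncard_hypersurfacePts_le (hf : f.IsHomogeneous (n + 1)) (hn : n < Fintype.card K)
    (hlin : NoLinearComponent f) :
    (hypersurfacePts f).ncard ≤ 1 + (Fintype.card K + 1) * n := by
  obtain h | ⟨P, hP⟩ := (hypersurfacePts f).eq_empty_or_nonempty
  · simp [h]
  · exact ncard_hypersurfacePts_le_of_natDegree_le hf P.rep_nonzero hP
      (fun _ => restrictLine_ne_zero hf (by rw [Cardinal.mk_fintype]; exact_mod_cast hn) hlin)
      (natDegree_restrictLine_le_of_eval_eq_zero hf hP)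

theorem ncard_hypersurfacePts_le_of_singular (hf : f.IsHomogeneous (n + 2))
    (hn : n + 2 ≤ Fintype.card K) (hlin : NoLinearComponent f) (hp : p ≠ 0) (hfp : eval p f = 0)
    (hsing : differential p f = 0) :
    (hypersurfacePts f).ncard ≤ 1 + (Fintype.card K + 1) * n :=
  ncard_hypersurfacePts_le_of_natDegree_le hf hp hfp
    (fun _ => restrictLine_ne_zero hf (by rw [Cardinal.mk_fintype]; exact_mod_cast hn) hlin)
    fun d => natDegree_restrictLine_le_of_differential_eq_zero hf hfp (d := d) (by simp [hsing])

theorem ncard_hypersurfacePts_le_of_not_irreducible (hf : f.IsHomogeneous 4)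
    (hlin : NoLinearComponent f) (hirr : ¬ Irreducible f) :
    (hypersurfacePts f).ncard ≤ 2 * Fintype.card K + 4 := by
  obtain ⟨i, j, hi, hj, hij, g, h, hg, hh, rfl⟩ :=
    exists_isHomogeneous_factors_of_not_irreducible hf (by norm_num) hlin.ne_zero hirr
  obtain ⟨hg0, hh0⟩ := mul_ne_zero_iff.1 hlin.ne_zero
  have hi1 : i ≠ 1 := by rintro rfl; exact hlin g hg0 hg (dvd_mul_right g h)
  have hj1 : j ≠ 1 := by rintro rfl; exact hlin h hh0 hh (dvd_mul_left h g)
  obtain ⟨rfl, rfl⟩ : i = 2 ∧ j = 2 := by omega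
  have hNg := ncard_hypersurfacePts_le hg Fintype.one_lt_card (hlin.of_dvd (dvd_mul_right g h))
  have hNh := ncard_hypersurfacePts_le hh Fintype.one_lt_card (hlin.of_dvd (dvd_mul_left h g))
  linarith [ncard_hypersurfacePts_mul_le g h]

end PointCount

section FrobeniusPolar

variable {K σ : Type*} [Field K] [Fintype K] [Fintype σ] {f : MvPolynomial σ K} {n : ℕ}

/-- The Frobenius polar `∑ i, X i ^ q * ∂f/∂X i` of a form over the field with `q` elements: it
vanishes at a smooth point `P` of the curve `f = 0` iff the tangent line at `P` contains the
Frobenius image of `P`. -/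
noncomputable def frobeniusPolar (f : MvPolynomial σ K) : MvPolynomial σ K :=
  ∑ i, X i ^ Fintype.card K * pderiv i f

theorem isHomogeneous_frobeniusPolar (hf : f.IsHomogeneous (n + 1)) :
    (frobeniusPolar f).IsHomogeneous (Fintype.card K + n) :=
  IsHomogeneous.sum _ _ _ fun i _ => (isHomogeneous_X_pow i _).mul hf.pderiv

theorem restrictLine_frobeniusPolar (hf : f.IsHomogeneous n) (p d : σ → K) :
    restrictLine p d (frobeniusPolar f) =
      (Polynomial.X ^ Fintype.card K - Polynomial.X) *
          Polynomial.derivative (restrictLine p d f) +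
        (n : K[X]) * restrictLine p d f := by
  rw [euler_restrictLine hf, derivative_restrictLine, sub_mul, ← add_assoc, sub_add_cancel,
    Finset.mul_sum, ← Finset.sum_add_distrib, frobeniusPolar, map_sum]
  refine Finset.sum_congr rfl fun i _ => ?_
  rw [map_mul, map_pow, restrictLine_X, ← FiniteField.expand_card]
  simp only [map_add, map_mul, Polynomial.expand_C, Polynomial.expand_X]
  ring

theorem jet_frobeniusPolar (hf : f.IsHomogeneous n) (p v : σ → K) :
    jet p v (frobeniusPolar f) = n • jet p v f - TrivSqZeroExt.inr (differential p f v) := by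
  have hX (i : σ) : jet p v (X i ^ Fintype.card K) = jet p v (X i) - TrivSqZeroExt.inr (v i) := by
    ext <;> simp [jet, FiniteField.pow_card, TrivSqZeroExt.snd_pow]
  have hinr (i : σ) : TrivSqZeroExt.inr (v i) * jet p v (pderiv i f) =
      (TrivSqZeroExt.inr (v i * eval p (pderiv i f)) : DualNumber K) := by
    ext <;> simp [jet_eq, mul_comm]
  rw [← map_nsmul, ← hf.sum_X_mul_pderiv, differential_apply, TrivSqZeroExt.inr_sum, frobeniusPolar,
    map_sum, map_sum, ← Finset.sum_sub_distrib]
  refine Finset.sum_congr rfl fun i _ => ?_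
  rw [map_mul, map_mul, hX, sub_mul, hinr]

theorem jet_frobeniusPolar_eq_zero (hf : f.IsHomogeneous n) {p v : σ → K} (h : jet p v f = 0) :
    jet p v (frobeniusPolar f) = 0 := by
  have hdiff : differential p f v = 0 := by
    simpa [jet_eq] using congrArg TrivSqZeroExt.snd h
  rw [jet_frobeniusPolar hf, h, hdiff, smul_zero, TrivSqZeroExt.inr_zero, sub_zero]

end FrobeniusPolar

section Splitting

variable {K : Type*} [Field K] {g : K[X]}

theorem splits_of_forall_natDegree_eq_one (hg : g ≠ 0)
    (h : ∀ π, Irreducible π → π ∣ g → π.natDegree = 1) : g.Splits := by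
  obtain ⟨u, hu⟩ := UniqueFactorizationMonoid.factors_prod hg
  rw [← hu]
  refine (Polynomial.Splits.multisetProd fun π hπ => ?_).mul u.isUnit.splits
  exact .of_natDegree_eq_one (h π (UniqueFactorizationMonoid.irreducible_of_factor π hπ)
    (UniqueFactorizationMonoid.dvd_of_mem_factors hπ))

theorem dvd_of_pow_dvd_mul_derivative [PerfectField K] {π h s : K[X]} {m : ℕ} (hπ : Irreducible π)
    (hπh : ¬ π ∣ h) (hdvd : π ^ (m + 1) * h ∣ s * Polynomial.derivative (π ^ (m + 1) * h)) :
    π ∣ s * Polynomial.C (m + 1 : K) := by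
  have hderiv : s * Polynomial.derivative (π ^ (m + 1) * h) =
      π ^ m * (s * Polynomial.C (m + 1 : K) * Polynomial.derivative π * h +
        π * (s * Polynomial.derivative h)) := by
    rw [Polynomial.derivative_mul, Polynomial.derivative_pow_succ]
    ring
  rw [hderiv] at hdvd
  have hπ_dvd := (mul_dvd_mul_iff_left (pow_ne_zero m hπ.ne_zero)).1
    ((pow_succ π m ▸ dvd_mul_right (π ^ (m + 1)) h).trans hdvd)
  rw [dvd_add_left (dvd_mul_right _ _)] at hπ_dvd
  have hπ' : ¬ π ∣ Polynomial.derivative π := fun hd =>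
    hπ.not_isUnit ((PerfectField.separable_of_irreducible hπ).isUnit_of_dvd' dvd_rfl hd)
  exact (hπ.prime.dvd_or_dvd ((hπ.prime.dvd_or_dvd hπ_dvd).resolve_right hπh)).resolve_right hπ'

theorem splits_of_dvd_mul_derivative [Fintype K] (hg : g ≠ 0) (hdeg : g.natDegree ≤ ringChar K)
    (hdvd : g ∣ (Polynomial.X ^ Fintype.card K - Polynomial.X) * Polynomial.derivative g) :
    g.Splits := by
  refine splits_of_forall_natDegree_eq_one hg fun π hπ hπg => ?_
  obtain ⟨e, h, hπh, rfl⟩ := WfDvdMonoid.max_power_factor hg hπ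
  obtain ⟨m, rfl⟩ : ∃ m, e = m + 1 :=
    Nat.exists_eq_succ_of_ne_zero fun h0 => hπh (by simpa [h0] using hπg)
  obtain hs | hm := hπ.prime.dvd_or_dvd (dvd_of_pow_dvd_mul_derivative hπ hπh hdvd)
  · have hcard := Fintype.one_lt_card (α := K)
    have hsplits : (Polynomial.X ^ Fintype.card K - Polynomial.X : K[X]).Splits := by
      rw [Polynomial.splits_iff_card_roots, FiniteField.roots_X_pow_card_sub_X,
        FiniteField.X_pow_card_sub_X_natDegree_eq K hcard, Finset.card_val, Finset.card_univ]
    exact hsplits.of_dvd (FiniteField.X_pow_card_sub_X_ne_zero K hcard) hs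
      |>.natDegree_eq_one_of_irreducible hπ
  · have hm0 : ((m + 1 : ℕ) : K) = 0 := by
      by_contra hne
      exact hπ.not_isUnit (isUnit_of_dvd_unit hm (Polynomial.isUnit_C.2 (by simpa using hne)))
    have hle := Nat.le_of_dvd m.succ_pos (ringChar.dvd hm0)
    have hh : h ≠ 0 := right_ne_zero_of_mul hg
    rw [Polynomial.natDegree_mul (pow_ne_zero _ hπ.ne_zero) hh, Polynomial.natDegree_pow] at hdeg
    have := hπ.natDegree_pos
    nlinarith

theorem ncard_isRoot_eq_natDegree (hg : g ≠ 0) (hsplits : g.Splits)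
    (hsimple : ∀ a, g.IsRoot a → ¬ (Polynomial.derivative g).IsRoot a) :
    {a | g.IsRoot a}.ncard = g.natDegree := by
  classical
  have hnodup : g.roots.Nodup := Multiset.nodup_iff_count_le_one.2 fun a => by
    rw [Polynomial.count_roots, ← not_lt, Polynomial.one_lt_rootMultiplicity_iff_isRoot hg]
    exact fun h => hsimple a h.1 h.2
  have : {a | g.IsRoot a} = (g.roots.toFinset : Set K) := by ext; simp [hg]
  rw [this, Set.ncard_coe_finset, Multiset.toFinset_card_of_nodup hnodup,
    hsplits.natDegree_eq_card_roots]

end Splitting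

section Nonclassical

variable {K σ : Type*} [Field K] [Fintype σ] {f : MvPolynomial σ K} {n : ℕ} {p d : σ → K}

theorem linearIndependent_pair_of_differential_ne_zero (hf : f.IsHomogeneous n) (hp : p ≠ 0)
    (hfp : eval p f = 0) (hd : differential p f d ≠ 0) : LinearIndependent K ![p, d] := by
  rw [LinearIndependent.pair_iff' hp]
  rintro a rfl
  simp [differential_self hf, hfp] at hd

variable [Fintype K]

theorem natCast_natDegree_restrictLine {c : MvPolynomial σ K} {k : ℕ}
    (hf : f.IsHomogeneous n) (hc : c.IsHomogeneous k) (hk : k + 1 = Fintype.card K)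
    (hpolar : frobeniusPolar f = f * c) (h0 : restrictLine p d f ≠ 0) :
    ((restrictLine p d f).natDegree : K) = eval p c := by
  have h := congrArg (restrictLine p d) hpolar
  rw [restrictLine_frobeniusPolar hf, ← hk, map_mul] at h
  set g := restrictLine p d f
  have hbeyond : g.coeff (g.natDegree + k) = 0 := by
    have := Fintype.one_lt_card (α := K)
    exact Polynomial.coeff_eq_zero_of_natDegree_lt (by omega)
  have hfactor : (Polynomial.X ^ (k + 1) - Polynomial.X) * Polynomial.derivative g =
      Polynomial.X ^ k * (Polynomial.X * Polynomial.derivative g) -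
        Polynomial.X * Polynomial.derivative g := by ring
  replace h := congrArg (Polynomial.coeff · (g.natDegree + k)) h
  simp only [hfactor, Polynomial.coeff_add, Polynomial.coeff_sub, Polynomial.coeff_X_pow_mul,
    coeff_X_mul_derivative, Polynomial.coeff_natCast_mul, hbeyond, mul_zero, sub_zero, add_zero,
    Polynomial.coeff_mul_add_eq_of_natDegree_le le_rfl (natDegree_restrictLine_le hc p d),
    coeff_restrictLine hc] at h
  rw [mul_comm] at h
  exact mul_left_cancel₀ (by simpa using h0) h

theorem natCast_natDegree_restrictLine_eq (hf : f.IsHomogeneous (n + 1))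
    (hdvd : f ∣ frobeniusPolar f) {v : σ → K} (hd : restrictLine p d f ≠ 0)
    (hv : restrictLine p v f ≠ 0) :
    ((restrictLine p d f).natDegree : K) = (restrictLine p v f).natDegree := by
  have hk : Fintype.card K - 1 + 1 = Fintype.card K := Nat.sub_add_cancel Fintype.card_pos
  have hdeg : Fintype.card K + n = n + 1 + (Fintype.card K - 1) := by omega
  obtain ⟨c, hc, hpolar⟩ :=
    exists_isHomogeneous_eq_mul_of_dvd hf (hdeg ▸ isHomogeneous_frobeniusPolar hf) hdvd
  rw [natCast_natDegree_restrictLine hf hc hk hpolar hd,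
    natCast_natDegree_restrictLine hf hc hk hpolar hv]

-- Modulo the characteristic, the degree of `f` on a line through `p` does not depend on the line,
-- but it drops on the tangent.
theorem natDegree_restrictLine_eq_zero_of_tangent (hf : f.IsHomogeneous (n + 1))
    (hn : n ≤ ringChar K) (hdvd : f ∣ frobeniusPolar f) (hfp : eval p f = 0)
    (hsmooth : differential p f ≠ 0) (hd : differential p f d = 0) (h0 : restrictLine p d f ≠ 0) :
    (restrictLine p d f).natDegree = 0 := by
  obtain ⟨v, hv⟩ : ∃ v, differential p f v ≠ 0 := by
    contrapose! hsmooth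
    exact LinearMap.ext hsmooth
  have hv0 : restrictLine p v f ≠ 0 := by
    intro h
    rw [← coeff_restrictLine_pred hf, h] at hv
    exact hv (Polynomial.coeff_zero n)
  have hcast := natCast_natDegree_restrictLine_eq hf hdvd h0 hv0
  rw [natDegree_restrictLine_eq hf hfp hv] at hcast
  have hle := natDegree_restrictLine_le_of_eval_eq_zero hf hfp d
  have hne : (restrictLine p d f).natDegree ≠ n := by
    intro h
    rw [← Polynomial.leadingCoeff_ne_zero, Polynomial.leadingCoeff, h,
      coeff_restrictLine_pred hf, hd] at h0
    exact h0 rfl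
  have hchar : ringChar K ∣ n - (restrictLine p d f).natDegree :=
    ringChar.dvd (by rw [Nat.cast_sub hle, hcast, sub_self])
  have := Nat.le_of_dvd (by omega) hchar
  omega

theorem eval_ne_zero_of_mem_tangent (hf : f.IsHomogeneous (n + 1)) (hn : n ≤ ringChar K)
    (hdvd : f ∣ frobeniusPolar f) (hfp : eval p f = 0) (hsmooth : differential p f ≠ 0)
    (hd : differential p f d = 0) (h0 : restrictLine p d f ≠ 0) : eval d f ≠ 0 := by
  have hconst := Polynomial.eq_C_of_natDegree_eq_zero
    (natDegree_restrictLine_eq_zero_of_tangent hf hn hdvd hfp hsmooth hd h0)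
  have heval : (restrictLine p d f).eval 0 = eval d f := by simp [eval_restrictLine]
  rw [hconst, Polynomial.eval_C] at heval
  rw [← heval]
  exact fun h => h0 (by rw [hconst, h, Polynomial.C_0])

theorem ncard_isRoot_restrictLine_secant (hf : f.IsHomogeneous (n + 1)) (hn : n ≤ ringChar K)
    (hdvd : f ∣ frobeniusPolar f)
    (hline : ∀ p d, LinearIndependent K ![p, d] → restrictLine p d f ≠ 0)
    (hsmooth : ∀ p, p ≠ 0 → eval p f = 0 → differential p f ≠ 0) (hp : p ≠ 0)
    (hfp : eval p f = 0) (hd : differential p f d ≠ 0) :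
    {a | (restrictLine p d f).IsRoot a}.ncard = n := by
  have hpd := linearIndependent_pair_of_differential_ne_zero hf hp hfp hd
  have hdeg := natDegree_restrictLine_eq hf hfp hd
  have hsplits : (restrictLine p d f).Splits := by
    refine splits_of_dvd_mul_derivative (hline p d hpd) (hdeg.trans_le hn) ?_
    rw [← dvd_add_left (dvd_mul_left _ _), ← restrictLine_frobeniusPolar hf]
    exact map_dvd _ hdvd
  rw [ncard_isRoot_eq_natDegree (hline p d hpd) hsplits fun a ha ha' => ?_, hdeg]
  rw [Polynomial.IsRoot, eval_restrictLine] at ha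
  rw [Polynomial.IsRoot, eval_derivative_restrictLine] at ha'
  have hpa : LinearIndependent K ![a • p + d, p] :=
    LinearIndependent.pair_symm_iff.1 ((LinearIndependent.pair_add_smul_right_iff a).2 hpd)
  exact eval_ne_zero_of_mem_tangent hf hn hdvd ha (hsmooth _ (hpa.ne_zero 0) ha) ha'
    (hline _ _ hpa) hfp

theorem ncard_hypersurfacePts_eq_of_dvd_frobeniusPolar {K : Type} [Field K] [Fintype K]
    {f : MvPolynomial (Fin 3) K} {p : Fin 3 → K}
    (hf : f.IsHomogeneous (n + 1)) (hn : n ≤ ringChar K) (hcard : n < Fintype.card K)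
    (hlin : NoLinearComponent f) (hdvd : f ∣ frobeniusPolar f)
    (hsmooth : ∀ p, p ≠ 0 → eval p f = 0 → differential p f ≠ 0) (hp : p ≠ 0)
    (hfp : eval p f = 0) :
    (hypersurfacePts f).ncard = 1 + Fintype.card K * n := by
  have hline : ∀ p d, LinearIndependent K ![p, d] → restrictLine p d f ≠ 0 := fun p d =>
    restrictLine_ne_zero hf (by rw [Cardinal.mk_fintype]; exact_mod_cast hcard) hlin
  refine ncard_hypersurfacePts_eq_of_tangent hf hp hfp (hsmooth p hp hfp)
    (by rw [differential_self hf, hfp, mul_zero]) (fun d hpd hd => ?_)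
    fun d => ncard_isRoot_restrictLine_secant hf hn hdvd hline hsmooth hp hfp
  rw [Set.ncard_eq_zero]
  refine Set.eq_empty_of_forall_notMem fun a ha => ?_
  rw [Set.mem_ofPred, Polynomial.IsRoot, eval_restrictLine] at ha
  have hpa : LinearIndependent K ![p, a • p + d] :=
    (LinearIndependent.pair_add_smul_right_iff a).2 hpd
  refine eval_ne_zero_of_mem_tangent hf hn hdvd hfp (hsmooth p hp hfp) ?_ (hline _ _ hpa) ha
  simp [hd, differential_self hf, hfp]

end Nonclassical

section Bezout

variable {K σ : Type*} [Field K] {d e m : ℕ}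

theorem finrank_homogeneousSubmodule [Fintype σ] (m : ℕ) :
    finrank K (homogeneousSubmodule σ K m) = (Fintype.card σ + m - 1).choose m := by
  classical
  have hs : {s : σ →₀ ℕ | s.degree = m} = (Finset.univ : Finset σ).finsuppAntidiag m := by
    ext s
    simp [Finsupp.degree_eq_sum]
  rw [show homogeneousSubmodule σ K m = restrictSupport K {s : σ →₀ ℕ | s.degree = m} from
      homogeneousSubmodule_eq_finsupp_supported _ _ _,
    finrank_eq_nat_card_basis (basisRestrictSupport K _), hs, Nat.card_eq_fintype_card]
  simp [Finset.card_finsuppAntidiag_nat_eq_choose]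

instance finite_homogeneousSubmodule [Finite σ] (m : ℕ) :
    Module.Finite K (homogeneousSubmodule σ K m) :=
  .of_fg (homogeneousSubmodule_fg σ K m)

/-- The multiples of `f` by forms of degree `m`. -/
noncomputable def formMultiples (f : MvPolynomial σ K) (m : ℕ) : Submodule K (MvPolynomial σ K) :=
  (homogeneousSubmodule σ K m).map (LinearMap.mulLeft K f)

instance finite_formMultiples [Finite σ] (f : MvPolynomial σ K) (m : ℕ) :
    Module.Finite K (formMultiples f m) :=
  inferInstanceAs (Module.Finite K ((homogeneousSubmodule σ K m).map (LinearMap.mulLeft K f)))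

theorem finrank_formMultiples {f : MvPolynomial σ K} (hf0 : f ≠ 0) (m : ℕ) :
    finrank K (formMultiples f m) = finrank K (homogeneousSubmodule σ K m) :=
  (Submodule.equivMapOfInjective _ (fun _ _ => mul_left_cancel₀ hf0) _).finrank_eq.symm

theorem formMultiples_le {f : MvPolynomial σ K} (hf : f.IsHomogeneous d) (m : ℕ) :
    formMultiples f m ≤ homogeneousSubmodule σ K (d + m) := by
  rintro _ ⟨a, ha, rfl⟩
  exact hf.mul ha

theorem formMultiples_inf_le {f g : MvPolynomial σ K} (hf : f.IsHomogeneous d) (hprime : Prime f)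
    (hfg : ¬ f ∣ g) (k m : ℕ) :
    formMultiples f k ⊓ formMultiples g (d + m) ≤ formMultiples (f * g) m := by
  rintro _ ⟨⟨a, -, rfl⟩, b, hb, hab⟩
  obtain ⟨c, hc, rfl⟩ := exists_isHomogeneous_eq_mul_of_dvd hf hb
    ((hprime.dvd_or_dvd ⟨a, hab⟩).resolve_left hfg)
  exact ⟨c, hc, by rw [← hab]; simp only [LinearMap.mulLeft_apply]; ring⟩

theorem choose_hilbert_add (d e m : ℕ) :
    (d + e + m + 2).choose 2 + (m + 2).choose 2 =
      (e + m + 2).choose 2 + (d + m + 2).choose 2 + d * e := by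
  have h : (((d + e + m + 2).choose 2 + (m + 2).choose 2 : ℕ) : ℚ) =
      ((e + m + 2).choose 2 + (d + m + 2).choose 2 + d * e : ℕ) := by
    push_cast [Nat.cast_choose_two]
    ring
  exact_mod_cast h

theorem finrank_homogeneousSubmodule_fin_three (m : ℕ) :
    finrank K (homogeneousSubmodule (Fin 3) K m) = (m + 2).choose 2 := by
  rw [finrank_homogeneousSubmodule, Fintype.card_fin, ← Nat.choose_symm_add]
  congr 1
  omega

variable {f g : MvPolynomial (Fin 3) K}

theorem finrank_homogeneousSubmodule_le_finrank_sup_add (hf : f.IsHomogeneous d) (hprime : Prime f)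
    (hfg : ¬ f ∣ g) (e m : ℕ) :
    finrank K (homogeneousSubmodule (Fin 3) K (d + e + m)) ≤
      finrank K ↥(formMultiples f (e + m) ⊔ formMultiples g (d + m)) + d * e := by
  have hg0 : g ≠ 0 := fun h => hfg (h ▸ dvd_zero f)
  have hsup := Submodule.finrank_sup_add_finrank_inf_eq (formMultiples f (e + m))
    (formMultiples g (d + m))
  have hinf := Submodule.finrank_mono (formMultiples_inf_le hf hprime hfg (e + m) m)
  rw [finrank_formMultiples hprime.ne_zero, finrank_formMultiples hg0] at hsup
  rw [finrank_formMultiples (mul_ne_zero hprime.ne_zero hg0)] at hinf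
  simp only [finrank_homogeneousSubmodule_fin_three] at hsup hinf ⊢
  have := choose_hilbert_add d e m
  omega

-- Bézout's theorem for a quotient `A` of the coordinate ring of the intersection of the curves
-- `f = 0` and `g = 0` that is filled by the forms of one large degree.
theorem finrank_le_mul_of_map_eq_zero (hf : f.IsHomogeneous d) (hg : g.IsHomogeneous e)
    (hprime : Prime f) (hfg : ¬ f ∣ g) {A : Type*} [CommRing A] [Algebra K A]
    (φ : MvPolynomial (Fin 3) K →ₐ[K] A) (hφf : φ f = 0) (hφg : φ g = 0)
    (hφ : (homogeneousSubmodule (Fin 3) K (d + e + m)).map φ.toLinearMap = ⊤) :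
    finrank K A ≤ d * e := by
  set W := homogeneousSubmodule (Fin 3) K (d + e + m) with hW
  have hmul_le {u : MvPolynomial (Fin 3) K} (hu : φ u = 0) (k : ℕ) :
      formMultiples u k ≤ LinearMap.ker φ.toLinearMap := by
    rintro _ ⟨a, -, rfl⟩
    simp [hu]
  have hle : formMultiples f (e + m) ⊔ formMultiples g (d + m) ≤
      (LinearMap.ker (φ.toLinearMap.domRestrict W)).map W.subtype := by
    rw [LinearMap.ker_domRestrict, Submodule.map_comap_subtype]
    refine sup_le (le_inf ?_ (hmul_le hφf _)) (le_inf ?_ (hmul_le hφg _))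
    · exact (formMultiples_le hf _).trans_eq (by rw [hW, add_assoc])
    · exact (formMultiples_le hg _).trans_eq (by rw [hW, add_left_comm, add_assoc])
  have hker := (Submodule.finrank_mono hle).trans (Submodule.finrank_map_le _ _)
  have hrank := LinearMap.finrank_range_add_finrank_ker (φ.toLinearMap.domRestrict W)
  rw [LinearMap.range_domRestrict, hφ, finrank_top] at hrank
  have hsup : finrank K W ≤ _ := finrank_homogeneousSubmodule_le_finrank_sup_add hf hprime hfg e m
  omega

end Bezout

section VectorPairs

variable {K V ι : Type*} [Field K] [AddCommGroup V] [Module K V]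

theorem exists_dual_apply_eq_of_linearIndependent {v : ι → V} (hv : LinearIndependent K v)
    (w : ι → K) : ∃ l : Dual K V, ∀ i, l (v i) = w i := by
  obtain ⟨l, hl⟩ := LinearMap.exists_extend ((Basis.span hv).constr K w)
  refine ⟨l, fun i => ?_⟩
  rw [← Basis.constr_basis (Basis.span hv) K w i, ← hl, LinearMap.comp_apply,
    Submodule.subtype_apply, Basis.span_apply]

theorem exists_dual_apply_eq_pair {p v : V} (hpv : LinearIndependent K ![p, v]) (a b : K) :
    ∃ l : Dual K V, l p = a ∧ l v = b := by
  simpa [Fin.forall_fin_two] using exists_dual_apply_eq_of_linearIndependent hpv ![a, b]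

theorem exists_linearIndependent_pair_mem_ker (hV : 2 < finrank K V) (D : Dual K V) {p : V}
    (hp : p ≠ 0) : ∃ v, LinearIndependent K ![p, v] ∧ D v = 0 := by
  have : FiniteDimensional K V := .of_finrank_pos (by omega)
  have hker : 1 < finrank K (LinearMap.ker D) := by
    have hrank := LinearMap.finrank_range_add_finrank_ker D
    have hrange := (LinearMap.range D).finrank_le
    rw [finrank_self] at hrange
    omega
  have hle : ¬ LinearMap.ker D ≤ K ∙ p := fun h =>
    hker.not_ge ((Submodule.finrank_mono h).trans_eq (finrank_span_singleton hp))
  obtain ⟨v, hv, hvp⟩ := SetLike.not_le_iff_exists.1 hle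
  exact ⟨v, (LinearIndependent.pair_iff' hp).2 fun a h =>
    hvp (Submodule.mem_span_singleton.2 ⟨a, h⟩), hv⟩

theorem linearIndependent_pair_rep_of_ne {P Q : ℙ K V} (h : P ≠ Q) :
    LinearIndependent K ![P.rep, Q.rep] := by
  refine (LinearIndependent.pair_iff' P.rep_nonzero).2 fun a ha => h ?_
  rw [← P.mk_rep, ← Q.mk_rep, eq_comm, Projectivization.mk_eq_mk_iff']
  exact ⟨a, ha⟩

end VectorPairs

section JetInterpolation

variable {K σ ι : Type*} [Field K]

theorem exists_jet_linearForm_eq [Fintype σ] {p v : σ → K} (hpv : LinearIndependent K ![p, v])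
    (z : DualNumber K) : ∃ l, jet p v (linearForm l) = z := by
  obtain ⟨l, hlp, hlv⟩ := exists_dual_apply_eq_pair hpv z.fst z.snd
  exact ⟨l, by rw [jet_linearForm, hlp, hlv, TrivSqZeroExt.inl_fst_add_inr_snd_eq]⟩

variable [Finite σ] [Fintype ι] {m : ℕ} {P v : ι → σ → K}

theorem exists_isHomogeneous_jet_eq_zero (hP : ∀ i j, i ≠ j → LinearIndependent K ![P i, P j])
    {i : ι} (hPi : P i ≠ 0) (hm : 2 * (Fintype.card ι - 1) ≤ m) :
    ∃ M : MvPolynomial σ K, M.IsHomogeneous m ∧ eval (P i) M ≠ 0 ∧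
      ∀ j ≠ i, jet (P j) (v j) M = 0 := by
  classical
  have := Fintype.ofFinite σ
  have hsep (j : ι) (hj : j ≠ i) := exists_dual_apply_eq_pair (hP j i hj) 0 1
  choose! L hL0 hL1 using hsep
  obtain ⟨l, hl⟩ := Projective.exists_dual_eq_one K hPi
  obtain ⟨k, rfl⟩ := Nat.exists_eq_add_of_le hm
  refine ⟨(∏ j ∈ Finset.univ.erase i, linearForm (L j) ^ 2) * linearForm l ^ k, ?_, ?_, ?_⟩
  · have hprod : (∏ j ∈ Finset.univ.erase i, linearForm (L j) ^ 2).IsHomogeneous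
        (∑ _j ∈ Finset.univ.erase i, 1 * 2) :=
      IsHomogeneous.prod _ _ _ fun j _ => (isHomogeneous_linearForm (L j)).pow 2
    simpa [mul_comm] using hprod.mul ((isHomogeneous_linearForm l).pow k)
  · rw [map_mul, map_pow, map_prod, eval_linearForm, hl, one_pow, mul_one,
      Finset.prod_eq_one fun j hj => ?_]
    · exact one_ne_zero
    · rw [map_pow, eval_linearForm, hL1 j (Finset.ne_of_mem_erase hj), one_pow]
  · intro j hj
    have hjet : jet (P j) (v j) (linearForm (L j) ^ 2) = 0 := by
      rw [map_pow, jet_linearForm, hL0 j hj, TrivSqZeroExt.inl_zero, zero_add, sq,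
        TrivSqZeroExt.inr_mul_inr]
    rw [map_mul, map_prod, Finset.prod_eq_zero (Finset.mem_erase.2 ⟨hj, Finset.mem_univ j⟩) hjet,
      zero_mul]

theorem exists_isHomogeneous_jet_eq_single [DecidableEq ι]
    (hP : ∀ i j, i ≠ j → LinearIndependent K ![P i, P j])
    (hv : ∀ i, LinearIndependent K ![P i, v i]) (hm : 2 * (Fintype.card ι - 1) ≤ m)
    (i : ι) (z : DualNumber K) :
    ∃ g : MvPolynomial σ K, g.IsHomogeneous (m + 1) ∧
      ∀ j, jet (P j) (v j) g = (Pi.single i z : ι → DualNumber K) j := by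
  have := Fintype.ofFinite σ
  obtain ⟨M, hM, hMi, hMj⟩ := exists_isHomogeneous_jet_eq_zero (v := v) hP ((hv i).ne_zero 0) hm
  have hunit : IsUnit (jet (P i) (v i) M) := by
    simpa [TrivSqZeroExt.isUnit_iff_isUnit_fst, jet_eq] using hMi
  obtain ⟨l, hl⟩ := exists_jet_linearForm_eq (hv i) (Ring.inverse (jet (P i) (v i) M) * z)
  refine ⟨M * linearForm l, hM.mul (isHomogeneous_linearForm l), fun j => ?_⟩
  obtain rfl | hj := eq_or_ne j i
  · rw [map_mul, hl, Ring.mul_inverse_cancel_left _ _ hunit, Pi.single_eq_same]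
  · rw [map_mul, hMj j hj, zero_mul, Pi.single_eq_of_ne hj]

/-- The 1-jets of a polynomial at the points `P i` in the directions `v i`. -/
noncomputable def jets (P v : ι → σ → K) : MvPolynomial σ K →ₐ[K] ι → DualNumber K :=
  AlgHom.pi fun i => jet (P i) (v i)

theorem map_jets_homogeneousSubmodule (hP : ∀ i j, i ≠ j → LinearIndependent K ![P i, P j])
    (hv : ∀ i, LinearIndependent K ![P i, v i]) (hm : 2 * (Fintype.card ι - 1) ≤ m) :
    (homogeneousSubmodule σ K (m + 1)).map (jets P v).toLinearMap = ⊤ := by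
  classical
  refine Submodule.eq_top_iff'.2 fun z => ?_
  choose g hg hgz using fun i => exists_isHomogeneous_jet_eq_single hP hv hm i (z i)
  refine ⟨∑ i, g i, Submodule.sum_mem _ fun i _ => hg i, ?_⟩
  have hsingle (i : ι) : jets P v (g i) = Pi.single i (z i) := funext (hgz i)
  rw [AlgHom.toLinearMap_apply, map_sum]
  simp only [hsingle, Finset.univ_sum_single]

theorem finrank_pi_dualNumber (K ι : Type*) [Field K] [Fintype ι] :
    finrank K (ι → DualNumber K) = 2 * Fintype.card ι := by
  have : Module.Finite K (DualNumber K) := inferInstanceAs (Module.Finite K (K × K))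
  have h : finrank K (DualNumber K) = 2 := (finrank_prod ..).trans (by rw [finrank_self])
  rw [finrank_pi_fintype, Finset.sum_const, h, Finset.card_univ, smul_eq_mul, mul_comm]

-- The jets of all forms at `card ι` tangent vectors common to both curves make up a quotient of the
-- coordinate ring of their intersection.
theorem two_mul_card_le_of_jet_eq_zero {f g : MvPolynomial (Fin 3) K} {P v : ι → Fin 3 → K}
    {d e : ℕ} (hf : f.IsHomogeneous d) (hg : g.IsHomogeneous e) (hirr : Irreducible f)
    (hfg : ¬ f ∣ g) (hP : ∀ i j, i ≠ j → LinearIndependent K ![P i, P j])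
    (hv : ∀ i, LinearIndependent K ![P i, v i]) (hjf : ∀ i, jet (P i) (v i) f = 0)
    (hjg : ∀ i, jet (P i) (v i) g = 0) : 2 * Fintype.card ι ≤ d * e := by
  rw [← finrank_pi_dualNumber K ι]
  exact finrank_le_mul_of_map_eq_zero (m := 2 * Fintype.card ι + 1) hf hg hirr.prime hfg (jets P v)
    (funext hjf) (funext hjg)
    (map_jets_homogeneousSubmodule (m := d + e + 2 * Fintype.card ι) hP hv (by omega))

end JetInterpolation

section StohrVoloch

theorem two_mul_ncard_hypersurfacePts_le {K : Type} [Field K] [Fintype K]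
    {f : MvPolynomial (Fin 3) K} {n : ℕ} (hf : f.IsHomogeneous (n + 1)) (hirr : Irreducible f)
    (hpolar : ¬ f ∣ frobeniusPolar f) :
    2 * (hypersurfacePts f).ncard ≤ (n + 1) * (Fintype.card K + n) := by
  have := Fintype.ofFinite (hypersurfacePts f)
  have hdim : 2 < finrank K (Fin 3 → K) := by rw [finrank_fin_fun]; norm_num
  choose v hv htangent using fun P : hypersurfacePts f =>
    exists_linearIndependent_pair_mem_ker hdim (differential P.1.rep f) P.1.rep_nonzero
  have hjet (P : hypersurfacePts f) : jet P.1.rep (v P) f = 0 := by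
    have hP : eval P.1.rep f = 0 := P.2
    rw [jet_eq, htangent, hP, TrivSqZeroExt.inl_zero, TrivSqZeroExt.inr_zero, add_zero]
  rw [← Nat.card_coe_set_eq, Nat.card_eq_fintype_card]
  exact two_mul_card_le_of_jet_eq_zero (P := fun P : hypersurfacePts f => P.1.rep) hf
    (isHomogeneous_frobeniusPolar hf) hirr hpolar
    (fun P Q hPQ => linearIndependent_pair_rep_of_ne (Subtype.coe_ne_coe.2 hPQ)) hv hjet
    fun P => jet_frobeniusPolar_eq_zero hf (hjet P)

end StohrVoloch

end PlaneCurve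

open PlaneCurve in
theorem stmt_4_general (F : Type) [Field F] [Fintype F] (hchar : ringChar F ≠ 2)
    (f : MvPolynomial (Fin 3) F) (hf : f.IsHomogeneous 4)
    (hnolin : ∀ l : MvPolynomial (Fin 3) F, l ≠ 0 → l.IsHomogeneous 1 → ¬ l ∣ f)
    (hlt : (hypersurfacePts f).ncard < 3 * Fintype.card F + 1) :
    (hypersurfacePts f).ncard ≤ 2 * Fintype.card F + 6 := by
  obtain hcard | hcard := Nat.lt_or_ge (Fintype.card F) 4
  · omega
  by_cases hirr : Irreducible f
  swap
  · exact (ncard_hypersurfacePts_le_of_not_irreducible hf hnolin hirr).trans (by omega)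
  by_cases hsmooth : ∀ p, p ≠ 0 → eval p f = 0 → differential p f ≠ 0
  swap
  · push Not at hsmooth
    obtain ⟨p, hp, hfp, hsing⟩ := hsmooth
    have := ncard_hypersurfacePts_le_of_singular hf (by omega) hnolin hp hfp hsing
    omega
  by_cases hdvd : f ∣ frobeniusPolar f
  swap
  · have := two_mul_ncard_hypersurfacePts_le hf hirr hdvd
    omega
  obtain hempty | ⟨P, hP⟩ := (hypersurfacePts f).eq_empty_or_nonempty
  · simp [hempty]
  have hprime : (ringChar F).Prime := CharP.char_is_prime F _
  have hchar3 : 3 ≤ ringChar F := hprime.two_le.lt_of_ne' hchar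
  have := ncard_hypersurfacePts_eq_of_dvd_frobeniusPolar hf hchar3 (by omega) hnolin hdvd hsmooth
    P.rep_nonzero hP
  omega

/-- If `C` is a plane curve of degree `4` over `GF(9)` with no `GF(9)`-linear components,
whose number `N` of rational points satisfies `N < 28`, then `N ≤ 24`. -/
theorem stmt_4 (F : Type) [Field F] [Fintype F] (hcardF : Fintype.card F = 9)
    (f : MvPolynomial (Fin 3) F) (hf0 : f ≠ 0) (hfdeg : f.IsHomogeneous 4)
    (hnolin : ∀ l : MvPolynomial (Fin 3) F, l ≠ 0 → l.IsHomogeneous 1 → ¬ l ∣ f)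
    (N : ℕ) (hN : N = (hypersurfacePts f).ncard) (hlt : N < 28) :
    N ≤ 24 := by
  have hchar : ringChar F ≠ 2 := fun h => by
    simpa [hcardF] using FiniteField.even_card_iff_char_two.1 h
  simpa [hN, hcardF] using stmt_4_general F hchar f hfdeg hnolin (by omega)
end
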